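/- Let n ≥ 3 be an integer and set S_{n,1} = (n(n−2)/4) · ( 2π^{(n+1)/2} / Γ((n+1)/2) )^{2/n}. There exists a constant C > 0 such that for every smooth compactly supported function u : ℝⁿ → ℝ, ∫_{ℝⁿ} |∇u|² dx − S_{n,1} ( ∫_{ℝⁿ} |u|^{2n/(n−2)} dx )^{(n−2)/n} ≥ C · inf { ∫_{ℝⁿ} |∇u − ∇v|² dx : v(x) = c(1 + λ²|x−x₀|²)^{−(n−2)/2} with c ∈ ℝ, λ > 0, x₀ ∈ ℝⁿ }. -/

import Mathlib

open scoped Real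

/-!
Stereographic projection turns `∫ |∇u|²` into the energy `∫ |∇U|² + n(n-2)/4 ∫ U²` on the sphere
`𝕊ⁿ`, where `u = φU` with `φ` the standard bubble, and the bubbles are the conformal images of the
constants. A conformal change of coordinates, found by minimizing a functional of the center and
the dilation, makes the sphere coordinates `ω_a` orthogonal to `|U| ^ q`, where `q = 2n/(n-2)`.

For such a centered `U`, testing a Sobolev inequality against the functions `U (1 ± t ω_a)` and
letting `t → 0` bounds the Dirichlet form of `U` by `∫ U²` in terms of the deficit; a near-optimal
`U` is thus close to a constant. The deficit is then expanded to second order at the constant, and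
positivity is the spectral gap on spherical harmonics of degree at least two, those of degree one
being controlled by the centering. The spectral gap comes from the fact that the Laplacian acts on
polynomials of degree `k` in `ω`, modulo lower degree, as the scalar `-k(k+n-1)`, together with the
density of these polynomials.

This argument does not need the sharp constant to be known: it shows that any Sobolev constant below
the conjectured value can be increased, so it proves the sharp inequality as well.
-/

namespace BianchiEgnell

open MeasureTheory Filter Topology

noncomputable section

local notation:max "𝔼" n:max => EuclideanSpace ℝ (Fin n)

variable {n : ℕ}

/-- The `i`-th partial derivative of `f` at `x`. -/
def pderiv (i : Fin n) (f : 𝔼 n → ℝ) (x : 𝔼 n) : ℝ :=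
  fderiv ℝ f x (EuclideanSpace.single i 1)

lemma pderiv_const (i : Fin n) (c : ℝ) (x : 𝔼 n) : pderiv i (fun _ => c) x = 0 := by
  simp [pderiv]

lemma pderiv_coord (i j : Fin n) (x : 𝔼 n) :
    pderiv i (fun y : 𝔼 n => y j) x = if j = i then 1 else 0 := by
  have hproj : HasFDerivAt (fun y : 𝔼 n => y j) (EuclideanSpace.proj j : 𝔼 n →L[ℝ] ℝ) x :=
    (EuclideanSpace.proj j : 𝔼 n →L[ℝ] ℝ).hasFDerivAt
  simp [pderiv, hproj.fderiv]

section

variable {f g : 𝔼 n → ℝ} {x : 𝔼 n}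

lemma pderiv_add (i : Fin n) (hf : DifferentiableAt ℝ f x) (hg : DifferentiableAt ℝ g x) :
    pderiv i (fun y => f y + g y) x = pderiv i f x + pderiv i g x := by
  simp [pderiv, fderiv_fun_add hf hg]

lemma pderiv_sub (i : Fin n) (hf : DifferentiableAt ℝ f x) (hg : DifferentiableAt ℝ g x) :
    pderiv i (fun y => f y - g y) x = pderiv i f x - pderiv i g x := by
  simp [pderiv, fderiv_fun_sub hf hg]

lemma pderiv_mul (i : Fin n) (hf : DifferentiableAt ℝ f x) (hg : DifferentiableAt ℝ g x) :
    pderiv i (fun y => f y * g y) x = f x * pderiv i g x + g x * pderiv i f x := by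
  simp [pderiv, fderiv_fun_mul hf hg]

lemma pderiv_const_mul (i : Fin n) (c : ℝ) (hf : DifferentiableAt ℝ f x) :
    pderiv i (fun y => c * f y) x = c * pderiv i f x := by
  simp [pderiv, fderiv_const_mul hf]

lemma pderiv_pow (i : Fin n) (k : ℕ) (hf : DifferentiableAt ℝ f x) :
    pderiv i (fun y => f y ^ k) x = k * f x ^ (k - 1) * pderiv i f x := by
  simp [pderiv, fderiv_fun_pow k hf]

lemma pderiv_sum {ι : Type*} (i : Fin n) (s : Finset ι) {F : ι → 𝔼 n → ℝ} {x : 𝔼 n}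
    (hF : ∀ a ∈ s, DifferentiableAt ℝ (F a) x) :
    pderiv i (fun y => ∑ a ∈ s, F a y) x = ∑ a ∈ s, pderiv i (F a) x := by
  simp [pderiv, fderiv_fun_sum hF]

lemma continuous_pderiv (hf : ContDiff ℝ 1 f) (i : Fin n) : Continuous (pderiv i f) :=
  (hf.continuous_fderiv one_ne_zero).clm_apply continuous_const

end

/-! ### Stereographic coordinates -/

/-- The conformal factor `ρ = 2 / (1 + |x|²)` of the inverse stereographic projection: the round
metric of `𝕊ⁿ` reads `ρ² |dx|²` on `ℝⁿ`. -/
def conformalFactor (x : 𝔼 n) : ℝ := 2 / (1 + ‖x‖ ^ 2)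

local notation "ρ" => conformalFactor

/-- The ambient coordinates `ω` on `𝕊ⁿ ⊆ ℝ × ℝⁿ`, read in the stereographic chart; `none` is the
coordinate along the axis of the projection. -/
def sphereCoord (a : Option (Fin n)) (x : 𝔼 n) : ℝ :=
  match a with
  | none => ρ x - 1
  | some j => ρ x * x j

local notation "ω" => sphereCoord

lemma conformalFactor_pos (x : 𝔼 n) : 0 < ρ x := by
  unfold conformalFactor; positivity

lemma conformalFactor_mul (x : 𝔼 n) : ρ x * (1 + ‖x‖ ^ 2) = 2 :=
  div_mul_cancel₀ _ (by positivity)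

lemma conformalFactor_mul_norm_sq (x : 𝔼 n) : ρ x * ‖x‖ ^ 2 = 2 - ρ x := by
  linear_combination conformalFactor_mul x

lemma conformalFactor_mul_sum_sq (x : 𝔼 n) : ρ x * ∑ i, x i ^ 2 = 2 - ρ x := by
  rw [← EuclideanSpace.real_norm_sq_eq, conformalFactor_mul_norm_sq]

lemma conformalFactor_le_two (x : 𝔼 n) : ρ x ≤ 2 := by
  nlinarith [conformalFactor_mul_norm_sq x, conformalFactor_pos x, sq_nonneg ‖x‖]

lemma abs_coord_le_norm (x : 𝔼 n) (i : Fin n) : |x i| ≤ ‖x‖ := by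
  simpa using PiLp.norm_apply_le x i

lemma abs_conformalFactor_mul_coord_le (x : 𝔼 n) (i : Fin n) : |ρ x * x i| ≤ 1 := by
  have hρ := conformalFactor_pos x
  rw [abs_mul, abs_of_pos hρ]
  calc ρ x * |x i| ≤ ρ x * ‖x‖ := by gcongr; exact abs_coord_le_norm x i
    _ ≤ 1 := by nlinarith [conformalFactor_mul x, mul_nonneg hρ.le (sq_nonneg (‖x‖ - 1))]

lemma abs_conformalFactor_mul_coord_mul_coord_le (x : 𝔼 n) (i j : Fin n) :
    |ρ x * x i * x j| ≤ 2 := by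
  have hρ := conformalFactor_pos x
  rw [abs_mul, abs_mul, abs_of_pos hρ]
  calc ρ x * |x i| * |x j| ≤ ρ x * ‖x‖ * ‖x‖ := by
        gcongr <;> exact abs_coord_le_norm x _
    _ ≤ 2 := by linarith [conformalFactor_mul_norm_sq x]

@[fun_prop]
lemma contDiff_conformalFactor {k : WithTop ℕ∞} : ContDiff ℝ k (ρ : 𝔼 n → ℝ) :=
  contDiff_const.div (contDiff_const.add (contDiff_norm_sq ℝ)) fun x => by positivity

@[fun_prop]
lemma continuous_conformalFactor : Continuous (ρ : 𝔼 n → ℝ) :=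
  (contDiff_conformalFactor (k := 0)).continuous

@[fun_prop]
lemma differentiable_conformalFactor : Differentiable ℝ (ρ : 𝔼 n → ℝ) :=
  (contDiff_conformalFactor (k := 1)).differentiable one_ne_zero

lemma contDiff_sphereCoord {k : WithTop ℕ∞} (a : Option (Fin n)) :
    ContDiff ℝ k (ω a : 𝔼 n → ℝ) := by
  cases a with
  | none => exact contDiff_conformalFactor.sub contDiff_const
  | some j => exact contDiff_conformalFactor.mul (by fun_prop)

lemma hasFDerivAt_conformalFactor (x : 𝔼 n) :
    HasFDerivAt (ρ : 𝔼 n → ℝ) ((-(ρ x) ^ 2) • innerSL ℝ x) x := by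
  have hden : HasFDerivAt (fun y : 𝔼 n => 1 + ‖y‖ ^ 2) (2 • innerSL ℝ x) x := by
    simpa using (hasStrictFDerivAt_norm_sq x).hasFDerivAt.const_add (1 : ℝ)
  have hne : (1 + ‖x‖ ^ 2 : ℝ) ≠ 0 := by positivity
  refine (((hasDerivAt_inv hne).comp_hasFDerivAt x hden).const_mul 2).congr_fderiv ?_
  ext y
  simp [conformalFactor]
  field_simp

lemma pderiv_conformalFactor (i : Fin n) (x : 𝔼 n) : pderiv i ρ x = -ρ x ^ 2 * x i := by
  simp [pderiv, (hasFDerivAt_conformalFactor x).fderiv, EuclideanSpace.inner_single_right]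

lemma sum_sphereCoord_sq (x : 𝔼 n) : ∑ a, ω a x ^ 2 = 1 := by
  simp only [Fintype.sum_option, sphereCoord, mul_pow, ← Finset.mul_sum]
  linear_combination ρ x * conformalFactor_mul_sum_sq x

/-- The component of the gradient of `ω a` along the orthonormal frame `ρ⁻¹ ∂ᵢ` of the sphere. -/
def coordGrad (a : Option (Fin n)) (i : Fin n) (x : 𝔼 n) : ℝ :=
  match a with
  | none => -(ρ x * x i)
  | some j => (if j = i then 1 else 0) - ρ x * x i * x j

@[fun_prop]
lemma contDiff_coordGrad (a : Option (Fin n)) (i : Fin n) :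
    ContDiff ℝ 1 (coordGrad a i : 𝔼 n → ℝ) := by
  cases a <;> unfold coordGrad <;> fun_prop

lemma pderiv_sphereCoord (a : Option (Fin n)) (i : Fin n) (x : 𝔼 n) :
    pderiv i (ω a) x = ρ x * coordGrad a i x := by
  cases a with
  | none =>
    change pderiv i (fun y => ρ y - 1) x = _
    simp (disch := fun_prop) only [pderiv_sub, pderiv_conformalFactor, pderiv_const, coordGrad]
    ring
  | some j =>
    change pderiv i (fun y => ρ y * y j) x = _
    simp (disch := fun_prop) only [pderiv_mul, pderiv_conformalFactor, pderiv_coord, coordGrad]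
    ring

lemma abs_coordGrad_le (a : Option (Fin n)) (i : Fin n) (x : 𝔼 n) : |coordGrad a i x| ≤ 3 := by
  cases a with
  | none =>
    rw [coordGrad, abs_neg]
    linarith [abs_conformalFactor_mul_coord_le x i]
  | some j =>
    refine (abs_sub _ _).trans ?_
    have hδ : |if j = i then (1 : ℝ) else 0| ≤ 1 := by split_ifs <;> simp
    linarith [abs_conformalFactor_mul_coord_mul_coord_le x i j]

lemma sum_coordGrad_mul_coordGrad (a b : Option (Fin n)) (x : 𝔼 n) :
    ∑ i, coordGrad a i x * coordGrad b i x = (if a = b then 1 else 0) - ω a x * ω b x := by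
  have hsum := conformalFactor_mul_sum_sq x
  have hS (s : ℝ) : ∑ i, s * x i ^ 2 = s * ∑ i, x i ^ 2 := (Finset.mul_sum ..).symm
  rcases a with _ | a <;> rcases b with _ | b <;> simp only [coordGrad, sphereCoord]
  · rw [Finset.sum_congr rfl fun i _ => show _ = ρ x ^ 2 * x i ^ 2 by ring, hS]
    simp only [if_true]
    linear_combination ρ x * hsum
  · rw [Finset.sum_congr rfl fun i _ => show _ = ρ x ^ 2 * x b * x i ^ 2
      - ρ x * (if b = i then x i else 0) by split_ifs <;> ring]
    simp only [Finset.sum_sub_distrib, hS, ← Finset.mul_sum, Finset.sum_ite_eq, Finset.mem_univ,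
      if_true, reduceCtorEq, if_false]
    linear_combination ρ x * x b * hsum
  · rw [Finset.sum_congr rfl fun i _ => show _ = ρ x ^ 2 * x a * x i ^ 2
      - ρ x * (if a = i then x i else 0) by split_ifs <;> ring]
    simp only [Finset.sum_sub_distrib, hS, ← Finset.mul_sum, Finset.sum_ite_eq, Finset.mem_univ,
      if_true, reduceCtorEq, if_false]
    linear_combination ρ x * x a * hsum
  · rw [Finset.sum_congr rfl fun i _ => show _ = (if a = i then if b = i then 1 else 0 else 0)
      - ρ x * x b * (if a = i then x i else 0) - ρ x * x a * (if b = i then x i else 0)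
      + ρ x ^ 2 * x a * x b * x i ^ 2 by split_ifs <;> ring]
    simp only [Finset.sum_sub_distrib, Finset.sum_add_distrib, hS, ← Finset.mul_sum,
      Finset.sum_ite_eq, Finset.mem_univ, if_true, Option.some.injEq, eq_comm (a := b) (b := a)]
    linear_combination ρ x * x a * x b * hsum

lemma pderiv_coordGrad_none (i : Fin n) (x : 𝔼 n) :
    pderiv i (coordGrad none i) x = ρ x ^ 2 * x i ^ 2 - ρ x := by
  change pderiv i (fun y => -(ρ y * y i)) x = _
  simp (disch := fun_prop) only [← neg_one_mul (ρ _ * _), pderiv_const_mul, pderiv_mul,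
    pderiv_conformalFactor, pderiv_coord, if_true]
  ring

lemma pderiv_coordGrad_some (i j : Fin n) (x : 𝔼 n) :
    pderiv i (coordGrad (some j) i) x
      = ρ x ^ 2 * x i ^ 2 * x j - ρ x * x j - ρ x * (if j = i then x i else 0) := by
  change pderiv i (fun y => (if j = i then 1 else 0) - ρ y * y i * y j) x = _
  simp (disch := fun_prop) only [pderiv_sub, pderiv_const, pderiv_mul, pderiv_conformalFactor,
    pderiv_coord, if_true]
  split_ifs <;> ring

lemma abs_pderiv_coordGrad_le (a : Option (Fin n)) (i : Fin n) (x : 𝔼 n) :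
    |pderiv i (coordGrad a i) x| ≤ 4 := by
  have hi := abs_le.1 (abs_conformalFactor_mul_coord_le x i)
  cases a with
  | none =>
    rw [pderiv_coordGrad_none, abs_le]
    constructor <;> nlinarith [conformalFactor_pos x, conformalFactor_le_two x]
  | some j =>
    have hj := abs_le.1 (abs_conformalFactor_mul_coord_le x j)
    have hij : |ρ x ^ 2 * x i ^ 2 * x j| ≤ 2 := by
      rw [show ρ x ^ 2 * x i ^ 2 * x j = ρ x * x i * (ρ x * x i * x j) by ring, abs_mul]
      nlinarith [abs_conformalFactor_mul_coord_le x i, abs_nonneg (ρ x * x i),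
        abs_conformalFactor_mul_coord_mul_coord_le x i j, abs_nonneg (ρ x * x i * x j)]
    rw [abs_le] at hij
    rw [pderiv_coordGrad_some, abs_le]
    split_ifs <;> constructor <;> linarith

lemma pderiv_conformalFactor_pow (i : Fin n) (k : ℕ) (x : 𝔼 n) :
    pderiv i (fun y => ρ y ^ k) x = -(k * ρ x ^ (k + 1) * x i) := by
  simp (disch := fun_prop) only [pderiv_pow, pderiv_conformalFactor]
  cases k with
  | zero => simp
  | succ k => rw [Nat.add_sub_cancel]; ring

/-- The divergence form of `-Δ ω = n ω`, the sphere Laplacian being `ρ⁻ⁿ div (ρⁿ⁻² ∇)`. -/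
lemma sum_pderiv_conformalFactor_pow_mul_coordGrad (hn : 1 ≤ n) (a : Option (Fin n)) (x : 𝔼 n) :
    ∑ i, pderiv i (fun y => ρ y ^ (n - 1) * coordGrad a i y) x = -(n * ρ x ^ n * ω a x) := by
  have hsum := conformalFactor_mul_sum_sq x
  have hS (s : ℝ) : ∑ i, s * x i ^ 2 = s * ∑ i, x i ^ 2 := (Finset.mul_sum ..).symm
  have hd (i : Fin n) : pderiv i (fun y => ρ y ^ (n - 1) * coordGrad a i y) x
      = ρ x ^ (n - 1) * pderiv i (coordGrad a i) x
        - (n - 1) * ρ x ^ n * (x i * coordGrad a i x) := by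
    rw [pderiv_mul i (by fun_prop)
      ((contDiff_coordGrad a i).differentiable one_ne_zero).differentiableAt,
      pderiv_conformalFactor_pow, Nat.sub_add_cancel hn, Nat.cast_sub hn, Nat.cast_one]
    ring
  have hpow : ρ x ^ n = ρ x ^ (n - 1) * ρ x := by rw [← pow_succ, Nat.sub_add_cancel hn]
  simp only [hd, hpow]
  cases a with
  | none =>
    rw [Finset.sum_congr rfl fun i _ => show _ = n * ρ x ^ (n - 1) * ρ x ^ 2 * x i ^ 2
      - ρ x ^ (n - 1) * ρ x by rw [pderiv_coordGrad_none, coordGrad]; ring]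
    simp only [Finset.sum_sub_distrib, hS, Finset.sum_const, Finset.card_univ, Fintype.card_fin,
      nsmul_eq_mul, sphereCoord]
    linear_combination n * ρ x ^ (n - 1) * ρ x * hsum
  | some j =>
    rw [Finset.sum_congr rfl fun i _ => show _ = n * ρ x ^ (n - 1) * ρ x ^ 2 * x j * x i ^ 2
      - ρ x ^ (n - 1) * ρ x * x j - n * ρ x ^ (n - 1) * ρ x * (if j = i then x i else 0) by
        rw [pderiv_coordGrad_some, coordGrad]; split_ifs <;> ring]
    simp only [Finset.sum_sub_distrib, hS, ← Finset.mul_sum, Finset.sum_const, Finset.card_univ,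
      Fintype.card_fin, nsmul_eq_mul, sphereCoord, Finset.sum_ite_eq, Finset.mem_univ, if_true]
    linear_combination n * ρ x ^ (n - 1) * ρ x * x j * hsum
/-! ### Admissible functions and the Dirichlet form of the sphere -/

/-- Functions of class `C¹` which are bounded together with their gradient for the round metric
`ρ² |dx|²`. This class is stable under products and contains the coordinates `ω` as well as all
compactly supported `C¹` functions. -/
structure IsAdmissible (f : 𝔼 n → ℝ) : Prop where
  contDiff : ContDiff ℝ 1 f
  exists_bound : ∃ C : ℝ, 0 ≤ C ∧ ∀ x, |f x| ≤ C ∧ ∀ i, |pderiv i f x| ≤ C * ρ x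

section

variable {f g h : 𝔼 n → ℝ}

lemma IsAdmissible.differentiableAt (hf : IsAdmissible f) (x : 𝔼 n) : DifferentiableAt ℝ f x :=
  hf.contDiff.differentiable one_ne_zero x

lemma IsAdmissible.continuous (hf : IsAdmissible f) : Continuous f := hf.contDiff.continuous

lemma isAdmissible_const (c : ℝ) : IsAdmissible (fun _ : 𝔼 n => c) :=
  ⟨contDiff_const, |c|, abs_nonneg c, fun x => ⟨le_rfl, fun i => by
    simpa [pderiv_const] using mul_nonneg (abs_nonneg c) (conformalFactor_pos x).le⟩⟩

lemma IsAdmissible.mul (hf : IsAdmissible f) (hg : IsAdmissible g) :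
    IsAdmissible fun x => f x * g x := by
  obtain ⟨C, hC0, hC⟩ := hf.exists_bound
  obtain ⟨K, hK0, hK⟩ := hg.exists_bound
  refine ⟨hf.contDiff.mul hg.contDiff, 2 * (C * K), by positivity, fun x => ⟨?_, fun i => ?_⟩⟩
  · calc |f x * g x| = |f x| * |g x| := abs_mul _ _
      _ ≤ C * K := mul_le_mul (hC x).1 (hK x).1 (abs_nonneg _) hC0
      _ ≤ 2 * (C * K) := by linarith [mul_nonneg hC0 hK0]
  · rw [pderiv_mul i (hf.differentiableAt x) (hg.differentiableAt x)]
    calc |f x * pderiv i g x + g x * pderiv i f x|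
        ≤ |f x| * |pderiv i g x| + |g x| * |pderiv i f x| := by
          simpa only [abs_mul] using abs_add_le (f x * pderiv i g x) (g x * pderiv i f x)
      _ ≤ C * (K * ρ x) + K * (C * ρ x) :=
          add_le_add (mul_le_mul (hC x).1 ((hK x).2 i) (abs_nonneg _) hC0)
            (mul_le_mul (hK x).1 ((hC x).2 i) (abs_nonneg _) hK0)
      _ = 2 * (C * K) * ρ x := by ring

lemma IsAdmissible.add (hf : IsAdmissible f) (hg : IsAdmissible g) :
    IsAdmissible fun x => f x + g x := by
  obtain ⟨C, hC0, hC⟩ := hf.exists_bound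
  obtain ⟨K, hK0, hK⟩ := hg.exists_bound
  refine ⟨hf.contDiff.add hg.contDiff, C + K, by positivity, fun x => ⟨?_, fun i => ?_⟩⟩
  · exact (abs_add_le _ _).trans (add_le_add (hC x).1 (hK x).1)
  · rw [pderiv_add i (hf.differentiableAt x) (hg.differentiableAt x), add_mul]
    exact (abs_add_le _ _).trans (add_le_add ((hC x).2 i) ((hK x).2 i))

lemma IsAdmissible.const_mul (c : ℝ) (hf : IsAdmissible f) : IsAdmissible fun x => c * f x :=
  (isAdmissible_const c).mul hf

lemma IsAdmissible.sub (hf : IsAdmissible f) (hg : IsAdmissible g) :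
    IsAdmissible fun x => f x - g x := by
  simpa only [neg_one_mul, ← sub_eq_add_neg] using hf.add (hg.const_mul (-1))

lemma IsAdmissible.sum {ι : Type*} (s : Finset ι) {F : ι → 𝔼 n → ℝ}
    (hF : ∀ i, IsAdmissible (F i)) : IsAdmissible fun x => ∑ i ∈ s, F i x := by
  classical
  induction s using Finset.induction_on with
  | empty => simpa using isAdmissible_const 0
  | insert a s ha ih => simpa only [Finset.sum_insert ha] using (hF a).add ih

lemma abs_sphereCoord_le_one (a : Option (Fin n)) (x : 𝔼 n) : |ω a x| ≤ 1 := by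
  rw [← sq_le_one_iff_abs_le_one, ← sum_sphereCoord_sq x]
  exact Finset.single_le_sum (f := fun b => ω b x ^ 2) (fun b _ => sq_nonneg _)
    (Finset.mem_univ a)

lemma isAdmissible_sphereCoord (a : Option (Fin n)) : IsAdmissible (ω a : 𝔼 n → ℝ) := by
  refine ⟨contDiff_sphereCoord a, 3, by norm_num, fun x => ⟨?_, fun i => ?_⟩⟩
  · linarith [abs_sphereCoord_le_one a x]
  · rw [pderiv_sphereCoord, abs_mul, abs_of_pos (conformalFactor_pos x), mul_comm]
    exact mul_le_mul_of_nonneg_right (abs_coordGrad_le a i x) (conformalFactor_pos x).le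

lemma isAdmissible_of_hasCompactSupport (hf : ContDiff ℝ 1 f) (hc : HasCompactSupport f) :
    IsAdmissible f := by
  obtain ⟨C, hC⟩ := hc.exists_bound_of_continuous hf.continuous
  have hbound (i : Fin n) : ∃ K, ∀ x, ‖pderiv i f x * (ρ x)⁻¹‖ ≤ K :=
    HasCompactSupport.exists_bound_of_continuous
      ((hc.fderiv_apply (𝕜 := ℝ) (EuclideanSpace.single i 1)).mul_right)
      ((continuous_pderiv hf i).mul
        (continuous_conformalFactor.inv₀ fun x => (conformalFactor_pos x).ne'))
  choose K hK using hbound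
  have hsum : 0 ≤ ∑ i, |K i| := Finset.sum_nonneg fun i _ => abs_nonneg _
  refine ⟨hf, |C| + ∑ i, |K i|, by positivity, fun x => ⟨?_, fun i => ?_⟩⟩
  · linarith [hC x, Real.norm_eq_abs (f x), le_abs_self C]
  · have hKi := hK i x
    rw [Real.norm_eq_abs, abs_mul, abs_inv, abs_of_pos (conformalFactor_pos x), ← div_eq_mul_inv,
      div_le_iff₀ (conformalFactor_pos x)] at hKi
    refine hKi.trans (mul_le_mul_of_nonneg_right ?_ (conformalFactor_pos x).le)
    linarith [le_abs_self (K i), abs_nonneg C,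
      Finset.single_le_sum (f := fun i => |K i|) (fun j _ => abs_nonneg _) (Finset.mem_univ i)]

end

/-- The Riemannian measure of the round sphere `𝕊ⁿ` in stereographic coordinates. -/
def sphereMeasure (n : ℕ) : Measure (𝔼 n) :=
  volume.withDensity fun x => ENNReal.ofReal (ρ x ^ n)

local notation "σ" => sphereMeasure

lemma measurable_sphereDensity :
    Measurable fun x : 𝔼 n => ENNReal.ofReal (ρ x ^ n) :=
  (continuous_conformalFactor.measurable.pow_const n).ennreal_ofReal

lemma integral_sphereMeasure (f : 𝔼 n → ℝ) : ∫ x, f x ∂(σ n) = ∫ x, ρ x ^ n * f x := by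
  rw [sphereMeasure, integral_withDensity_eq_integral_toReal_smul measurable_sphereDensity
    (by simp)]
  simp only [smul_eq_mul, ENNReal.toReal_ofReal (pow_nonneg (conformalFactor_pos _).le _)]

lemma integrable_sphereMeasure_iff {f : 𝔼 n → ℝ} :
    Integrable f (σ n) ↔ Integrable fun x => ρ x ^ n * f x := by
  rw [sphereMeasure, integrable_withDensity_iff_integrable_smul' measurable_sphereDensity
    (by simp)]
  simp only [smul_eq_mul, ENNReal.toReal_ofReal (pow_nonneg (conformalFactor_pos _).le _)]

lemma integrable_conformalFactor_pow {k : ℕ} (hk : n < 2 * k) :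
    Integrable fun x : 𝔼 n => ρ x ^ k := by
  have hdecay := integrable_rpow_neg_one_add_norm_sq (E := 𝔼 n) (μ := volume) (r := 2 * k)
    (by simpa using (by exact_mod_cast hk : (n : ℝ) < 2 * k))
  refine (hdecay.const_mul ((2 : ℝ) ^ k)).congr (Eventually.of_forall fun x => ?_)
  beta_reduce
  rw [conformalFactor, div_pow, show -(2 * (k : ℝ)) / 2 = -(k : ℝ) by ring,
    Real.rpow_neg (by positivity), Real.rpow_natCast, div_eq_mul_inv]

instance : IsFiniteMeasure (σ n) := by
  rcases Nat.eq_zero_or_pos n with rfl | hn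
  · refine ⟨?_⟩
    simp [sphereMeasure]
  · rw [← integrable_const_iff_isFiniteMeasure (one_ne_zero (α := ℝ)),
      integrable_sphereMeasure_iff]
    simpa using integrable_conformalFactor_pow (n := n) (k := n) (by omega)

lemma sphereMeasure_real_univ_pos : 0 < (σ n).real Set.univ := by
  have hvol : (σ n).real Set.univ = ∫ x : 𝔼 n, ρ x ^ n := by
    simpa using integral_sphereMeasure fun _ : 𝔼 n => 1
  have hint : Integrable fun x : 𝔼 n => ρ x ^ n := by
    simpa using integrable_sphereMeasure_iff.1 (integrable_const (1 : ℝ) (μ := σ n))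
  rw [hvol]
  exact integral_pos_of_integrable_nonneg_nonzero (x := 0) (continuous_conformalFactor.pow n) hint
    (fun x => pow_nonneg (conformalFactor_pos x).le n) (pow_pos (conformalFactor_pos 0) n).ne'

lemma integrable_of_abs_le {f : 𝔼 n → ℝ} (hf : Continuous f) {C : ℝ} (hC : ∀ x, |f x| ≤ C) :
    Integrable f (σ n) :=
  Integrable.of_bound hf.aestronglyMeasurable C (Eventually.of_forall hC)

lemma IsAdmissible.integrable {f : 𝔼 n → ℝ} (hf : IsAdmissible f) : Integrable f (σ n) :=
  let ⟨_, _, hC⟩ := hf.exists_bound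
  integrable_of_abs_le hf.continuous fun x => (hC x).1

/-- The carré du champ of the round metric: `Γ f g = ⟨∇f, ∇g⟩` for the metric `ρ² |dx|²`. -/
def carreDuChamp (f g : 𝔼 n → ℝ) (x : 𝔼 n) : ℝ :=
  (∑ i, pderiv i f x * pderiv i g x) / ρ x ^ 2

local notation "Γ" => carreDuChamp

/-- The Dirichlet form `𝓔(f, g) = ∫ ⟨∇f, ∇g⟩ dσ` of the round sphere. -/
def dirichletForm (f g : 𝔼 n → ℝ) : ℝ := ∫ x, Γ f g x ∂(σ n)

local notation "𝓔" => dirichletForm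

section

variable {f g h : 𝔼 n → ℝ}

lemma carreDuChamp_comm (f g : 𝔼 n → ℝ) (x : 𝔼 n) : Γ f g x = Γ g f x := by
  simp only [carreDuChamp, mul_comm]

lemma carreDuChamp_self_nonneg (f : 𝔼 n → ℝ) (x : 𝔼 n) : 0 ≤ Γ f f x :=
  div_nonneg (Finset.sum_nonneg fun _ _ => mul_self_nonneg _) (sq_nonneg _)

lemma carreDuChamp_const_left (c : ℝ) (h : 𝔼 n → ℝ) (x : 𝔼 n) : Γ (fun _ => c) h x = 0 := by
  simp [carreDuChamp, pderiv_const]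

lemma carreDuChamp_add_left (hf : IsAdmissible f) (hg : IsAdmissible g) (x : 𝔼 n) :
    Γ (fun y => f y + g y) h x = Γ f h x + Γ g h x := by
  simp only [carreDuChamp, pderiv_add _ (hf.differentiableAt x) (hg.differentiableAt x), add_mul,
    Finset.sum_add_distrib, add_div]

lemma carreDuChamp_mul_left (hf : IsAdmissible f) (hg : IsAdmissible g) (x : 𝔼 n) :
    Γ (fun y => f y * g y) h x = f x * Γ g h x + g x * Γ f h x := by
  simp only [carreDuChamp, pderiv_mul _ (hf.differentiableAt x) (hg.differentiableAt x), add_mul,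
    Finset.sum_add_distrib, add_div, mul_assoc, ← Finset.mul_sum, mul_div_assoc]

lemma carreDuChamp_const_mul_left (c : ℝ) (hf : IsAdmissible f) (x : 𝔼 n) :
    Γ (fun y => c * f y) h x = c * Γ f h x := by
  rw [carreDuChamp_mul_left (isAdmissible_const c) hf, carreDuChamp_const_left, mul_zero, add_zero]

lemma carreDuChamp_sphereCoord (a b : Option (Fin n)) (x : 𝔼 n) :
    Γ (ω a) (ω b) x = (if a = b then 1 else 0) - ω a x * ω b x := by
  rw [← sum_coordGrad_mul_coordGrad, carreDuChamp,
    div_eq_iff (pow_pos (conformalFactor_pos x) 2).ne', Finset.sum_mul]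
  refine Finset.sum_congr rfl fun i _ => ?_
  rw [pderiv_sphereCoord, pderiv_sphereCoord]
  ring

lemma continuous_carreDuChamp (hf : IsAdmissible f) (hg : IsAdmissible g) :
    Continuous (Γ f g) :=
  (continuous_finsetSum _ fun i _ =>
    (continuous_pderiv hf.contDiff i).mul (continuous_pderiv hg.contDiff i)).div
    (continuous_conformalFactor.pow 2) fun x => (pow_pos (conformalFactor_pos x) 2).ne'

lemma exists_abs_carreDuChamp_le (hf : IsAdmissible f) (hg : IsAdmissible g) :
    ∃ C, ∀ x, |Γ f g x| ≤ C := by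
  obtain ⟨C, hC0, hC⟩ := hf.exists_bound
  obtain ⟨K, -, hK⟩ := hg.exists_bound
  refine ⟨n * (C * K), fun x => ?_⟩
  have hρ := conformalFactor_pos x
  rw [carreDuChamp, abs_div, abs_of_pos (pow_pos hρ 2), div_le_iff₀ (pow_pos hρ 2)]
  calc |∑ i, pderiv i f x * pderiv i g x|
      ≤ ∑ i, |pderiv i f x| * |pderiv i g x| := by
        simpa only [abs_mul] using
          Finset.abs_sum_le_sum_abs (fun i => pderiv i f x * pderiv i g x) Finset.univ
    _ ≤ ∑ _i : Fin n, (C * ρ x) * (K * ρ x) := Finset.sum_le_sum fun i _ =>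
        mul_le_mul ((hC x).2 i) ((hK x).2 i) (abs_nonneg _) (by positivity)
    _ = n * (C * K) * ρ x ^ 2 := by
        rw [Finset.sum_const, Finset.card_univ, Fintype.card_fin, nsmul_eq_mul]
        ring

lemma integrable_carreDuChamp (hf : IsAdmissible f) (hg : IsAdmissible g) :
    Integrable (Γ f g) (σ n) :=
  let ⟨_, hC⟩ := exists_abs_carreDuChamp_le hf hg
  integrable_of_abs_le (continuous_carreDuChamp hf hg) hC

lemma dirichletForm_comm (f g : 𝔼 n → ℝ) : 𝓔 f g = 𝓔 g f := by
  simp only [dirichletForm, carreDuChamp_comm f g]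

lemma dirichletForm_self_nonneg (f : 𝔼 n → ℝ) : 0 ≤ 𝓔 f f :=
  integral_nonneg (carreDuChamp_self_nonneg f)

lemma dirichletForm_const_left (c : ℝ) (h : 𝔼 n → ℝ) : 𝓔 (fun _ => c) h = 0 := by
  simp [dirichletForm, carreDuChamp_const_left]

lemma dirichletForm_add_left (hf : IsAdmissible f) (hg : IsAdmissible g) (hh : IsAdmissible h) :
    𝓔 (fun y => f y + g y) h = 𝓔 f h + 𝓔 g h := by
  simp only [dirichletForm, carreDuChamp_add_left hf hg]
  exact integral_add (integrable_carreDuChamp hf hh) (integrable_carreDuChamp hg hh)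

lemma dirichletForm_const_mul_left (c : ℝ) (hf : IsAdmissible f) :
    𝓔 (fun y => c * f y) h = c * 𝓔 f h := by
  simp only [dirichletForm, carreDuChamp_const_mul_left c hf, integral_const_mul]

lemma dirichletForm_sub_left (hf : IsAdmissible f) (hg : IsAdmissible g) (hh : IsAdmissible h) :
    𝓔 (fun y => f y - g y) h = 𝓔 f h - 𝓔 g h := by
  have hadd := dirichletForm_add_left (hf.sub hg) hg hh
  simp only [sub_add_cancel] at hadd
  linarith

lemma dirichletForm_sub_right (hf : IsAdmissible f) (hg : IsAdmissible g) (hh : IsAdmissible h) :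
    𝓔 h (fun y => f y - g y) = 𝓔 h f - 𝓔 h g := by
  simp only [dirichletForm_comm h, dirichletForm_sub_left hf hg hh]

lemma dirichletForm_add_self (hf : IsAdmissible f) (hg : IsAdmissible g) :
    𝓔 (fun y => f y + g y) (fun y => f y + g y) = 𝓔 f f + 2 * 𝓔 f g + 𝓔 g g := by
  rw [dirichletForm_add_left hf hg (hf.add hg), dirichletForm_comm f, dirichletForm_comm g,
    dirichletForm_add_left hf hg hf, dirichletForm_add_left hf hg hg, dirichletForm_comm g f]
  ring

end

/-! ### The coordinate functions are eigenfunctions -/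

lemma integral_mul_pderiv_eq_neg (hn : 3 ≤ n) (i : Fin n) {F W : 𝔼 n → ℝ} (hF : ContDiff ℝ 1 F)
    (hW : IsAdmissible W) {C : ℝ} (hFC : ∀ x, |F x| ≤ C * ρ x ^ (n - 1))
    (hFC' : ∀ x, |pderiv i F x| ≤ C * ρ x ^ (n - 1)) :
    Integrable (fun x => F x * pderiv i W x) ∧ Integrable (fun x => pderiv i F x * W x) ∧
      ∫ x, F x * pderiv i W x = -∫ x, pderiv i F x * W x := by
  obtain ⟨K, hK0, hK⟩ := hW.exists_bound
  have hint {f g : 𝔼 n → ℝ} (hf : Continuous f) (hg : Continuous g)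
      (hfC : ∀ x, |f x| ≤ C * ρ x ^ (n - 1)) (hgK : ∀ x, |g x| ≤ K * 2) :
      Integrable fun x => f x * g x := by
    refine ((integrable_conformalFactor_pow (k := n - 1) (by omega)).const_mul (C * (K * 2))).mono'
      (hf.mul hg).aestronglyMeasurable (Eventually.of_forall fun x => ?_)
    calc ‖f x * g x‖ = |f x| * |g x| := abs_mul _ _
      _ ≤ C * ρ x ^ (n - 1) * (K * 2) :=
        mul_le_mul (hfC x) (hgK x) (abs_nonneg _) ((abs_nonneg _).trans (hfC x))
      _ = C * (K * 2) * ρ x ^ (n - 1) := by ring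
  have hWK : ∀ x, |W x| ≤ K * 2 := fun x => by linarith [(hK x).1]
  have hW'K : ∀ x, |pderiv i W x| ≤ K * 2 := fun x =>
    ((hK x).2 i).trans (mul_le_mul_of_nonneg_left (conformalFactor_le_two x) hK0)
  have hFW' := hint hF.continuous (continuous_pderiv hW.contDiff i) hFC hW'K
  have hF'W := hint (continuous_pderiv hF i) hW.continuous hFC' hWK
  exact ⟨hFW', hF'W, integral_mul_fderiv_eq_neg_fderiv_mul_of_integrable hF'W hFW'
    (hint hF.continuous hW.continuous hFC hWK)
    (fun x _ => hF.differentiable one_ne_zero x) fun x _ => hW.differentiableAt x⟩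

lemma abs_pderiv_conformalFactor_pow_mul_coordGrad_le (k : ℕ) (a : Option (Fin n)) (i : Fin n)
    (x : 𝔼 n) :
    |pderiv i (fun y => ρ y ^ k * coordGrad a i y) x| ≤ (4 + 3 * k) * ρ x ^ k := by
  have hρ := conformalFactor_pos x
  have hcg : DifferentiableAt ℝ (coordGrad a i) x :=
    (contDiff_coordGrad a i).differentiable one_ne_zero x
  have hk : DifferentiableAt ℝ (fun y : 𝔼 n => ρ y ^ k) x := by fun_prop
  rw [pderiv_mul i hk hcg, pderiv_conformalFactor_pow]
  calc |ρ x ^ k * pderiv i (coordGrad a i) x + coordGrad a i x * -(k * ρ x ^ (k + 1) * x i)|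
      ≤ ρ x ^ k * |pderiv i (coordGrad a i) x|
          + |coordGrad a i x| * (k * ρ x ^ k * |ρ x * x i|) := by
        refine (abs_add_le _ _).trans (le_of_eq ?_)
        simp only [abs_mul, abs_neg, abs_pow, abs_of_pos hρ, Nat.abs_cast]
        ring
    _ ≤ ρ x ^ k * 4 + 3 * (k * ρ x ^ k * 1) := by
        have hcoord : |ρ x * x i| ≤ 1 := by
          simpa only [abs_mul, abs_of_pos hρ] using abs_conformalFactor_mul_coord_le x i
        gcongr
        · exact abs_pderiv_coordGrad_le a i x
        · exact abs_coordGrad_le a i x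
    _ = (4 + 3 * k) * ρ x ^ k := by ring

lemma dirichletForm_sphereCoord (hn : 3 ≤ n) (a : Option (Fin n)) {W : 𝔼 n → ℝ}
    (hW : IsAdmissible W) : 𝓔 (ω a) W = n * ∫ x, ω a x * W x ∂(σ n) := by
  set F : Fin n → 𝔼 n → ℝ := fun i x => ρ x ^ (n - 1) * coordGrad a i x with hF
  have hparts (i : Fin n) := integral_mul_pderiv_eq_neg hn i (F := F i) (C := 4 + 3 * (n - 1 : ℕ))
    ((contDiff_conformalFactor.pow _).mul (contDiff_coordGrad a i)) hW
    (fun x => by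
      have hpow := pow_pos (conformalFactor_pos x) (n - 1)
      rw [hF, abs_mul, abs_of_pos hpow, mul_comm]
      exact mul_le_mul_of_nonneg_right ((abs_coordGrad_le a i x).trans
        (by linarith [Nat.cast_nonneg (α := ℝ) (n - 1)])) hpow.le)
    (abs_pderiv_conformalFactor_pow_mul_coordGrad_le (n - 1) a i)
  calc 𝓔 (ω a) W = ∫ x, ∑ i, F i x * pderiv i W x := by
        rw [dirichletForm, integral_sphereMeasure]
        refine integral_congr_ae (Eventually.of_forall fun x => ?_)
        have hρ := (conformalFactor_pos x).ne'
        simp only [carreDuChamp, hF, Finset.sum_div, Finset.mul_sum, pderiv_sphereCoord]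
        refine Finset.sum_congr rfl fun i _ => ?_
        rw [show ρ x ^ n = ρ x ^ (n - 1) * ρ x from (pow_sub_one_mul (by omega) _).symm]
        field_simp
    _ = -∫ x, (∑ i, pderiv i (F i) x) * W x := by
        simp only [Finset.sum_mul]
        rw [integral_finsetSum _ fun i _ => (hparts i).1,
          integral_finsetSum _ fun i _ => (hparts i).2.1, ← Finset.sum_neg_distrib]
        exact Finset.sum_congr rfl fun i _ => (hparts i).2.2
    _ = n * ∫ x, ω a x * W x ∂(σ n) := by
        rw [integral_sphereMeasure, ← integral_neg, ← integral_const_mul]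
        refine integral_congr_ae (Eventually.of_forall fun x => ?_)
        beta_reduce
        rw [sum_pderiv_conformalFactor_pow_mul_coordGrad (by omega)]
        ring
/-! ### The spectral gap of the sphere -/

open scoped BoundedContinuousFunction

lemma dirichletForm_mul_left {f g h : 𝔼 n → ℝ} (hf : IsAdmissible f) (hg : IsAdmissible g)
    (hh : IsAdmissible h) :
    𝓔 (fun x => f x * g x) h = 𝓔 f (fun x => g x * h x) + 𝓔 g (fun x => f x * h x)
      - 2 * ∫ x, Γ f g x * h x ∂(σ n) := by
  have hfg : Integrable (fun x => Γ f g x * h x) (σ n) := by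
    obtain ⟨C, hC⟩ := exists_abs_carreDuChamp_le hf hg
    obtain ⟨K, -, hK⟩ := hh.exists_bound
    refine integrable_of_abs_le ((continuous_carreDuChamp hf hg).mul hh.continuous)
      (C := C * K) fun x => ?_
    rw [abs_mul]
    exact mul_le_mul (hC x) (hK x).1 (abs_nonneg _) ((abs_nonneg _).trans (hC x))
  have hf_gh := integrable_carreDuChamp hf (hg.mul hh)
  have hg_fh := integrable_carreDuChamp hg (hf.mul hh)
  have hsum : Integrable (fun x => Γ f (fun y => g y * h y) x + Γ g (fun y => f y * h y) x) (σ n) :=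
    hf_gh.add hg_fh
  simp only [dirichletForm]
  rw [← integral_add hf_gh hg_fh, ← integral_const_mul, ← integral_sub hsum (hfg.const_mul 2)]
  refine integral_congr_ae (Eventually.of_forall fun x => ?_)
  beta_reduce
  rw [carreDuChamp_mul_left hf hg, carreDuChamp_comm f fun y => g y * h y,
    carreDuChamp_comm g fun y => f y * h y, carreDuChamp_mul_left hg hh,
    carreDuChamp_mul_left hf hh, carreDuChamp_comm h, carreDuChamp_comm h, carreDuChamp_comm g f]
  ring

/-- An admissible function as a bounded continuous function. -/
def IsAdmissible.toBCF {f : 𝔼 n → ℝ} (hf : IsAdmissible f) : 𝔼 n →ᵇ ℝ :=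
  BoundedContinuousFunction.ofNormedAddCommGroup f hf.continuous hf.exists_bound.choose
    fun x => (hf.exists_bound.choose_spec.2 x).1

@[simp] lemma IsAdmissible.toBCF_apply {f : 𝔼 n → ℝ} (hf : IsAdmissible f) (x : 𝔼 n) :
    hf.toBCF x = f x := rfl

/-- The class in `L²(𝕊ⁿ)` of a bounded continuous function. -/
def toL2 : (𝔼 n →ᵇ ℝ) →L[ℝ] Lp ℝ 2 (σ n) := BoundedContinuousFunction.toLp 2 (σ n) ℝ

lemma inner_toL2 (f g : 𝔼 n →ᵇ ℝ) : inner ℝ (toL2 f) (toL2 g) = ∫ x, f x * g x ∂(σ n) := by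
  simp [toL2, BoundedContinuousFunction.inner_toLp, mul_comm]

lemma inner_toL2_mul_right (f g h : 𝔼 n →ᵇ ℝ) :
    inner ℝ (toL2 f) (toL2 (g * h)) = inner ℝ (toL2 (f * g)) (toL2 h) := by
  simp only [inner_toL2, BoundedContinuousFunction.coe_mul, Pi.mul_apply, mul_assoc]

/-- `-Δ f = F` on the sphere, in the weak sense. -/
def HasNegLaplacian (f F : 𝔼 n →ᵇ ℝ) : Prop :=
  ∀ h : 𝔼 n →ᵇ ℝ, IsAdmissible h → 𝓔 f h = inner ℝ (toL2 F) (toL2 h)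

section

variable {f g F G : 𝔼 n →ᵇ ℝ}

lemma HasNegLaplacian.add (hf : IsAdmissible f) (hg : IsAdmissible g) (hF : HasNegLaplacian f F)
    (hG : HasNegLaplacian g G) : HasNegLaplacian (f + g) (F + G) := fun h hh => by
  rw [map_add, inner_add_left, ← hF h hh, ← hG h hh]
  exact dirichletForm_add_left hf hg hh

lemma HasNegLaplacian.mul (hf : IsAdmissible f) (hg : IsAdmissible g) (hF : HasNegLaplacian f F)
    (hG : HasNegLaplacian g G) {s : 𝔼 n →ᵇ ℝ} (hs : ∀ x, Γ f g x = s x) :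
    HasNegLaplacian (f * g) (F * g + G * f - (2 : ℝ) • s) := fun h hh => by
  rw [map_sub, map_add, map_smul, inner_sub_left, inner_add_left, inner_smul_left,
    ← inner_toL2_mul_right, ← inner_toL2_mul_right, ← hF _ (hg.mul hh), ← hG _ (hf.mul hh),
    inner_toL2]
  simp only [← hs]
  exact dirichletForm_mul_left hf hg hh

end

/-- The coordinate `ω a` as a bounded continuous function. -/
def sphereCoordBCF (a : Option (Fin n)) : 𝔼 n →ᵇ ℝ := (isAdmissible_sphereCoord a).toBCF

@[simp] lemma sphereCoordBCF_apply (a : Option (Fin n)) (x : 𝔼 n) :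
    sphereCoordBCF a x = ω a x := rfl

lemma hasNegLaplacian_sphereCoordBCF (hn : 3 ≤ n) (a : Option (Fin n)) :
    HasNegLaplacian (sphereCoordBCF a) ((n : ℝ) • sphereCoordBCF a) := fun h hh => by
  rw [map_smul, inner_smul_left, inner_toL2]
  exact dirichletForm_sphereCoord hn a hh

/-- Polynomials of degree at most `1` in the coordinates `ω`. -/
def affinePolys (n : ℕ) : Submodule ℝ (𝔼 n →ᵇ ℝ) :=
  Submodule.span ℝ (insert 1 (Set.range sphereCoordBCF))

/-- Polynomials of degree at most `k` in the coordinates `ω`. -/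
def spherePolys (n k : ℕ) : Submodule ℝ (𝔼 n →ᵇ ℝ) :=
  affinePolys n ^ k

lemma spherePolys_mul_le (j k : ℕ) : spherePolys n j * spherePolys n k ≤ spherePolys n (j + k) :=
  (pow_add (affinePolys n) j k).ge

lemma spherePolys_succ (k : ℕ) : spherePolys n (k + 1) = spherePolys n k * affinePolys n :=
  pow_succ (affinePolys n) k

lemma spherePolys_mono : Monotone (spherePolys n) := fun _ _ hjk =>
  pow_le_pow_right' (M := Submodule ℝ (𝔼 n →ᵇ ℝ))
    (Submodule.one_le.2 (Submodule.subset_span (Set.mem_insert _ _))) hjk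

lemma spherePolys_one : spherePolys n 1 = affinePolys n :=
  pow_one (affinePolys n)

lemma sphereCoordBCF_mem_spherePolys_one (a : Option (Fin n)) :
    sphereCoordBCF a ∈ spherePolys n 1 := by
  rw [spherePolys_one]
  exact Submodule.subset_span (Set.mem_insert_of_mem _ ⟨a, rfl⟩)

lemma mul_sphereCoordBCF_mem {k : ℕ} {p : 𝔼 n →ᵇ ℝ} (hp : p ∈ spherePolys n k)
    (a : Option (Fin n)) : p * sphereCoordBCF a ∈ spherePolys n (k + 1) :=
  spherePolys_mul_le k 1 (Submodule.mul_mem_mul hp (sphereCoordBCF_mem_spherePolys_one a))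

lemma mem_spherePolys_zero {p : 𝔼 n →ᵇ ℝ} :
    p ∈ spherePolys n 0 ↔ ∃ c : ℝ, BoundedContinuousFunction.const (𝔼 n) c = p := by
  rw [show spherePolys n 0 = 1 from pow_zero (affinePolys n), Submodule.mem_one]
  rfl

lemma spherePolys_fg (k : ℕ) : (spherePolys n k).FG :=
  (Submodule.fg_span ((Set.finite_range _).insert _)).pow k

lemma spherePolys_succ_induction {k : ℕ} {P : (𝔼 n →ᵇ ℝ) → Prop}
    (of_mem : ∀ f ∈ spherePolys n k, P f)
    (mul_coord : ∀ f ∈ spherePolys n k, ∀ a, P (f * sphereCoordBCF a))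
    (add : ∀ f ∈ spherePolys n (k + 1), ∀ g ∈ spherePolys n (k + 1), P f → P g → P (f + g))
    {p : 𝔼 n →ᵇ ℝ} (hp : p ∈ spherePolys n (k + 1)) : P p := by
  rw [spherePolys_succ] at hp
  induction hp using Submodule.mul_induction_on' with
  | add f hf g hg hPf hPg =>
    rw [← spherePolys_succ] at hf hg
    exact add f hf g hg hPf hPg
  | mem_mul_mem f hf g hg =>
    have hmul {g} (hg : g ∈ affinePolys n) {f} (hf : f ∈ spherePolys n k) :
        f * g ∈ spherePolys n (k + 1) :=
      (spherePolys_succ k).ge (Submodule.mul_mem_mul hf hg)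
    induction hg using Submodule.span_induction generalizing f with
    | mem g hg =>
      rcases hg with rfl | ⟨a, rfl⟩
      · rw [mul_one]; exact of_mem f hf
      · exact mul_coord f hf a
    | zero => rw [mul_zero]; exact of_mem 0 (zero_mem _)
    | add g₁ g₂ hg₁ hg₂ ih₁ ih₂ =>
      rw [mul_add]
      exact add _ (hmul hg₁ hf) _ (hmul hg₂ hf) (ih₁ f hf) (ih₂ f hf)
    | smul c g _ ih =>
      rw [mul_smul_comm, ← smul_mul_assoc]
      exact ih _ (Submodule.smul_mem _ c hf)

lemma isAdmissible_of_mem_spherePolys {k : ℕ} {p : 𝔼 n →ᵇ ℝ} (hp : p ∈ spherePolys n k) :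
    IsAdmissible p := by
  induction k generalizing p with
  | zero =>
    obtain ⟨c, rfl⟩ := mem_spherePolys_zero.1 hp
    exact isAdmissible_const c
  | succ k ih =>
    exact spherePolys_succ_induction (P := fun p => IsAdmissible p) (fun f hf => ih hf)
      (fun f hf a => (ih hf).mul (isAdmissible_sphereCoord a)) (fun f _ g _ hf hg => hf.add hg) hp

/-- Polynomials of degree less than `k` in the coordinates `ω`. -/
def spherePolysLT (n : ℕ) : ℕ → Submodule ℝ (𝔼 n →ᵇ ℝ)
  | 0 => ⊥
  | k + 1 => spherePolys n k

lemma spherePolysLT_le {j k : ℕ} (hjk : j ≤ k + 1) : spherePolysLT n j ≤ spherePolys n k := by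
  cases j with
  | zero => exact bot_le
  | succ j => exact spherePolys_mono (Nat.le_of_succ_le_succ hjk)

lemma spherePolys_le_LT {j k : ℕ} (hjk : j < k) : spherePolys n j ≤ spherePolysLT n k := by
  cases k with
  | zero => exact absurd hjk (Nat.not_lt_zero j)
  | succ k => exact spherePolys_mono (Nat.le_of_lt_succ hjk)

lemma mul_sphereCoordBCF_mem_of_mem_LT {k : ℕ} {r : 𝔼 n →ᵇ ℝ} (hr : r ∈ spherePolysLT n k)
    (a : Option (Fin n)) : r * sphereCoordBCF a ∈ spherePolys n k := by
  cases k with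
  | zero => rw [(Submodule.mem_bot ℝ).1 hr, zero_mul]; exact zero_mem _
  | succ k => exact mul_sphereCoordBCF_mem hr a

lemma exists_carreDuChamp_sphereCoord_eq {k : ℕ} {p : 𝔼 n →ᵇ ℝ} (hp : p ∈ spherePolys n k)
    (a : Option (Fin n)) :
    ∃ r ∈ spherePolys n k, ∀ x, Γ p (ω a) x = (-(k : ℝ) • (p * sphereCoordBCF a) + r) x := by
  induction k generalizing p with
  | zero =>
    obtain ⟨c, rfl⟩ := mem_spherePolys_zero.1 hp
    exact ⟨0, zero_mem _, fun x => by simpa using carreDuChamp_const_left c (ω a) x⟩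
  | succ k ih =>
    refine spherePolys_succ_induction (P := fun p => ∃ r ∈ spherePolys n (k + 1), ∀ x,
      Γ p (ω a) x = (-((k + 1 : ℕ) : ℝ) • (p * sphereCoordBCF a) + r) x) ?_ ?_ ?_ hp
    · intro f hf
      obtain ⟨r, hr, hfr⟩ := ih hf
      refine ⟨r + f * sphereCoordBCF a, add_mem (spherePolys_mono k.le_succ hr)
        (mul_sphereCoordBCF_mem hf a), fun x => ?_⟩
      rw [hfr x]
      simp
      ring
    · intro f hf b
      obtain ⟨r, hr, hfr⟩ := ih hf
      refine ⟨r * sphereCoordBCF b + (if b = a then (1 : ℝ) else 0) • f,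
        add_mem (mul_sphereCoordBCF_mem hr b)
          (Submodule.smul_mem _ _ (spherePolys_mono k.le_succ hf)), fun x => ?_⟩
      have hmul : Γ (f * sphereCoordBCF b) (ω a) x = f x * Γ (ω b) (ω a) x + ω b x * Γ f (ω a) x :=
        carreDuChamp_mul_left (isAdmissible_of_mem_spherePolys hf) (isAdmissible_sphereCoord b) x
      rw [hmul, carreDuChamp_sphereCoord, hfr x]
      split_ifs <;> simp <;> ring
    · rintro f hf g hg ⟨r, hr, hfr⟩ ⟨s, hs, hgs⟩
      refine ⟨r + s, add_mem hr hs, fun x => ?_⟩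
      have hadd : Γ (f + g) (ω a) x = Γ f (ω a) x + Γ g (ω a) x := carreDuChamp_add_left
        (isAdmissible_of_mem_spherePolys hf) (isAdmissible_of_mem_spherePolys hg) x
      rw [hadd, hfr x, hgs x]
      simp
      ring

/-- The eigenvalue `k (k + n - 1)` of the Laplacian on spherical harmonics of degree `k`. -/
def sphereEigenvalue (n k : ℕ) : ℝ := k * (k + n - 1)

lemma sphereEigenvalue_mono (hn : 1 ≤ n) : Monotone (sphereEigenvalue n) := fun j k hjk => by
  have hn' : (1 : ℝ) ≤ n := by exact_mod_cast hn
  have hjk' : (j : ℝ) ≤ k := by exact_mod_cast hjk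
  exact mul_le_mul hjk' (by linarith) (by linarith [Nat.cast_nonneg (α := ℝ) j])
    (Nat.cast_nonneg k)

lemma exists_hasNegLaplacian (hn : 3 ≤ n) {k : ℕ} {p : 𝔼 n →ᵇ ℝ} (hp : p ∈ spherePolys n k) :
    ∃ r ∈ spherePolysLT n k, HasNegLaplacian p (sphereEigenvalue n k • p + r) := by
  induction k generalizing p with
  | zero =>
    obtain ⟨c, rfl⟩ := mem_spherePolys_zero.1 hp
    refine ⟨0, zero_mem _, fun h _ => ?_⟩
    simpa [sphereEigenvalue] using dirichletForm_const_left c h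
  | succ k ih =>
    refine spherePolys_succ_induction (P := fun p => ∃ r ∈ spherePolysLT n (k + 1),
      HasNegLaplacian p (sphereEigenvalue n (k + 1) • p + r)) ?_ ?_ ?_ hp
    · intro f hf
      obtain ⟨r, hr, hfr⟩ := ih hf
      refine ⟨r + (sphereEigenvalue n k - sphereEigenvalue n (k + 1)) • f,
        add_mem (spherePolysLT_le k.le_succ hr) (Submodule.smul_mem _ _ hf), ?_⟩
      convert hfr using 1
      module
    · intro f hf b
      obtain ⟨r, hr, hfr⟩ := ih hf
      obtain ⟨s, hs, hfs⟩ := exists_carreDuChamp_sphereCoord_eq hf b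
      refine ⟨r * sphereCoordBCF b - (2 : ℝ) • s,
        sub_mem (mul_sphereCoordBCF_mem_of_mem_LT hr b) (Submodule.smul_mem _ _ hs), ?_⟩
      convert hfr.mul (isAdmissible_of_mem_spherePolys hf) (isAdmissible_sphereCoord b)
        (hasNegLaplacian_sphereCoordBCF hn b) hfs using 1
      ext x
      simp [sphereEigenvalue]
      ring
    · rintro f hf g hg ⟨r, hr, hfr⟩ ⟨s, hs, hgs⟩
      refine ⟨r + s, add_mem hr hs, ?_⟩
      convert hfr.add (isAdmissible_of_mem_spherePolys hf) (isAdmissible_of_mem_spherePolys hg)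
        hgs using 1
      module

/-- The polynomials of degree at most `k` as a subspace of `L²(𝕊ⁿ)`. -/
def spherePolysL2 (n k : ℕ) : Submodule ℝ (Lp ℝ 2 (σ n)) :=
  (spherePolys n k).map toL2.toLinearMap

instance (k : ℕ) : FiniteDimensional ℝ (spherePolysL2 n k) :=
  Module.Finite.iff_fg.2 ((spherePolys_fg k).map _)

lemma exists_toL2_eq_starProjection (k : ℕ) (f : 𝔼 n →ᵇ ℝ) :
    ∃ g ∈ spherePolys n k, toL2 g = (spherePolysL2 n k).starProjection (toL2 f) ∧
      ∀ w ∈ spherePolys n k, inner ℝ (toL2 w) (toL2 (f - g)) = 0 := by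
  obtain ⟨g, hg, hgf⟩ := (spherePolysL2 n k).starProjection_apply_mem (toL2 f)
  refine ⟨g, hg, hgf, fun w hw => ?_⟩
  rw [map_sub, show toL2 g = _ from hgf]
  exact (Submodule.mem_orthogonal _ _).1 ((spherePolysL2 n k).sub_starProjection_mem_orthogonal _)
    (toL2 w) ⟨w, hw, rfl⟩

lemma dirichletForm_add_self_of_orthogonal (hn : 3 ≤ n) {k : ℕ} {g h : 𝔼 n →ᵇ ℝ}
    (hg : g ∈ spherePolys n k) (hh : IsAdmissible h)
    (horth : ∀ w ∈ spherePolys n k, inner ℝ (toL2 w) (toL2 h) = 0) :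
    𝓔 (g + h) (g + h) = 𝓔 g g + 𝓔 h h := by
  obtain ⟨r, hr, hgr⟩ := exists_hasNegLaplacian hn hg
  have hgh : 𝓔 g h = 0 := (hgr h hh).trans <| horth _ <|
    add_mem (Submodule.smul_mem _ _ hg) (spherePolysLT_le k.le_succ hr)
  have hadd : 𝓔 (g + h) (g + h) = 𝓔 g g + 2 * 𝓔 g h + 𝓔 h h :=
    dirichletForm_add_self (isAdmissible_of_mem_spherePolys hg) hh
  rw [hadd, hgh, mul_zero, add_zero]

lemma sphereEigenvalue_mul_norm_sq_le_of_mem_spherePolys (hn : 3 ≤ n) (k N : ℕ) {p : 𝔼 n →ᵇ ℝ}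
    (hp : p ∈ spherePolys n N)
    (horth : ∀ w ∈ spherePolysLT n k, inner ℝ (toL2 w) (toL2 p) = 0) :
    sphereEigenvalue n k * ‖toL2 p‖ ^ 2 ≤ 𝓔 p p := by
  have of_mem_LT {q : 𝔼 n →ᵇ ℝ} (hq : q ∈ spherePolysLT n k)
      (hqo : ∀ w ∈ spherePolysLT n k, inner ℝ (toL2 w) (toL2 q) = 0) :
      sphereEigenvalue n k * ‖toL2 q‖ ^ 2 ≤ 𝓔 q q := by
    rw [← real_inner_self_eq_norm_sq, hqo q hq, mul_zero]
    exact dirichletForm_self_nonneg q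
  induction N generalizing p with
  | zero =>
    rcases Nat.eq_zero_or_pos k with rfl | hk
    · simpa [sphereEigenvalue] using dirichletForm_self_nonneg p
    · exact of_mem_LT (spherePolys_le_LT hk hp) horth
  | succ N ih =>
    rcases Nat.lt_or_ge (N + 1) k with hk | hk
    · exact of_mem_LT (spherePolys_le_LT hk hp) horth
    obtain ⟨g, hg, -, hgo⟩ := exists_toL2_eq_starProjection N p
    have hpg : p - g ∈ spherePolys n (N + 1) := sub_mem hp (spherePolys_mono N.le_succ hg)
    have hpgA := isAdmissible_of_mem_spherePolys hpg
    obtain ⟨r, hr, hD⟩ := exists_hasNegLaplacian hn hpg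
    have henergy : 𝓔 p p = 𝓔 g g + 𝓔 (p - g) (p - g) := by
      simpa using dirichletForm_add_self_of_orthogonal hn hg hpgA hgo
    have htop : 𝓔 (p - g) (p - g) = sphereEigenvalue n (N + 1) * ‖toL2 (p - g)‖ ^ 2 := by
      have := hD _ hpgA
      rwa [map_add, inner_add_left, hgo r hr, add_zero, map_smul, inner_smul_left,
        real_inner_self_eq_norm_sq] at this
    have hnorm : ‖toL2 p‖ ^ 2 = ‖toL2 g‖ ^ 2 + ‖toL2 (p - g)‖ ^ 2 := by
      have hpyth := norm_add_sq_real (toL2 g) (toL2 (p - g))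
      rwa [hgo g hg, ← map_add, add_sub_cancel, mul_zero, add_zero] at hpyth
    have hlow := ih hg fun w hw => by
      have hwg := hgo w (spherePolysLT_le hk hw)
      rw [map_sub, inner_sub_right, horth w hw] at hwg
      linarith
    have hmono := mul_le_mul_of_nonneg_right (sphereEigenvalue_mono (n := n) (by omega) hk)
      (sq_nonneg ‖toL2 (p - g)‖)
    rw [henergy, htop, hnorm, mul_add]
    exact add_le_add hlow hmono

/-- The algebra of polynomials in the coordinates `ω`. -/
def spherePolyAlgebra (n : ℕ) : StarSubalgebra ℝ (𝔼 n →ᵇ ℝ) where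
  carrier := {p | ∃ k, p ∈ spherePolys n k}
  mul_mem' := fun ⟨j, hj⟩ ⟨k, hk⟩ => ⟨j + k, spherePolys_mul_le j k (Submodule.mul_mem_mul hj hk)⟩
  add_mem' := fun ⟨j, hj⟩ ⟨k, hk⟩ => ⟨max j k, add_mem (spherePolys_mono (le_max_left j k) hj)
    (spherePolys_mono (le_max_right j k) hk)⟩
  algebraMap_mem' := fun c => ⟨0, mem_spherePolys_zero.2 ⟨c, rfl⟩⟩
  star_mem' := fun {p} hp => by rwa [show star p = p by ext; simp]

lemma sphereCoord_injective {x y : 𝔼 n} (hxy : ∀ a, ω a x = ω a y) : x = y := by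
  have hρ : ρ x = ρ y := by linarith [show ρ x - 1 = ρ y - 1 from hxy none]
  ext i
  have hi : ρ x * x i = ρ y * y i := hxy (some i)
  rw [hρ] at hi
  exact mul_left_cancel₀ (conformalFactor_pos y).ne' hi

lemma ae_eq_zero_of_forall_mem_integral_mul_eq_zero {X : Type*} [TopologicalSpace X]
    [PolishSpace X] [MeasurableSpace X] [BorelSpace X] {μ : Measure X}
    {A : StarSubalgebra ℝ (X →ᵇ ℝ)}
    (hA : (A.map (BoundedContinuousFunction.toContinuousMapStarₐ ℝ)).SeparatesPoints)
    {f : X → ℝ} (hf : Integrable f μ) (horth : ∀ g ∈ A, ∫ x, g x * f x ∂μ = 0) : f =ᵐ[μ] 0 := by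
  have hpos_meas : AEMeasurable (fun x => ENNReal.ofReal (f x)) μ :=
    hf.aestronglyMeasurable.aemeasurable.ennreal_ofReal
  have hneg_meas : AEMeasurable (fun x => ENNReal.ofReal (-f x)) μ :=
    hf.aestronglyMeasurable.aemeasurable.neg.ennreal_ofReal
  have := isFiniteMeasure_withDensity_ofReal hf.2
  have := isFiniteMeasure_withDensity_ofReal hf.neg.2
  have hparts : μ.withDensity (fun x => ENNReal.ofReal (f x))
      = μ.withDensity fun x => ENNReal.ofReal (-f x) := by
    refine ext_of_forall_mem_subalgebra_integral_eq_of_polish hA fun g hg => ?_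
    rw [integral_withDensity_eq_integral_toReal_smul₀ hpos_meas (by simp),
      integral_withDensity_eq_integral_toReal_smul₀ hneg_meas (by simp), ← sub_eq_zero,
      ← integral_sub, ← horth g hg]
    · refine integral_congr_ae (Eventually.of_forall fun x => ?_)
      simp only [ENNReal.toReal_ofReal', smul_eq_mul, ← sub_mul]
      rw [max_zero_sub_max_neg_zero_eq_self, mul_comm]
    · simpa only [ENNReal.toReal_ofReal', smul_eq_mul, mul_comm] using hf.pos_part.bdd_mul
        g.continuous.aestronglyMeasurable (Eventually.of_forall g.norm_coe_le_norm)
    · simpa only [ENNReal.toReal_ofReal', smul_eq_mul, mul_comm] using hf.neg_part.bdd_mul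
        g.continuous.aestronglyMeasurable (Eventually.of_forall g.norm_coe_le_norm)
  filter_upwards [(withDensity_eq_iff hpos_meas hneg_meas hf.lintegral_lt_top.ne).1 hparts]
    with x hx
  rcases le_total 0 (f x) with h | h
  · rw [ENNReal.ofReal_of_nonpos (neg_nonpos.2 h), ENNReal.ofReal_eq_zero] at hx
    exact le_antisymm hx h
  · rw [ENNReal.ofReal_of_nonpos h, eq_comm, ENNReal.ofReal_eq_zero] at hx
    exact le_antisymm h (neg_nonpos.1 hx)

lemma topologicalClosure_iSup_spherePolysL2 : (⨆ k, spherePolysL2 n k).topologicalClosure = ⊤ := by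
  rw [Submodule.topologicalClosure_eq_top_iff, Submodule.eq_bot_iff]
  intro f hf
  rw [Lp.eq_zero_iff_ae_eq_zero]
  refine ae_eq_zero_of_forall_mem_integral_mul_eq_zero (A := spherePolyAlgebra n) ?_
    ((Lp.memLp f).integrable one_le_two) ?_
  · intro x y hxy
    by_contra! hsep
    refine hxy (sphereCoord_injective fun a => hsep (ω a) ?_)
    exact ⟨_, ⟨sphereCoordBCF a, ⟨1, sphereCoordBCF_mem_spherePolys_one a⟩, rfl⟩, rfl⟩
  · rintro g ⟨k, hg⟩
    have hgf := (Submodule.mem_orthogonal _ _).1 hf (toL2 g)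
      (le_iSup (spherePolysL2 n) k ⟨g, hg, rfl⟩)
    rw [L2.inner_def] at hgf
    rw [← hgf]
    refine integral_congr_ae ?_
    filter_upwards [BoundedContinuousFunction.coeFn_toLp 2 (σ n) ℝ g] with x hx
    simp [toL2, hx, mul_comm]

theorem sphereEigenvalue_mul_integral_sq_le (hn : 3 ≤ n) (k : ℕ) {f : 𝔼 n → ℝ}
    (hf : IsAdmissible f) (horth : ∀ w ∈ spherePolysLT n k, ∫ x, w x * f x ∂(σ n) = 0) :
    sphereEigenvalue n k * ∫ x, f x ^ 2 ∂(σ n) ≤ 𝓔 f f := by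
  have hnorm : ∫ x, f x ^ 2 ∂(σ n) = ‖toL2 hf.toBCF‖ ^ 2 := by
    rw [← real_inner_self_eq_norm_sq, inner_toL2]
    simp only [sq, IsAdmissible.toBCF_apply]
  have hlim : Tendsto (fun N => sphereEigenvalue n k *
      ‖(spherePolysL2 n N).starProjection (toL2 hf.toBCF)‖ ^ 2) atTop
      (𝓝 (sphereEigenvalue n k * ‖toL2 hf.toBCF‖ ^ 2)) :=
    ((Submodule.starProjection_tendsto_self (spherePolysL2 n)
      (fun _ _ h => Submodule.map_mono (spherePolys_mono h)) _
      topologicalClosure_iSup_spherePolysL2.ge).norm.pow 2).const_mul _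
  rw [hnorm]
  refine le_of_tendsto hlim ((eventually_ge_atTop k).mono fun N hN => ?_)
  obtain ⟨g, hg, hgf, hgo⟩ := exists_toL2_eq_starProjection N hf.toBCF
  rw [← hgf]
  refine (sphereEigenvalue_mul_norm_sq_le_of_mem_spherePolys hn k N hg fun w hw => ?_).trans ?_
  · have hwg := hgo w (spherePolysLT_le (by omega) hw)
    rw [map_sub, inner_sub_right, inner_toL2] at hwg
    simp only [IsAdmissible.toBCF_apply, horth w hw] at hwg
    linarith
  · have hsplit := dirichletForm_add_self_of_orthogonal hn hg (h := hf.toBCF - g)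
      (hf.sub (isAdmissible_of_mem_spherePolys hg)) hgo
    rw [← BoundedContinuousFunction.coe_add, add_sub_cancel] at hsplit
    exact (le_add_of_nonneg_right (dirichletForm_self_nonneg _)).trans hsplit.ge

/-! ### Conformal invariance -/

/-- The standard bubble `(2 / (1 + |x|²)) ^ ((n-2)/2)`. -/
def standardBubble (x : 𝔼 n) : ℝ := ρ x ^ (((n : ℝ) - 2) / 2)

local notation "φ" => standardBubble

/-- The Dirichlet energy `∫ |∇u|²` on `ℝⁿ`. -/
def gradEnergy (u : 𝔼 n → ℝ) : ℝ := ∫ x, ∑ i, pderiv i u x ^ 2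

/-- The zeroth-order coefficient `n(n-2)/4` of the conformal Laplacian of `𝕊ⁿ`. -/
def yamabeConst (n : ℕ) : ℝ := n * (n - 2) / 4

/-- The critical Sobolev exponent `2n/(n-2)`. -/
def critExp (n : ℕ) : ℝ := 2 * n / (n - 2)

/-- The quadratic form of the conformal Laplacian of `𝕊ⁿ`. -/
def conformalEnergy (U : 𝔼 n → ℝ) : ℝ := 𝓔 U U + yamabeConst n * ∫ x, U x ^ 2 ∂(σ n)

/-- The integral `∫ |U| ^ critExp n` over `𝕊ⁿ`. -/
def critIntegral (U : 𝔼 n → ℝ) : ℝ := ∫ x, |U x| ^ critExp n ∂(σ n)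

section Exponents

variable (hn : 3 ≤ n)
include hn

lemma sub_two_pos : 0 < (n : ℝ) - 2 := by
  have : (3 : ℝ) ≤ n := by exact_mod_cast hn
  linarith

lemma yamabeConst_pos : 0 < yamabeConst n := by
  have := sub_two_pos hn
  unfold yamabeConst; positivity

lemma two_lt_critExp : 2 < critExp n := by
  have := sub_two_pos hn
  rw [critExp, lt_div_iff₀ this]; linarith

lemma critExp_pos : 0 < critExp n := two_pos.trans (two_lt_critExp hn)

end Exponents

lemma standardBubble_pos (x : 𝔼 n) : 0 < φ x := Real.rpow_pos_of_pos (conformalFactor_pos x) _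

lemma standardBubble_sq (hn : 2 ≤ n) (x : 𝔼 n) : φ x ^ 2 = ρ x ^ (n - 2) := by
  rw [standardBubble, ← Real.rpow_natCast, ← Real.rpow_mul (conformalFactor_pos x).le,
    ← Real.rpow_natCast]
  push_cast [hn]
  congr 1; ring

lemma standardBubble_rpow_critExp (hn : 3 ≤ n) (x : 𝔼 n) : φ x ^ critExp n = ρ x ^ n := by
  have := (sub_two_pos hn).ne'
  rw [standardBubble, ← Real.rpow_mul (conformalFactor_pos x).le, ← Real.rpow_natCast, critExp]
  congr 1; field_simp

@[fun_prop]
lemma contDiff_standardBubble {k : WithTop ℕ∞} : ContDiff ℝ k (φ : 𝔼 n → ℝ) :=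
  contDiff_conformalFactor.rpow_const_of_ne fun x => (conformalFactor_pos x).ne'

@[fun_prop]
lemma differentiable_standardBubble : Differentiable ℝ (φ : 𝔼 n → ℝ) :=
  (contDiff_standardBubble (k := 1)).differentiable one_ne_zero

lemma pderiv_standardBubble (i : Fin n) (x : 𝔼 n) :
    pderiv i φ x = -(((n : ℝ) - 2) / 2) * φ x * (ρ x * x i) := by
  have hρ := (conformalFactor_pos x).ne'
  have hderiv := (hasFDerivAt_conformalFactor x).rpow_const (p := ((n : ℝ) - 2) / 2) (Or.inl hρ)
  change fderiv ℝ (fun y => ρ y ^ (((n : ℝ) - 2) / 2)) x _ = _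
  rw [hderiv.fderiv, Real.rpow_sub_one hρ, standardBubble]
  simp [smul_smul, EuclideanSpace.inner_single_right]
  field_simp

section

variable {U : 𝔼 n → ℝ}

lemma pderiv_standardBubble_mul {x : 𝔼 n} (hU : DifferentiableAt ℝ U x) (i : Fin n) :
    pderiv i (fun y => φ y * U y) x
      = φ x * (pderiv i U x - ((n : ℝ) - 2) / 2 * (ρ x * x i) * U x) := by
  rw [pderiv_mul i (by fun_prop) hU, pderiv_standardBubble]; ring

lemma sum_pderiv_standardBubble_mul_sq (hn : 2 ≤ n) {x : 𝔼 n} (hU : DifferentiableAt ℝ U x) :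
    ∑ i, pderiv i (fun y => φ y * U y) x ^ 2
      = ρ x ^ (n - 2) * (∑ i, pderiv i U x ^ 2
        - ((n : ℝ) - 2) * ρ x * U x * ∑ i, x i * pderiv i U x
        + ((n : ℝ) - 2) ^ 2 / 4 * ρ x * (2 - ρ x) * U x ^ 2) := by
  have hterm (i : Fin n) : pderiv i (fun y => φ y * U y) x ^ 2
      = ρ x ^ (n - 2) * (pderiv i U x ^ 2 - ((n : ℝ) - 2) * ρ x * U x * (x i * pderiv i U x)
        + ((n : ℝ) - 2) ^ 2 / 4 * ρ x ^ 2 * U x ^ 2 * x i ^ 2) := by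
    rw [pderiv_standardBubble_mul hU, mul_pow, standardBubble_sq hn]; ring
  simp only [hterm, ← Finset.mul_sum, Finset.sum_add_distrib, Finset.sum_sub_distrib]
  linear_combination ρ x ^ (n - 2) * ((n : ℝ) - 2) ^ 2 / 4 * ρ x * U x ^ 2 *
    conformalFactor_mul_sum_sq x

/-- The vector field `ρ^(n-1) U² x`, whose divergence separates the Euclidean and spherical
energies. -/
def conformalField (U : 𝔼 n → ℝ) (i : Fin n) (x : 𝔼 n) : ℝ := ρ x ^ (n - 1) * x i * (U x * U x)

lemma sum_pderiv_conformalField (hn : 1 ≤ n) {x : 𝔼 n} (hU : DifferentiableAt ℝ U x) :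
    ∑ i, pderiv i (conformalField U i) x
      = ρ x ^ (n - 1) * (2 * U x * ∑ i, x i * pderiv i U x
        + (n - (n - 1) * (2 - ρ x)) * U x ^ 2) := by
  have hterm (i : Fin n) : pderiv i (conformalField U i) x
      = ρ x ^ (n - 1) * (2 * U x * (x i * pderiv i U x) + U x ^ 2
        - (n - 1) * ρ x * U x ^ 2 * x i ^ 2) := by
    change pderiv i (fun y => ρ y ^ (n - 1) * y i * (U y * U y)) x = _
    simp (disch := fun_prop) only [pderiv_mul, pderiv_conformalFactor_pow, pderiv_coord]
    push_cast [hn]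
    ring
  simp only [hterm, ← Finset.mul_sum, Finset.sum_add_distrib, Finset.sum_sub_distrib,
    Finset.sum_const, Finset.card_univ, Fintype.card_fin, nsmul_eq_mul]
  linear_combination -ρ x ^ (n - 1) * ((n : ℝ) - 1) * U x ^ 2 * conformalFactor_mul_sum_sq x

lemma sum_pderiv_standardBubble_mul_sq_eq_sub_div (hn : 2 ≤ n) {x : 𝔼 n}
    (hU : DifferentiableAt ℝ U x) :
    ∑ i, pderiv i (fun y => φ y * U y) x ^ 2
      = ρ x ^ n * (Γ U U x + yamabeConst n * U x ^ 2)
        - ((n : ℝ) - 2) / 2 * ∑ i, pderiv i (conformalField U i) x := by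
  have hρ := (conformalFactor_pos x).ne'
  obtain ⟨m, rfl⟩ := Nat.exists_eq_add_of_le' hn
  rw [sum_pderiv_standardBubble_mul_sq hn hU, sum_pderiv_conformalField (by omega) hU,
    carreDuChamp, yamabeConst]
  simp only [← sq, Nat.add_sub_cancel, show m + 2 - 1 = m + 1 from rfl, Nat.cast_add,
    Nat.cast_ofNat]
  field_simp
  ring

end

lemma hasCompactSupport_pderiv {f : 𝔼 n → ℝ} (hc : HasCompactSupport f) (i : Fin n) :
    HasCompactSupport (pderiv i f) :=
  hc.fderiv_apply (𝕜 := ℝ) _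

lemma integrable_pderiv_of_hasCompactSupport {f : 𝔼 n → ℝ} (hf : ContDiff ℝ 1 f)
    (hc : HasCompactSupport f) (i : Fin n) : Integrable (pderiv i f) :=
  (continuous_pderiv hf i).integrable_of_hasCompactSupport (hasCompactSupport_pderiv hc i)

lemma integral_pderiv_eq_zero {f : 𝔼 n → ℝ} (hf : ContDiff ℝ 1 f) (hc : HasCompactSupport f)
    (i : Fin n) : ∫ x, pderiv i f x = 0 := by
  have hparts := integral_mul_fderiv_eq_neg_fderiv_mul_of_integrable (μ := volume) (𝕜 := ℝ)
    (f := fun _ : 𝔼 n => 1) (g := f) (v := EuclideanSpace.single i 1)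
  simpa [pderiv] using hparts (by simp)
    (by simpa using! integrable_pderiv_of_hasCompactSupport hf hc i)
    (by simpa using! hf.continuous.integrable_of_hasCompactSupport hc) (by simp)
    fun x _ => hf.differentiable one_ne_zero x

section

variable {U : 𝔼 n → ℝ}

lemma IsAdmissible.integrable_sq (hU : IsAdmissible U) : Integrable (fun x => U x ^ 2) (σ n) := by
  simpa only [sq] using (hU.mul hU).integrable

lemma conformalEnergy_eq (hU : IsAdmissible U) :
    conformalEnergy U = ∫ x, ρ x ^ n * (Γ U U x + yamabeConst n * U x ^ 2) := by
  rw [conformalEnergy, dirichletForm, ← integral_const_mul,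
    ← integral_add (integrable_carreDuChamp hU hU) (hU.integrable_sq.const_mul _),
    integral_sphereMeasure]

lemma integrable_conformalEnergy (hU : IsAdmissible U) :
    Integrable fun x => ρ x ^ n * (Γ U U x + yamabeConst n * U x ^ 2) :=
  integrable_sphereMeasure_iff.1 <|
    (integrable_carreDuChamp hU hU).add (hU.integrable_sq.const_mul _)

lemma gradEnergy_standardBubble_mul_of_hasCompactSupport (hn : 2 ≤ n) (hU : ContDiff ℝ 1 U)
    (hc : HasCompactSupport U) : gradEnergy (fun y => φ y * U y) = conformalEnergy U := by
  have hUA := isAdmissible_of_hasCompactSupport hU hc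
  have hfield (i : Fin n) : ContDiff ℝ 1 (conformalField U i) := by
    unfold conformalField; fun_prop
  have hfield_supp (i : Fin n) : HasCompactSupport (conformalField U i) :=
    HasCompactSupport.mul_left (f := fun y => ρ y ^ (n - 1) * y i) (hc.mul_left (f := U))
  have hint (i : Fin n) (_ : i ∈ Finset.univ) : Integrable (pderiv i (conformalField U i)) :=
    integrable_pderiv_of_hasCompactSupport (hfield i) (hfield_supp i) i
  simp only [gradEnergy, sum_pderiv_standardBubble_mul_sq_eq_sub_div hn (hUA.differentiableAt _)]
  rw [integral_sub (integrable_conformalEnergy hUA) ((integrable_finsetSum _ hint).const_mul _),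
    ← conformalEnergy_eq hUA, integral_const_mul, integral_finsetSum _ hint,
    Finset.sum_eq_zero fun i _ => integral_pderiv_eq_zero (hfield i) (hfield_supp i) i]
  ring

lemma integral_abs_standardBubble_mul_rpow (hn : 3 ≤ n) (U : 𝔼 n → ℝ) :
    ∫ x, |φ x * U x| ^ critExp n = critIntegral U := by
  simp only [critIntegral, integral_sphereMeasure, abs_mul, abs_of_pos (standardBubble_pos _),
    Real.mul_rpow (standardBubble_pos _).le (abs_nonneg _), standardBubble_rpow_critExp hn]

lemma critIntegral_nonneg (U : 𝔼 n → ℝ) : 0 ≤ critIntegral U :=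
  integral_nonneg fun _ => Real.rpow_nonneg (abs_nonneg _) _

lemma continuous_abs_rpow_critExp (hn : 3 ≤ n) (hU : Continuous U) :
    Continuous fun x => |U x| ^ critExp n :=
  hU.abs.rpow_const fun _ => Or.inr (critExp_pos hn).le

lemma IsAdmissible.integrable_abs_rpow (hn : 3 ≤ n) (hU : IsAdmissible U) :
    Integrable (fun x => |U x| ^ critExp n) (σ n) := by
  obtain ⟨C, -, hC⟩ := hU.exists_bound
  refine integrable_of_abs_le (continuous_abs_rpow_critExp hn hU.continuous)
    (C := C ^ critExp n) fun x => ?_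
  rw [abs_of_nonneg (Real.rpow_nonneg (abs_nonneg _) _)]
  exact Real.rpow_le_rpow (abs_nonneg _) (hC x).1 (critExp_pos hn).le

end
/-! ### Cutoffs and the Sobolev inequality -/

section Cutoff

/-- A smooth bump equal to `1` on the unit ball and supported in the ball of radius `2`. -/
def unitBump : ContDiffBump (0 : 𝔼 n) := ⟨1, 2, one_pos, one_lt_two⟩

/-- The dilates of `unitBump`, which exhaust `ℝⁿ`. -/
def cutoff (k : ℕ) (x : 𝔼 n) : ℝ := unitBump ((k + 1 : ℝ)⁻¹ • x)

@[fun_prop]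
lemma contDiff_cutoff (k : ℕ) : ContDiff ℝ 1 (cutoff k : 𝔼 n → ℝ) :=
  unitBump.contDiff.comp (contDiff_const_smul _)

lemma hasCompactSupport_cutoff (k : ℕ) : HasCompactSupport (cutoff k : 𝔼 n → ℝ) :=
  unitBump.hasCompactSupport.comp_smul (by positivity : (k + 1 : ℝ)⁻¹ ≠ 0)

lemma abs_cutoff_le_one (k : ℕ) (x : 𝔼 n) : |cutoff k x| ≤ 1 := by
  rw [cutoff, abs_of_nonneg unitBump.nonneg]
  exact unitBump.le_one

lemma pderiv_cutoff (k : ℕ) (i : Fin n) (x : 𝔼 n) :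
    pderiv i (cutoff k) x = (k + 1 : ℝ)⁻¹ * pderiv i unitBump ((k + 1 : ℝ)⁻¹ • x) := by
  change fderiv ℝ (fun y => unitBump ((k + 1 : ℝ)⁻¹ • y)) x _ = _
  rw [fderiv_comp_smul]
  rfl

lemma exists_abs_pderiv_le_of_hasCompactSupport {f : 𝔼 n → ℝ} (hf : ContDiff ℝ 1 f)
    (hc : HasCompactSupport f) : ∃ C, ∀ i x, |pderiv i f x| ≤ C := by
  obtain ⟨C, hC0, hC⟩ := (isAdmissible_of_hasCompactSupport hf hc).exists_bound
  exact ⟨C * 2, fun i x => ((hC x).2 i).trans <|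
    mul_le_mul_of_nonneg_left (conformalFactor_le_two x) hC0⟩

/-- The gradient of `cutoff k` is of size `(k + 1)⁻¹` and lives where `‖x‖` is comparable
to `k + 1`, whereas `ρ` decays like `‖x‖⁻²`. -/
lemma exists_pderiv_cutoff_sq_le :
    ∃ C, ∀ (k : ℕ) (i : Fin n) (x : 𝔼 n), pderiv i (cutoff k) x ^ 2 ≤ C * ρ x := by
  obtain ⟨K, hK⟩ := exists_abs_pderiv_le_of_hasCompactSupport (unitBump (n := n)).contDiff
    unitBump.hasCompactSupport
  refine ⟨5 / 2 * K ^ 2, fun k i x => ?_⟩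
  have hρ := conformalFactor_pos x
  have hk : (0 : ℝ) < k + 1 := by positivity
  rw [pderiv_cutoff, mul_pow]
  by_cases hx : ‖(k + 1 : ℝ)⁻¹ • x‖ ≤ 2
  · rw [norm_smul, norm_inv, Real.norm_of_nonneg hk.le, inv_mul_le_iff₀ hk] at hx
    have hscale : ((k + 1 : ℝ)⁻¹) ^ 2 ≤ 5 / 2 * ρ x := by
      rw [conformalFactor, inv_pow, ← mul_div_assoc, inv_le_comm₀ (by positivity) (by positivity),
        inv_div, div_le_iff₀ (by norm_num)]
      nlinarith [norm_nonneg x, (Nat.cast_nonneg k : (0 : ℝ) ≤ k)]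
    have hbump : pderiv i unitBump ((k + 1 : ℝ)⁻¹ • x) ^ 2 ≤ K ^ 2 :=
      sq_le_sq' (neg_le_of_abs_le (hK i _)) (le_of_abs_le (hK i _))
    calc _ ≤ (5 / 2 * ρ x) * K ^ 2 := mul_le_mul hscale hbump (sq_nonneg _) (by positivity)
      _ = 5 / 2 * K ^ 2 * ρ x := by ring
  · have hout : (k + 1 : ℝ)⁻¹ • x ∉ tsupport (unitBump : 𝔼 n → ℝ) := by
      rwa [ContDiffBump.tsupport_eq, mem_closedBall_zero_iff]
    rw [pderiv, fderiv_of_notMem_tsupport ℝ hout]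
    simpa using by positivity

lemma eventually_cutoff_eq_one (x : 𝔼 n) :
    ∀ᶠ k in atTop, cutoff k x = 1 ∧ ∀ i, pderiv i (cutoff k) x = 0 := by
  have hlim : Tendsto (fun k : ℕ => (k + 1 : ℝ)⁻¹ • x) atTop (𝓝 0) := by
    simpa using (tendsto_one_div_add_atTop_nhds_zero_nat (𝕜 := ℝ)).smul_const x
  filter_upwards [hlim.eventually unitBump.eventuallyEq_one.eventuallyEq_nhds] with k hk
  refine ⟨hk.eq_of_nhds, fun i => ?_⟩
  rw [pderiv_cutoff, pderiv, hk.fderiv_eq]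
  simp

end Cutoff

section Truncation

variable {U : 𝔼 n → ℝ}

lemma contDiff_cutoff_mul (hU : IsAdmissible U) (k : ℕ) :
    ContDiff ℝ 1 fun x => cutoff k x * U x :=
  (contDiff_cutoff k).mul hU.contDiff

lemma hasCompactSupport_cutoff_mul (U : 𝔼 n → ℝ) (k : ℕ) :
    HasCompactSupport fun x => cutoff k x * U x :=
  (hasCompactSupport_cutoff k).mul_right

lemma isAdmissible_cutoff_mul (hU : IsAdmissible U) (k : ℕ) :
    IsAdmissible fun x => cutoff k x * U x :=
  isAdmissible_of_hasCompactSupport (contDiff_cutoff_mul hU k) (hasCompactSupport_cutoff_mul U k)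

lemma pderiv_cutoff_mul (hU : IsAdmissible U) (k : ℕ) (i : Fin n) (x : 𝔼 n) :
    pderiv i (fun y => cutoff k y * U y) x
      = cutoff k x * pderiv i U x + U x * pderiv i (cutoff k) x :=
  pderiv_mul i ((contDiff_cutoff k).differentiable one_ne_zero x) (hU.differentiableAt x)

lemma eventually_cutoff_mul_eq (hU : IsAdmissible U) (x : 𝔼 n) :
    ∀ᶠ k in atTop, cutoff k x * U x = U x ∧
      ∀ i, pderiv i (fun y => cutoff k y * U y) x = pderiv i U x := by
  filter_upwards [eventually_cutoff_eq_one x] with k hk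
  simp [pderiv_cutoff_mul hU, hk.1, hk.2]

lemma exists_cutoff_mul_bound (hU : IsAdmissible U) :
    ∃ C, 0 ≤ C ∧ ∀ k x, |cutoff k x * U x| ≤ C ∧
      ∀ i, pderiv i (fun y => cutoff k y * U y) x ^ 2 ≤ C * ρ x := by
  obtain ⟨C, hC0, hC⟩ := hU.exists_bound
  obtain ⟨K, hK⟩ := exists_pderiv_cutoff_sq_le (n := n)
  have hterms (k x i) : pderiv i (fun y => cutoff k y * U y) x ^ 2
      ≤ (4 * C ^ 2 + 2 * C ^ 2 * |K|) * ρ x := by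
    have hρ := conformalFactor_pos x
    have hU_sq : U x ^ 2 ≤ C ^ 2 := sq_le_sq' (neg_le_of_abs_le (hC x).1) (le_of_abs_le (hC x).1)
    have hχ : cutoff k x ^ 2 ≤ 1 := (sq_le_one_iff_abs_le_one _).2 (abs_cutoff_le_one k x)
    have hdU : pderiv i U x ^ 2 ≤ C ^ 2 * (2 * ρ x) :=
      calc pderiv i U x ^ 2 ≤ (C * ρ x) ^ 2 := sq_le_sq'
            (neg_le_of_abs_le ((hC x).2 i)) (le_of_abs_le ((hC x).2 i))
        _ = C ^ 2 * (ρ x * ρ x) := by ring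
        _ ≤ C ^ 2 * (2 * ρ x) := by gcongr; exact conformalFactor_le_two x
    have hdχ : pderiv i (cutoff k) x ^ 2 ≤ |K| * ρ x :=
      (hK k i x).trans (by gcongr; exact le_abs_self K)
    rw [pderiv_cutoff_mul hU]
    calc _ ≤ 2 * ((cutoff k x * pderiv i U x) ^ 2 + (U x * pderiv i (cutoff k) x) ^ 2) :=
          add_sq_le
      _ = 2 * (cutoff k x ^ 2 * pderiv i U x ^ 2 + U x ^ 2 * pderiv i (cutoff k) x ^ 2) := by ring
      _ ≤ 2 * (1 * (C ^ 2 * (2 * ρ x)) + C ^ 2 * (|K| * ρ x)) := by gcongr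
      _ = (4 * C ^ 2 + 2 * C ^ 2 * |K|) * ρ x := by ring
  refine ⟨max C (4 * C ^ 2 + 2 * C ^ 2 * |K|), le_max_of_le_left hC0, fun k x => ⟨?_, fun i => ?_⟩⟩
  · rw [abs_mul]
    exact (mul_le_of_le_one_left (abs_nonneg _) (abs_cutoff_le_one k x)).trans
      ((hC x).1.trans (le_max_left _ _))
  · exact (hterms k x i).trans <|
      mul_le_mul_of_nonneg_right (le_max_right _ _) (conformalFactor_pos x).le

lemma tendsto_integral_of_eventually_eq (hn : 3 ≤ n) {F : ℕ → 𝔼 n → ℝ} {f : 𝔼 n → ℝ} {C : ℝ}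
    (hF : ∀ k, Continuous (F k)) (hC : ∀ k x, |F k x| ≤ C * ρ x ^ (n - 1))
    (hlim : ∀ x, ∀ᶠ k in atTop, F k x = f x) :
    Tendsto (fun k => ∫ x, F k x) atTop (𝓝 (∫ x, f x)) :=
  tendsto_integral_of_dominated_convergence _ (fun k => (hF k).aestronglyMeasurable)
    ((integrable_conformalFactor_pow (by omega)).const_mul C)
    (fun k => .of_forall (hC k)) (.of_forall fun x => tendsto_const_nhds.congr' <|
      (hlim x).mono fun _ hk => hk.symm)

section

variable {V : 𝔼 n → ℝ} {x : 𝔼 n} {C : ℝ}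

lemma conformalFactor_pow_mul_le (hn : 1 ≤ n) (x : 𝔼 n) {a b : ℝ} (hab : a ≤ b) (hb : 0 ≤ b) :
    ρ x ^ n * a ≤ 2 * b * ρ x ^ (n - 1) := by
  have hρ := conformalFactor_pos x
  calc ρ x ^ n * a ≤ ρ x ^ n * b := by gcongr
    _ = ρ x ^ (n - 1) * b * ρ x := by
        rw [← pow_sub_one_mul (Nat.ne_of_gt hn) (ρ x)]; ring
    _ ≤ ρ x ^ (n - 1) * b * 2 := by gcongr; exact conformalFactor_le_two x
    _ = 2 * b * ρ x ^ (n - 1) := by ring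

lemma abs_conformalEnergy_integrand_le (hn : 3 ≤ n) (hV : |V x| ≤ C)
    (hdV : ∀ i, pderiv i V x ^ 2 ≤ C * ρ x) :
    |ρ x ^ n * (Γ V V x + yamabeConst n * V x ^ 2)|
      ≤ (n * C + 2 * (yamabeConst n * C ^ 2)) * ρ x ^ (n - 1) := by
  have hρ := conformalFactor_pos x
  have hκ := yamabeConst_pos hn
  have hΓ : ρ x ^ n * Γ V V x ≤ n * C * ρ x ^ (n - 1) :=
    calc ρ x ^ n * Γ V V x = ρ x ^ (n - 2) * ∑ i, pderiv i V x ^ 2 := by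
          obtain ⟨m, rfl⟩ := Nat.exists_eq_add_of_le' hn
          simp only [carreDuChamp, ← sq, show m + 3 - 2 = m + 1 from rfl]
          field_simp
          ring
      _ ≤ ρ x ^ (n - 2) * ∑ _i : Fin n, C * ρ x := by gcongr with i; exact hdV i
      _ = n * C * ρ x ^ (n - 1) := by
          rw [show n - 1 = n - 2 + 1 by omega, Finset.sum_const, Finset.card_univ,
            Fintype.card_fin, nsmul_eq_mul]
          ring
  have hV_sq : V x ^ 2 ≤ C ^ 2 := sq_le_sq' (neg_le_of_abs_le hV) (le_of_abs_le hV)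
  have hΓ0 := carreDuChamp_self_nonneg V x
  rw [abs_of_nonneg (by positivity), mul_add, add_mul]
  exact add_le_add hΓ (conformalFactor_pow_mul_le (by omega) x (by gcongr) (by positivity))

lemma sum_pderiv_standardBubble_mul_sq_le (hn : 2 ≤ n) (hVd : DifferentiableAt ℝ V x)
    (hV : |V x| ≤ C) (hdV : ∀ i, pderiv i V x ^ 2 ≤ C * ρ x) :
    ∑ i, pderiv i (fun y => φ y * V y) x ^ 2
      ≤ n * (2 * C + ((n : ℝ) - 2) ^ 2 * C ^ 2) * ρ x ^ (n - 1) := by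
  have hρ := conformalFactor_pos x
  have hV_sq : V x ^ 2 ≤ C ^ 2 := sq_le_sq' (neg_le_of_abs_le hV) (le_of_abs_le hV)
  have hcoord (i : Fin n) : (ρ x * x i) ^ 2 ≤ 2 * ρ x := by
    have hxi : x i ^ 2 ≤ ‖x‖ ^ 2 := sq_le_sq.2 (by simpa using abs_coord_le_norm x i)
    calc (ρ x * x i) ^ 2 = ρ x * (ρ x * x i ^ 2) := by ring
      _ ≤ ρ x * (ρ x * ‖x‖ ^ 2) := by gcongr
      _ ≤ 2 * ρ x := by rw [conformalFactor_mul_norm_sq]; nlinarith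
  have hterm (i : Fin n) : pderiv i (fun y => φ y * V y) x ^ 2
      ≤ (2 * C + ((n : ℝ) - 2) ^ 2 * C ^ 2) * ρ x ^ (n - 1) := by
    rw [pderiv_standardBubble_mul hVd, mul_pow, standardBubble_sq hn, sub_eq_add_neg]
    calc _ ≤ ρ x ^ (n - 2) * (2 * (pderiv i V x ^ 2
          + (-(((n : ℝ) - 2) / 2 * (ρ x * x i) * V x)) ^ 2)) := by gcongr; exact add_sq_le
      _ = ρ x ^ (n - 2) * (2 * pderiv i V x ^ 2
          + ((n : ℝ) - 2) ^ 2 / 2 * ((ρ x * x i) ^ 2 * V x ^ 2)) := by ring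
      _ ≤ ρ x ^ (n - 2) * (2 * (C * ρ x) + ((n : ℝ) - 2) ^ 2 / 2 * ((2 * ρ x) * C ^ 2)) := by
          gcongr; exacts [hdV i, hcoord i]
      _ = _ := by rw [show n - 1 = n - 2 + 1 by omega]; ring
  calc _ ≤ ∑ _i : Fin n, (2 * C + ((n : ℝ) - 2) ^ 2 * C ^ 2) * ρ x ^ (n - 1) := by
        gcongr with i; exact hterm i
    _ = _ := by simp; ring

end

lemma tendsto_conformalEnergy_cutoff_mul (hn : 3 ≤ n) (hU : IsAdmissible U) :
    Tendsto (fun k => conformalEnergy fun x => cutoff k x * U x) atTop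
      (𝓝 (conformalEnergy U)) := by
  obtain ⟨C, -, hC⟩ := exists_cutoff_mul_bound hU
  have hV := isAdmissible_cutoff_mul hU
  simp only [conformalEnergy_eq hU, fun k => conformalEnergy_eq (hV k)]
  refine tendsto_integral_of_eventually_eq hn (fun k => ?_)
    (fun k x => abs_conformalEnergy_integrand_le hn (hC k x).1 (hC k x).2) fun x => ?_
  · exact (continuous_conformalFactor.pow n).mul ((continuous_carreDuChamp (hV k) (hV k)).add
      (((hV k).continuous.pow 2).const_mul _))
  · filter_upwards [eventually_cutoff_mul_eq hU x] with k hk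
    simp only [carreDuChamp, hk.1, hk.2]

lemma tendsto_gradEnergy_standardBubble_cutoff_mul (hn : 3 ≤ n) (hU : IsAdmissible U) :
    Tendsto (fun k => gradEnergy fun x => φ x * (cutoff k x * U x)) atTop
      (𝓝 (gradEnergy fun x => φ x * U x)) := by
  obtain ⟨C, -, hC⟩ := exists_cutoff_mul_bound hU
  have hV := isAdmissible_cutoff_mul hU
  refine tendsto_integral_of_eventually_eq hn
    (C := n * (2 * C + ((n : ℝ) - 2) ^ 2 * C ^ 2)) (fun k => ?_) (fun k x => ?_) fun x => ?_
  · exact continuous_finsetSum _ fun i _ =>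
      (continuous_pderiv (contDiff_standardBubble.mul (hV k).contDiff) i).pow 2
  · exact (abs_of_nonneg (by positivity)).trans_le (sum_pderiv_standardBubble_mul_sq_le
      (by omega) ((hV k).differentiableAt x) (hC k x).1 (hC k x).2)
  · filter_upwards [eventually_cutoff_mul_eq hU x] with k hk
    simp only [pderiv_standardBubble_mul ((hV k).differentiableAt x),
      pderiv_standardBubble_mul (hU.differentiableAt x), hk.1, hk.2]

lemma tendsto_critIntegral_cutoff_mul (hn : 3 ≤ n) (hU : IsAdmissible U) :
    Tendsto (fun k => critIntegral fun x => cutoff k x * U x) atTop (𝓝 (critIntegral U)) := by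
  obtain ⟨C, hC0, hC⟩ := exists_cutoff_mul_bound hU
  have hq := (critExp_pos hn).le
  simp only [critIntegral, integral_sphereMeasure]
  refine tendsto_integral_of_eventually_eq hn (C := 2 * C ^ critExp n) (fun k => ?_)
    (fun k x => ?_) fun x => ?_
  · exact (continuous_conformalFactor.pow n).mul
      (continuous_abs_rpow_critExp hn (isAdmissible_cutoff_mul hU k).continuous)
  · rw [abs_of_nonneg (mul_nonneg (pow_nonneg (conformalFactor_pos x).le _) (by positivity))]
    exact conformalFactor_pow_mul_le (by omega) x
      (Real.rpow_le_rpow (abs_nonneg _) (hC k x).1 hq) (by positivity)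
  · filter_upwards [eventually_cutoff_mul_eq hU x] with k hk
    rw [hk.1]

lemma gradEnergy_standardBubble_mul (hn : 3 ≤ n) (hU : IsAdmissible U) :
    gradEnergy (fun y => φ y * U y) = conformalEnergy U := by
  refine tendsto_nhds_unique (tendsto_gradEnergy_standardBubble_cutoff_mul hn hU) ?_
  simpa only [fun k => gradEnergy_standardBubble_mul_of_hasCompactSupport (by omega)
    (contDiff_cutoff_mul hU k) (hasCompactSupport_cutoff_mul U k)]
    using tendsto_conformalEnergy_cutoff_mul hn hU

/-- `S` is admissible as constant in the conformal Sobolev inequality on the sphere. -/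
def IsSobolevConst (n : ℕ) (S : ℝ) : Prop :=
  ∀ V : 𝔼 n → ℝ, IsAdmissible V → S * critIntegral V ^ (2 / critExp n) ≤ conformalEnergy V

lemma isSobolevConst_of_hasCompactSupport (hn : 3 ≤ n) {S : ℝ}
    (hS : ∀ V : 𝔼 n → ℝ, ContDiff ℝ 1 V → HasCompactSupport V →
      S * critIntegral V ^ (2 / critExp n) ≤ conformalEnergy V) : IsSobolevConst n S := by
  intro U hU
  have hcont := Real.continuous_rpow_const (div_nonneg zero_le_two (critExp_pos hn).le)
  exact le_of_tendsto_of_tendsto'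
    (((hcont.tendsto _).comp (tendsto_critIntegral_cutoff_mul hn hU)).const_mul S)
    (tendsto_conformalEnergy_cutoff_mul hn hU)
    fun k => hS _ (contDiff_cutoff_mul hU k) (hasCompactSupport_cutoff_mul U k)

end Truncation

section Sobolev

lemma sum_sq_apply_single (L : 𝔼 n →L[ℝ] ℝ) :
    ∑ i, L (EuclideanSpace.single i 1) ^ 2 = ‖L‖ ^ 2 := by
  rw [← (InnerProductSpace.toDual ℝ (𝔼 n)).symm.norm_map L,
    ← (EuclideanSpace.basisFun (Fin n) ℝ).sum_sq_norm_inner_left]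
  simp [InnerProductSpace.toDual_symm_apply]

lemma gradEnergy_eq_integral_norm_fderiv_sq (u : 𝔼 n → ℝ) :
    gradEnergy u = ∫ x, ‖fderiv ℝ u x‖ ^ 2 := by
  simp only [gradEnergy, pderiv, sum_sq_apply_single]

lemma toReal_eLpNorm_sq_eq {E F : Type*} [MeasurableSpace E] [NormedAddCommGroup F]
    {μ : Measure E} {f : E → F} {p : ℝ} (hp : 0 < p) (hf : MemLp f (ENNReal.ofReal p) μ) :
    (eLpNorm f (ENNReal.ofReal p) μ).toReal ^ 2 = (∫ x, ‖f x‖ ^ p ∂μ) ^ (2 / p) := by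
  have hint : 0 ≤ ∫ x, ‖f x‖ ^ p ∂μ := by positivity
  rw [hf.eLpNorm_eq_integral_rpow_norm (by simpa) (by simp), ENNReal.toReal_ofReal hp.le,
    ENNReal.toReal_ofReal (by positivity), ← Real.rpow_natCast, ← Real.rpow_mul hint]
  congr 1
  push_cast; ring

lemma exists_integral_rpow_le_mul_gradEnergy (hn : 3 ≤ n) : ∃ K : ℝ, 0 < K ∧ ∀ u : 𝔼 n → ℝ,
    ContDiff ℝ 1 u → HasCompactSupport u →
      (∫ x, |u x| ^ critExp n) ^ (2 / critExp n) ≤ K * gradEnergy u := by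
  have hn2 := sub_two_pos hn
  have hq := critExp_pos hn
  let c := SNormLESNormFDerivOfEqConst ℝ (volume : Measure (𝔼 n)) ((2 : NNReal) : ℝ)
  refine ⟨(c : ℝ) ^ 2 + 1, by positivity, fun u hu hc => ?_⟩
  have hsob := eLpNorm_le_eLpNorm_fderiv_of_eq (F := ℝ) (volume : Measure (𝔼 n)) hu hc
    (p := 2) (p' := (critExp n).toNNReal) (by norm_num) (by simp; omega) (by
      rw [Real.coe_toNNReal _ hq.le, finrank_euclideanSpace, Fintype.card_fin, critExp]
      push_cast
      field_simp)
  have hmemu : MemLp u (ENNReal.ofReal (critExp n)) volume :=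
    hu.continuous.memLp_of_hasCompactSupport hc
  have hmemd : MemLp (fderiv ℝ u) (ENNReal.ofReal 2) volume :=
    (hu.continuous_fderiv one_ne_zero).memLp_of_hasCompactSupport (hc.fderiv (𝕜 := ℝ))
  have hreal : (eLpNorm u (ENNReal.ofReal (critExp n)) volume).toReal
      ≤ c * (eLpNorm (fderiv ℝ u) (ENNReal.ofReal 2) volume).toReal := by
    simpa [ENNReal.ofReal, ENNReal.toReal_mul, c] using
      ENNReal.toReal_mono (by simpa using ENNReal.mul_ne_top (by simp) hmemd.2.ne) hsob
  have hsq := pow_le_pow_left₀ ENNReal.toReal_nonneg hreal 2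
  rw [mul_pow, toReal_eLpNorm_sq_eq hq hmemu, toReal_eLpNorm_sq_eq two_pos hmemd,
    div_self two_ne_zero,
    Real.rpow_one] at hsq
  have hgrad : 0 ≤ gradEnergy u := integral_nonneg fun x => by positivity
  simp only [Real.norm_eq_abs, Real.rpow_ofNat, ← gradEnergy_eq_integral_norm_fderiv_sq] at hsq
  linarith

lemma exists_isSobolevConst (hn : 3 ≤ n) : ∃ S : ℝ, 0 < S ∧ IsSobolevConst n S := by
  obtain ⟨K, hK, hsob⟩ := exists_integral_rpow_le_mul_gradEnergy hn
  refine ⟨K⁻¹, by positivity, isSobolevConst_of_hasCompactSupport hn fun V hV hc => ?_⟩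
  have := hsob _ (contDiff_standardBubble.mul hV) (hc.mul_left (f := φ))
  rwa [integral_abs_standardBubble_mul_rpow hn,
    gradEnergy_standardBubble_mul_of_hasCompactSupport (by omega) hV hc,
    ← inv_mul_le_iff₀ hK] at this

end Sobolev

/-! ### Near-optimal centered functions -/

section Taylor

lemma eventually_abs_one_add_rpow_sub_linear_le (p : ℝ) {η : ℝ} (hη : 0 < η) :
    ∀ᶠ s in 𝓝 (0 : ℝ), |(1 + s) ^ p - 1 - p * s| ≤ η * |s| := by
  have h : HasDerivAt (fun s : ℝ => (1 + s) ^ p) p 0 := by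
    simpa using ((hasDerivAt_id (0 : ℝ)).const_add 1).rpow_const (p := p) (by simp)
  simpa [mul_comm] using h.isLittleO.def hη

lemma eventually_abs_one_add_rpow_sub_quadratic_le (p : ℝ) {η : ℝ} (hη : 0 < η) :
    ∀ᶠ s in 𝓝 (0 : ℝ), |(1 + s) ^ p - 1 - p * s - p * (p - 1) / 2 * s ^ 2| ≤ η * s ^ 2 := by
  have hO := (Real.one_add_rpow_hasFPowerSeriesAt_zero (a := p)).isBigO_sub_partialSum_pow 3
  simp only [← norm_pow] at hO
  have ho := hO.of_norm_right.trans_isLittleO (Asymptotics.isLittleO_pow_pow (by norm_num : 2 < 3))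
  have hchoose : Ring.choose p 2 = p * (p - 1) / 2 := by
    simp [Ring.choose_eq_smul, descPochhammer_succ_right, Polynomial.smeval_mul,
      Polynomial.smeval_sub, Polynomial.smeval_X]
    ring
  have hsum (s : ℝ) :
      (binomialSeries ℝ p).partialSum 3 s = 1 + p * s + p * (p - 1) / 2 * s ^ 2 := by
    simp [FormalMultilinearSeries.partialSum, Finset.sum_range_succ, hchoose, mul_comm s,
      -FormalMultilinearSeries.apply_eq_prod_smul_coeff, sq]
  filter_upwards [ho.def hη] with s hs
  simpa [hsum, ← sub_sub] using hs

end Taylor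

section Weight

variable {α : Type*} [MeasurableSpace α]

lemma exists_isProbabilityMeasure_integral_eq {ν : Measure α} {f : α → ℝ} (hf0 : ∀ x, 0 ≤ f x)
    (hf1 : ∫ x, f x ∂ν = 1) : ∃ μ : Measure α, IsProbabilityMeasure μ ∧
      ∀ g : α → ℝ, ∫ x, g x ∂μ = ∫ x, g x * f x ∂ν := by
  have hf : Integrable f ν := by
    by_contra h
    simp [integral_undef h] at hf1
  refine ⟨ν.withDensity fun x => ENNReal.ofReal (f x), ⟨?_⟩, fun g => ?_⟩
  · rw [withDensity_apply _ .univ, Measure.restrict_univ,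
      ← ofReal_integral_eq_lintegral_ofReal hf (.of_forall hf0), hf1, ENNReal.ofReal_one]
  · rw [integral_withDensity_eq_integral_toReal_smul₀ hf.aemeasurable.ennreal_ofReal (by simp)]
    simp only [ENNReal.toReal_ofReal (hf0 _), smul_eq_mul, mul_comm]

lemma exists_quadratic_rpow_bounds {q ε : ℝ} (hq : 1 < q) (hε : 0 < ε) :
    ∃ t β : ℝ, 0 < t ∧ t < 1 ∧ 0 < β ∧
      (∀ s, |s| ≤ t → 1 + q * s + β * s ^ 2 ≤ |1 + s| ^ q) ∧
      ∀ y, 0 ≤ y → y ≤ t ^ 2 → 1 + (q - 1 - ε) * y ≤ (1 + β * y) ^ (2 / q) := by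
  obtain ⟨η, ⟨hη1, hη2⟩, hη⟩ : ∃ η : ℝ, (0 < q * (q - 1) / 2 - η ∧
      q - 1 - ε < (2 / q - η) * (q * (q - 1) / 2 - η)) ∧ 0 < η := by
    have hcoeff : ContinuousAt (fun η : ℝ => q * (q - 1) / 2 - η) 0 := by fun_prop
    have hprod : ContinuousAt (fun η : ℝ => (2 / q - η) * (q * (q - 1) / 2 - η)) 0 := by fun_prop
    refine (((hcoeff.eventually_const_lt ?_).and (hprod.eventually_const_lt ?_)).filter_mono
      nhdsWithin_le_nhds |>.and self_mem_nhdsWithin).exists (f := 𝓝[>] (0 : ℝ))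
    · have : 0 < q - 1 := by linarith
      simp only [sub_zero]; positivity
    · have : 2 / q * (q * (q - 1) / 2) = q - 1 := by field_simp
      simp only [sub_zero, this]; linarith
  set β := q * (q - 1) / 2 - η with hβ
  obtain ⟨s₀, hs₀, hs⟩ := Metric.eventually_nhds_iff.1
    (eventually_abs_one_add_rpow_sub_quadratic_le q hη)
  obtain ⟨y₀, hy₀, hy⟩ := Metric.eventually_nhds_iff.1
    (eventually_abs_one_add_rpow_sub_linear_le (2 / q) hη)
  simp only [dist_zero_right, Real.norm_eq_abs] at hs hy
  obtain ⟨t, ⟨⟨hts, ht1⟩, hty⟩, ht⟩ : ∃ t : ℝ, ((t < s₀ ∧ t < 1) ∧ β * t ^ 2 < y₀) ∧ 0 < t := by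
    have hsq : ContinuousAt (fun t : ℝ => β * t ^ 2) 0 := by fun_prop
    exact ((((eventually_lt_nhds hs₀).and (eventually_lt_nhds one_pos)).and
      (hsq.eventually_lt_const (by simpa using hy₀))).filter_mono nhdsWithin_le_nhds
        |>.and self_mem_nhdsWithin).exists (f := 𝓝[>] (0 : ℝ))
  refine ⟨t, β, ht, ht1, hη1, fun s hst => ?_, fun y hy0 hyt => ?_⟩
  · have hlower := (abs_le.1 (hs (hst.trans_lt hts))).1
    rw [abs_of_pos (a := 1 + s) (by linarith [(abs_le.1 hst).1]), hβ]
    linarith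
  · have hβy : 0 ≤ β * y := by positivity
    have hlower := (abs_le.1 (hy (y := β * y) ?_)).1
    · rw [abs_of_nonneg hβy] at hlower
      have := mul_le_mul_of_nonneg_right hη2.le hy0
      linarith
    · rw [abs_of_nonneg hβy]
      exact (mul_le_mul_of_nonneg_left hyt hη1.le).trans_lt hty

/-- The second-order expansion of `(∫ |1 + t w| ^ q) ^ (2 / q)` at `t = 0` has leading coefficient
`(q - 1) ∫ w²`, uniformly in `w`. -/
lemma exists_le_integral_abs_one_add_mul_rpow {q ε : ℝ} (hq : 1 < q) (hε : 0 < ε) :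
    ∃ t : ℝ, 0 < t ∧ ∀ (μ : Measure α) [IsProbabilityMeasure μ] (w : α → ℝ), Measurable w →
      (∀ x, |w x| ≤ 1) → ∫ x, w x ∂μ = 0 →
      1 + (q - 1 - ε) * t ^ 2 * ∫ x, w x ^ 2 ∂μ ≤ (∫ x, |1 + t * w x| ^ q ∂μ) ^ (2 / q) := by
  obtain ⟨t, β, ht, -, hβ, hpow, hroot⟩ := exists_quadratic_rpow_bounds hq hε
  refine ⟨t, ht, fun μ _ w hwm hw hw0 => ?_⟩
  have htw (x : α) : |t * w x| ≤ t := by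
    rw [abs_mul, abs_of_pos ht]
    exact mul_le_of_le_one_right ht.le (hw x)
  have hint {g : α → ℝ} (hg : Measurable g) {C : ℝ} (hC : ∀ x, |g x| ≤ C) : Integrable g μ :=
    .of_bound hg.aestronglyMeasurable C (.of_forall hC)
  have hiw : Integrable w μ := hint hwm hw
  have hiw2 : Integrable (fun x => w x ^ 2) μ :=
    hint (hwm.pow_const 2) (C := 1) fun x => by simpa using hw x
  have hirpow : Integrable (fun x => |1 + t * w x| ^ q) μ := by
    refine hint (by fun_prop) (C := (1 + t) ^ q) fun x => ?_
    rw [abs_of_nonneg (by positivity)]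
    gcongr
    exact (abs_add_le _ _).trans (by simpa using htw x)
  have hw2_le : ∫ x, w x ^ 2 ∂μ ≤ 1 := by
    simpa using integral_mono hiw2 (integrable_const 1) fun x => by simpa using hw x
  have hquad : Integrable (fun x => 1 + q * t * w x) μ :=
    (integrable_const _).add (hiw.const_mul _)
  have hlower : 1 + β * (t ^ 2 * ∫ x, w x ^ 2 ∂μ) ≤ ∫ x, |1 + t * w x| ^ q ∂μ := by
    calc _ = ∫ x, (1 + q * t * w x + β * t ^ 2 * w x ^ 2) ∂μ := by
          rw [integral_add hquad (hiw2.const_mul _), integral_add (integrable_const _)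
            (hiw.const_mul _), integral_const_mul, integral_const_mul, hw0]
          simp [mul_assoc]
      _ ≤ _ := integral_mono (hquad.add (hiw2.const_mul _)) hirpow fun x => by
          simpa only [mul_pow, mul_assoc] using hpow _ (htw x)
  calc _ ≤ (1 + β * (t ^ 2 * ∫ x, w x ^ 2 ∂μ)) ^ (2 / q) := by
        rw [mul_assoc]
        exact hroot _ (by positivity) (mul_le_of_le_one_right (sq_nonneg t) hw2_le)
    _ ≤ _ := by gcongr

end Weight

section QuadraticForm

variable {U f g : 𝔼 n → ℝ}

lemma conformalEnergy_const_mul (c : ℝ) (hf : IsAdmissible f) :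
    conformalEnergy (fun y => c * f y) = c ^ 2 * conformalEnergy f := by
  simp only [conformalEnergy, dirichletForm_const_mul_left c hf,
    dirichletForm_comm f fun y => c * f y, mul_pow, integral_const_mul]
  ring

lemma critIntegral_const_mul (c : ℝ) (f : 𝔼 n → ℝ) :
    critIntegral (fun y => c * f y) = |c| ^ critExp n * critIntegral f := by
  simp only [critIntegral, abs_mul, Real.mul_rpow (abs_nonneg _) (abs_nonneg _),
    integral_const_mul]

lemma conformalEnergy_add_add_conformalEnergy_sub (hf : IsAdmissible f) (hg : IsAdmissible g) :
    conformalEnergy (fun y => f y + g y) + conformalEnergy (fun y => f y - g y)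
      = 2 * (conformalEnergy f + conformalEnergy g) := by
  have hsq : ∫ x, (f x + g x) ^ 2 ∂(σ n) + ∫ x, (f x - g x) ^ 2 ∂(σ n)
      = 2 * (∫ x, f x ^ 2 ∂(σ n) + ∫ x, g x ^ 2 ∂(σ n)) := by
    rw [← integral_add (hf.add hg).integrable_sq (hf.sub hg).integrable_sq,
      ← integral_add hf.integrable_sq hg.integrable_sq, ← integral_const_mul]
    congr with x
    ring
  simp only [conformalEnergy, dirichletForm_add_self hf hg,
    dirichletForm_sub_left hf hg (hf.sub hg), dirichletForm_sub_right hf hg hf,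
    dirichletForm_sub_right hf hg hg, dirichletForm_comm g f]
  linear_combination yamabeConst n * hsq

lemma sum_sphereCoord_mul_pderiv (i : Fin n) (x : 𝔼 n) :
    ∑ a, ω a x * pderiv i (ω a) x = 0 := by
  have hconst : (fun y : 𝔼 n => ∑ a, ω a y ^ 2) = fun _ => 1 := funext sum_sphereCoord_sq
  have hω (a : Option (Fin n)) := (isAdmissible_sphereCoord a).differentiableAt x
  have hderiv := pderiv_sum i Finset.univ fun a _ => (hω a).fun_pow 2
  simp only [pderiv_pow _ _ (hω _), hconst, pderiv_const, Nat.cast_ofNat, Nat.add_one_sub_one,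
    pow_one, mul_assoc, ← Finset.mul_sum] at hderiv
  linarith

lemma sum_carreDuChamp_sphereCoord_mul (hU : IsAdmissible U) (x : 𝔼 n) :
    ∑ a, Γ (fun y => ω a y * U y) (fun y => ω a y * U y) x = Γ U U x + n * U x ^ 2 := by
  have hω := isAdmissible_sphereCoord (n := n)
  have hcross : ∑ a, ω a x * Γ (ω a) U x = 0 := by
    simp only [carreDuChamp, ← mul_div_assoc, Finset.mul_sum, ← Finset.sum_div]
    rw [Finset.sum_comm]
    simp only [← mul_assoc, ← Finset.sum_mul, sum_sphereCoord_mul_pderiv, zero_mul,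
      Finset.sum_const_zero, zero_div]
  calc _ = ∑ a, (ω a x ^ 2 * Γ U U x + 2 * U x * (ω a x * Γ (ω a) U x)
        + U x ^ 2 * (1 - ω a x ^ 2)) := by
        congr with a
        rw [carreDuChamp_mul_left (hω a) hU, carreDuChamp_comm U, carreDuChamp_comm (ω a),
          carreDuChamp_mul_left (hω a) hU, carreDuChamp_mul_left (hω a) hU,
          carreDuChamp_sphereCoord, carreDuChamp_comm U (ω a), if_pos rfl]
        ring
    _ = _ := by
        simp only [Finset.sum_add_distrib, ← Finset.sum_mul, ← Finset.mul_sum,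
          Finset.sum_sub_distrib, sum_sphereCoord_sq, hcross]
        simp
        ring

lemma sum_conformalEnergy_sphereCoord_mul (hU : IsAdmissible U) :
    ∑ a, conformalEnergy (fun y => ω a y * U y)
      = conformalEnergy U + n * ∫ x, U x ^ 2 ∂(σ n) := by
  have hωU (a : Option (Fin n)) := (isAdmissible_sphereCoord a).mul hU
  have hsq (x : 𝔼 n) : ∑ a, (ω a x * U x) ^ 2 = U x ^ 2 := by
    simp only [mul_pow, ← Finset.sum_mul, sum_sphereCoord_sq, one_mul]
  simp only [conformalEnergy, dirichletForm]
  rw [Finset.sum_add_distrib, ← integral_finsetSum _ fun a _ =>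
    integrable_carreDuChamp (hωU a) (hωU a), ← Finset.mul_sum,
    ← integral_finsetSum _ fun a _ => (hωU a).integrable_sq]
  simp only [sum_carreDuChamp_sphereCoord_mul hU, hsq]
  rw [integral_add (integrable_carreDuChamp hU hU) (hU.integrable_sq.const_mul _),
    integral_const_mul]
  ring

end QuadraticForm

section Centered

variable {U : 𝔼 n → ℝ}

/-- The center of mass of the density `|U| ^ critExp n` on the sphere is the origin. -/
def IsCentered (U : 𝔼 n → ℝ) : Prop := ∀ a, ∫ x, ω a x * |U x| ^ critExp n ∂(σ n) = 0

lemma critExp_sub_two_mul_yamabeConst (hn : 3 ≤ n) :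
    (critExp n - 2) * yamabeConst n = n := by
  have := (sub_two_pos hn).ne'
  unfold critExp yamabeConst
  field_simp
  ring

lemma exists_le_conformalEnergy_add (hn : 3 ≤ n) {ε : ℝ} (hε : 0 < ε) :
    ∃ t : ℝ, 0 < t ∧ ∀ (S : ℝ) (U : 𝔼 n → ℝ), 0 ≤ S → IsSobolevConst n S → IsAdmissible U →
      critIntegral U = 1 → IsCentered U → ∀ a,
      S * (1 + (critExp n - 1 - ε) * t ^ 2 * ∫ x, ω a x ^ 2 * |U x| ^ critExp n ∂(σ n))
        ≤ conformalEnergy U + t ^ 2 * conformalEnergy (fun y => ω a y * U y) := by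
  have hq := two_lt_critExp hn
  obtain ⟨t, ht, hrpow⟩ := exists_le_integral_abs_one_add_mul_rpow (α := 𝔼 n)
    (by linarith : 1 < critExp n) hε
  refine ⟨t, ht, fun S U hS hSob hU hU1 hcent a => ?_⟩
  obtain ⟨μ, _, hμ⟩ := exists_isProbabilityMeasure_integral_eq
    (fun x => Real.rpow_nonneg (abs_nonneg (U x)) (critExp n)) hU1
  have hωU := (isAdmissible_sphereCoord a).mul hU
  have hcrit (s : ℝ) : ∫ x, |1 + s * ω a x| ^ critExp n ∂μ
      = critIntegral fun y => U y + s * (ω a y * U y) := by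
    rw [hμ, critIntegral]
    congr with x
    rw [← Real.mul_rpow (abs_nonneg _) (abs_nonneg _), ← abs_mul]
    ring_nf
  have hω : Continuous (ω a : 𝔼 n → ℝ) := (isAdmissible_sphereCoord a).continuous
  have hplus := hrpow μ (ω a) hω.measurable (abs_sphereCoord_le_one a) (by rw [hμ, hcent a])
  have hminus := hrpow μ (fun x => -ω a x) hω.measurable.neg
    (fun x => by simpa using abs_sphereCoord_le_one a x)
    (by rw [integral_neg, hμ, hcent a, neg_zero])
  simp only [mul_neg, ← neg_mul, hcrit, neg_sq, hμ] at hplus hminus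
  have hpar := conformalEnergy_add_add_conformalEnergy_sub hU (hωU.const_mul t)
  rw [conformalEnergy_const_mul t hωU] at hpar
  have hSplus := hSob _ (hU.add (hωU.const_mul t))
  have hSminus := hSob _ (hU.add (hωU.const_mul (-t)))
  simp only [sub_eq_add_neg, ← neg_mul] at hpar hplus hminus
  have := mul_le_mul_of_nonneg_left (add_le_add hplus hminus) hS
  linarith

/-- Summing the coordinatewise estimates over the `n + 1` coordinates gains only
`n ∫ U²`, which `yamabeConst n` turns into a multiple of `conformalEnergy U - 𝓔 U U`. -/
lemma exists_mul_dirichletForm_le (hn : 3 ≤ n) {ε : ℝ} (hε : 0 < ε) :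
    ∃ t : ℝ, 0 < t ∧ ∀ (S : ℝ) (U : 𝔼 n → ℝ), 0 ≤ S → IsSobolevConst n S → IsAdmissible U →
      critIntegral U = 1 → IsCentered U →
      (critExp n - 2) * t ^ 2 * 𝓔 U U
        ≤ (n + 1 + (critExp n - 1) * t ^ 2) * (conformalEnergy U - S) + S * ε * t ^ 2 := by
  obtain ⟨t, ht, hcoord⟩ := exists_le_conformalEnergy_add hn hε
  refine ⟨t, ht, fun S U hS hSob hU hU1 hcent => ?_⟩
  have hmass : ∑ a, ∫ x, ω a x ^ 2 * |U x| ^ critExp n ∂(σ n) = 1 := by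
    rw [← integral_finsetSum]
    · simpa only [← Finset.sum_mul, sum_sphereCoord_sq, one_mul, critIntegral] using hU1
    · refine fun a _ => (hU.integrable_abs_rpow hn).bdd_mul (c := 1)
        ((isAdmissible_sphereCoord a).continuous.pow 2).aestronglyMeasurable
        (.of_forall fun x => ?_)
      simpa using abs_sphereCoord_le_one a x
  have hsum := Finset.sum_le_sum fun a (_ : a ∈ Finset.univ) => hcoord S U hS hSob hU hU1 hcent a
  simp only [Finset.sum_add_distrib, ← Finset.mul_sum, hmass,
    sum_conformalEnergy_sphereCoord_mul hU, Finset.sum_const, Finset.card_univ,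
    Fintype.card_option, Fintype.card_fin, nsmul_eq_mul] at hsum
  push_cast at hsum
  have hsq : n * ∫ x, U x ^ 2 ∂(σ n) = (critExp n - 2) * (conformalEnergy U - 𝓔 U U) := by
    rw [conformalEnergy, ← critExp_sub_two_mul_yamabeConst hn]; ring
  rw [hsq] at hsum
  linarith

lemma exists_dirichletForm_le_of_conformalEnergy_sub_le (hn : 3 ≤ n) {S : ℝ} (hS : 0 < S)
    (hSob : IsSobolevConst n S) {ε : ℝ} (hε : 0 < ε) :
    ∃ δ : ℝ, 0 < δ ∧ ∀ U : 𝔼 n → ℝ, IsAdmissible U → critIntegral U = 1 → IsCentered U →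
      conformalEnergy U - S ≤ δ → 𝓔 U U ≤ ε := by
  have hq2 : 0 < critExp n - 2 := sub_pos.2 (two_lt_critExp hn)
  have hq1 : 0 < critExp n - 1 := by linarith
  obtain ⟨t, ht, h⟩ := exists_mul_dirichletForm_le hn
    (show 0 < ε * (critExp n - 2) / (2 * S) by positivity)
  refine ⟨(critExp n - 2) * t ^ 2 * (ε / 2) / (n + 1 + (critExp n - 1) * t ^ 2), by positivity,
    fun U hU hU1 hcent hd => ?_⟩
  rw [le_div_iff₀' (by positivity)] at hd
  refine le_of_mul_le_mul_left ?_ (show 0 < (critExp n - 2) * t ^ 2 by positivity)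
  calc _ ≤ _ := h S U hS.le hSob hU hU1 hcent
    _ ≤ (critExp n - 2) * t ^ 2 * (ε / 2)
        + S * (ε * (critExp n - 2) / (2 * S)) * t ^ 2 := by gcongr
    _ = (critExp n - 2) * t ^ 2 * ε := by field_simp; ring

end Centered

/-! ### Harmonics of degree one -/

section LinearPart

variable {V W : 𝔼 n → ℝ}

lemma mul_integral_sq_le_dirichletForm (hn : 3 ≤ n) (hW : IsAdmissible W)
    (hW0 : ∫ x, W x ∂(σ n) = 0) : n * ∫ x, W x ^ 2 ∂(σ n) ≤ 𝓔 W W := by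
  have h := sphereEigenvalue_mul_integral_sq_le hn 1 hW fun w hw => by
    obtain ⟨c, rfl⟩ := mem_spherePolys_zero.1 hw
    simp [integral_const_mul, hW0]
  simpa [sphereEigenvalue] using h

lemma integral_sphereCoord (hn : 3 ≤ n) (a : Option (Fin n)) : ∫ x, ω a x ∂(σ n) = 0 := by
  have h := dirichletForm_sphereCoord hn a (isAdmissible_const 1)
  rw [dirichletForm_comm, dirichletForm_const_left] at h
  simpa [show n ≠ 0 by lia] using h.symm

lemma add_one_mul_integral_sphereCoord_mul (hn : 3 ≤ n) (a b : Option (Fin n)) :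
    (n + 1) * ∫ x, ω a x * ω b x ∂(σ n) = if a = b then (σ n).real Set.univ else 0 := by
  have h := dirichletForm_sphereCoord hn a (isAdmissible_sphereCoord b)
  simp only [dirichletForm, carreDuChamp_sphereCoord] at h
  rw [integral_sub (integrable_const _)
    ((isAdmissible_sphereCoord a).mul (isAdmissible_sphereCoord b)).integrable] at h
  simp only [integral_const, smul_eq_mul, mul_ite, mul_one, mul_zero] at h
  linarith

lemma dirichletForm_sum_left {ι : Type*} (s : Finset ι) {F : ι → 𝔼 n → ℝ}
    (hF : ∀ i, IsAdmissible (F i)) (hV : IsAdmissible V) :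
    𝓔 (fun x => ∑ i ∈ s, F i x) V = ∑ i ∈ s, 𝓔 (F i) V := by
  classical
  induction s using Finset.induction_on with
  | empty => simpa using dirichletForm_const_left 0 V
  | insert i s hi ih =>
    simp only [Finset.sum_insert hi]
    rw [dirichletForm_add_left (hF i) (.sum s hF) hV, ih]

/-- The `L²(σ)`-orthogonal projection of `W` onto the span of the coordinates `ω`. -/
def linearPart (W : 𝔼 n → ℝ) (x : 𝔼 n) : ℝ :=
  ∑ a, ((n + 1) / (σ n).real Set.univ * ∫ y, ω a y * W y ∂(σ n)) * ω a x

lemma isAdmissible_linearPart (W : 𝔼 n → ℝ) : IsAdmissible (linearPart W) :=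
  .sum _ fun a => (isAdmissible_sphereCoord a).const_mul _

lemma integral_linearPart_mul (W : 𝔼 n → ℝ) (hV : IsAdmissible V) :
    ∫ x, linearPart W x * V x ∂(σ n) = (n + 1) / (σ n).real Set.univ *
      ∑ a, (∫ x, ω a x * W x ∂(σ n)) * ∫ x, ω a x * V x ∂(σ n) := by
  simp only [linearPart, Finset.sum_mul, mul_assoc, Finset.mul_sum]
  rw [integral_finsetSum _ fun a _ =>
    ((((isAdmissible_sphereCoord a).mul hV).integrable.const_mul _).const_mul _)]
  simp only [integral_const_mul]

lemma dirichletForm_linearPart (hn : 3 ≤ n) (W : 𝔼 n → ℝ) (hV : IsAdmissible V) :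
    𝓔 (linearPart W) V = n * ∫ x, linearPart W x * V x ∂(σ n) := by
  have hω (a : Option (Fin n)) := isAdmissible_sphereCoord a
  rw [integral_linearPart_mul W hV]
  unfold linearPart
  rw [dirichletForm_sum_left _ (fun a => (hω a).const_mul _) hV, Finset.mul_sum, Finset.mul_sum]
  refine Finset.sum_congr rfl fun a _ => ?_
  rw [dirichletForm_const_mul_left _ (hω a), dirichletForm_sphereCoord hn a hV]
  ring

lemma integral_linearPart_mul_sphereCoord (hn : 3 ≤ n) (W : 𝔼 n → ℝ) (a : Option (Fin n)) :
    ∫ x, linearPart W x * ω a x ∂(σ n) = ∫ x, W x * ω a x ∂(σ n) := by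
  have hA : (σ n).real Set.univ ≠ 0 := sphereMeasure_real_univ_pos.ne'
  have hω (b : Option (Fin n)) : ∫ x, ω b x * ω a x ∂(σ n)
      = if b = a then (σ n).real Set.univ / (n + 1) else 0 := by
    have := add_one_mul_integral_sphereCoord_mul hn b a
    split_ifs at this ⊢
    · rw [eq_div_iff (by positivity), mul_comm, this]
    · exact (mul_eq_zero.1 this).resolve_left (by positivity)
  rw [integral_linearPart_mul W (isAdmissible_sphereCoord a)]
  simp only [hω, mul_ite, mul_zero, Finset.sum_ite_eq', Finset.mem_univ, if_true, mul_comm (W _)]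
  field_simp

lemma integral_linearPart (hn : 3 ≤ n) (W : 𝔼 n → ℝ) : ∫ x, linearPart W x ∂(σ n) = 0 := by
  have h := integral_linearPart_mul W (isAdmissible_const 1)
  simpa only [mul_one, integral_sphereCoord hn, mul_zero, Finset.sum_const_zero] using h

lemma integral_mul_sub_linearPart_eq_zero (hn : 3 ≤ n) (hW : IsAdmissible W)
    (hW0 : ∫ x, W x ∂(σ n) = 0) {w : BoundedContinuousFunction (𝔼 n) ℝ}
    (hw : w ∈ spherePolys n 1) : ∫ x, w x * (W x - linearPart W x) ∂(σ n) = 0 := by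
  have hY := hW.sub (isAdmissible_linearPart W)
  have hadm {f} (hf : f ∈ affinePolys n) : IsAdmissible f :=
    isAdmissible_of_mem_spherePolys (k := 1) (by rwa [spherePolys_one])
  rw [spherePolys_one] at hw
  induction hw using Submodule.span_induction with
  | mem f hf =>
    obtain rfl | ⟨a, rfl⟩ := hf
    · simp [integral_sub hW.integrable (isAdmissible_linearPart W).integrable, hW0,
        integral_linearPart hn]
    · have hω := isAdmissible_sphereCoord a
      simp only [sphereCoordBCF_apply, mul_comm (ω a _), sub_mul]
      rw [integral_sub (hW.mul hω).integrable ((isAdmissible_linearPart W).mul hω).integrable,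
        integral_linearPart_mul_sphereCoord hn, sub_self]
  | zero => simp
  | add f g hf hg ihf ihg =>
    simp only [BoundedContinuousFunction.coe_add, Pi.add_apply, add_mul]
    rw [integral_add ((hadm hf).mul hY).integrable ((hadm hg).mul hY).integrable, ihf, ihg,
      add_zero]
  | smul c f _ ih =>
    simp only [BoundedContinuousFunction.coe_smul, smul_eq_mul, mul_assoc]
    rw [integral_const_mul, ih, mul_zero]

lemma integral_linearPart_mul_self (hn : 3 ≤ n) (hW : IsAdmissible W) :
    ∫ x, linearPart W x * W x ∂(σ n) = ∫ x, linearPart W x ^ 2 ∂(σ n) := by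
  simp only [sq]
  rw [integral_linearPart_mul W hW, integral_linearPart_mul W (isAdmissible_linearPart W)]
  simp only [mul_comm (ω _ _) (linearPart W _), integral_linearPart_mul_sphereCoord hn,
    mul_comm (W _)]

lemma dirichletForm_sub_linearPart (hn : 3 ≤ n) (hW : IsAdmissible W) :
    𝓔 (fun x => W x - linearPart W x) (fun x => W x - linearPart W x)
      = 𝓔 W W - n * ∫ x, linearPart W x ^ 2 ∂(σ n) := by
  have hP := isAdmissible_linearPart W
  rw [dirichletForm_sub_left hW hP (hW.sub hP), dirichletForm_sub_right hW hP hW,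
    dirichletForm_sub_right hW hP hP, dirichletForm_comm W (linearPart W),
    dirichletForm_linearPart hn W hW, dirichletForm_linearPart hn W hP,
    integral_linearPart_mul_self hn hW]
  simp only [← sq]
  ring

lemma integral_sub_linearPart_sq (hn : 3 ≤ n) (hW : IsAdmissible W) :
    ∫ x, (W x - linearPart W x) ^ 2 ∂(σ n)
      = ∫ x, W x ^ 2 ∂(σ n) - ∫ x, linearPart W x ^ 2 ∂(σ n) := by
  have hP := isAdmissible_linearPart W
  have hsplit (x : 𝔼 n) : (W x - linearPart W x) ^ 2
      = W x ^ 2 - 2 * (linearPart W x * W x) + linearPart W x ^ 2 := by ring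
  have hcross := (hP.mul hW).integrable.const_mul 2
  have hdiff : Integrable (fun x => W x ^ 2 - 2 * (linearPart W x * W x)) (σ n) :=
    hW.integrable_sq.sub hcross
  simp only [hsplit]
  rw [integral_add hdiff hP.integrable_sq,
    integral_sub hW.integrable_sq hcross, integral_const_mul, integral_linearPart_mul_self hn hW]
  ring

/-- The form `𝓔 - n ∫` vanishes on harmonics of degree one and dominates `𝓔 / 2` on their
complement, where the spectral gap is `2 (n + 1) ≥ 2 n`. -/
lemma half_mul_dirichletForm_sub_le (hn : 3 ≤ n) (hW : IsAdmissible W)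
    (hW0 : ∫ x, W x ∂(σ n) = 0) :
    1 / 2 * 𝓔 W W - n * (n + 1) / (2 * (σ n).real Set.univ) *
        ∑ a, (∫ x, ω a x * W x ∂(σ n)) ^ 2
      ≤ 𝓔 W W - n * ∫ x, W x ^ 2 ∂(σ n) := by
  have hP := isAdmissible_linearPart W
  have hgap := sphereEigenvalue_mul_integral_sq_le hn 2 (hW.sub hP) fun w hw =>
    integral_mul_sub_linearPart_eq_zero hn hW hW0 hw
  have hnonneg : 0 ≤ ∫ x, (W x - linearPart W x) ^ 2 ∂(σ n) :=
    integral_nonneg fun x => sq_nonneg _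
  have hlinear : n * (n + 1) / (2 * (σ n).real Set.univ) *
      ∑ a, (∫ x, ω a x * W x ∂(σ n)) ^ 2 = n / 2 * ∫ x, linearPart W x ^ 2 ∂(σ n) := by
    rw [← integral_linearPart_mul_self hn hW, integral_linearPart_mul W hW]
    simp only [← sq]
    ring
  rw [dirichletForm_sub_linearPart hn hW, integral_sub_linearPart_sq hn hW] at hgap
  rw [integral_sub_linearPart_sq hn hW] at hnonneg
  norm_num [sphereEigenvalue] at hgap
  linarith

end LinearPart

/-! ### Stability near constants -/

section Perturbation

lemma exists_abs_one_add_rpow_le {q : ℝ} (hq : 1 < q) {η : ℝ} (hη : 0 < η) :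
    ∃ C : ℝ, 0 ≤ C ∧ ∀ s : ℝ,
      |1 + s| ^ q ≤ 1 + q * s + (q * (q - 1) / 2 + η) * s ^ 2 + C * |s| ^ q := by
  obtain ⟨r, hr, hr1, hTaylor⟩ : ∃ r : ℝ, 0 < r ∧ r ≤ 1 ∧ ∀ s, |s| < r →
      |(1 + s) ^ q - 1 - q * s - q * (q - 1) / 2 * s ^ 2| ≤ η * s ^ 2 := by
    obtain ⟨r, hr, h⟩ :=
      Metric.eventually_nhds_iff.1 (eventually_abs_one_add_rpow_sub_quadratic_le q hη)
    exact ⟨min r 1, by positivity, min_le_right _ _,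
      fun s hs => h (by simpa using hs.trans_le (min_le_left _ _))⟩
  have : 0 < q * (q - 1) := mul_pos (by linarith) (by linarith)
  refine ⟨(1 + q) * (1 / r + 1) ^ q, by positivity, fun s => ?_⟩
  rcases lt_or_ge |s| r with hs | hs
  · have hs1 : 0 < 1 + s := by linarith [(abs_lt.1 hs).1]
    have hrem : 0 ≤ (1 + q) * (1 / r + 1) ^ q * |s| ^ q := by positivity
    rw [abs_of_pos hs1]
    linarith [(abs_le.1 (hTaylor s hs)).2]
  · have hlarge : (1 + |s|) ^ q ≤ (1 / r + 1) ^ q * |s| ^ q := by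
      rw [← Real.mul_rpow (by positivity) (abs_nonneg _)]
      refine Real.rpow_le_rpow (by positivity) ?_ (by linarith)
      linarith [show 1 ≤ 1 / r * |s| by rwa [div_mul_eq_mul_div, one_mul, one_le_div hr]]
    have hpow : |1 + s| ^ q ≤ (1 + |s|) ^ q :=
      Real.rpow_le_rpow (abs_nonneg _) (by simpa using abs_add_le 1 s) (by linarith)
    have hlin : 1 + |s| ≤ (1 + |s|) ^ q := Real.self_le_rpow_of_one_le (by simp) hq.le
    have hquad : 0 ≤ (q * (q - 1) / 2 + η) * s ^ 2 := by positivity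
    have hneg := mul_le_mul_of_nonneg_left (neg_abs_le s) (by linarith : 0 ≤ q)
    have hbase := mul_le_mul_of_nonneg_left (hlin.trans hlarge) (by linarith : 0 ≤ q)
    linarith

lemma one_add_mul_le_abs_one_add_rpow {q : ℝ} (hq : 1 ≤ q) (s : ℝ) :
    1 + q * s ≤ |1 + s| ^ q := by
  rcases le_or_gt (-1) s with h | h
  · rw [abs_of_nonneg (by linarith)]
    exact one_add_mul_self_le_rpow_one_add h hq
  · have : 0 ≤ |1 + s| ^ q := by positivity
    nlinarith

lemma exists_forall_mul_sq_add_rpow_le {p c : ℝ} (hp : 1 < p) (hc : 0 < c) (M a b d : ℝ) :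
    ∃ ε : ℝ, 0 < ε ∧ ∀ θ, 0 ≤ θ → θ ≤ ε →
      M * (a * θ + b * θ ^ p) ^ 2 + d * θ ^ p ≤ c * θ := by
  have hcont : Continuous fun θ : ℝ =>
      M * θ * (a + b * θ ^ (p - 1)) ^ 2 + d * θ ^ (p - 1) := by
    have := Real.continuous_rpow_const (q := p - 1) (by linarith)
    fun_prop
  have hlim := hcont.tendsto 0
  simp only [Real.zero_rpow (by linarith : p - 1 ≠ 0), mul_zero, zero_mul, add_zero] at hlim
  obtain ⟨ε, hε, h⟩ := Metric.eventually_nhds_iff.1 (hlim.eventually_le_const hc)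
  refine ⟨ε / 2, by positivity, fun θ hθ hθε => ?_⟩
  have hθp : θ ^ p = θ * θ ^ (p - 1) := by
    rw [← Real.rpow_one_add' hθ (by linarith), add_sub_cancel]
  have hle := h (y := θ) (by rw [Real.dist_0_eq_abs, abs_of_nonneg hθ]; linarith)
  calc _ = (M * θ * (a + b * θ ^ (p - 1)) ^ 2 + d * θ ^ (p - 1)) * θ := by rw [hθp]; ring
    _ ≤ c * θ := by gcongr

end Perturbation

/-- The Sobolev quotient `conformalEnergy U / critIntegral U ^ (2 / critExp n)` of `U = 1`. -/
def sobolevConst (n : ℕ) : ℝ :=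
  yamabeConst n * (σ n).real Set.univ ^ (1 - 2 / critExp n)

/-- The sharp Sobolev deficit on the sphere. -/
def sobolevDeficit (U : 𝔼 n → ℝ) : ℝ :=
  conformalEnergy U - sobolevConst n * critIntegral U ^ (2 / critExp n)

section NearConstants

variable {U W : 𝔼 n → ℝ}

lemma sobolevConst_pos (hn : 3 ≤ n) : 0 < sobolevConst n :=
  mul_pos (yamabeConst_pos hn) (Real.rpow_pos_of_pos sphereMeasure_real_univ_pos _)

lemma conformalEnergy_const_add (hW : IsAdmissible W) (hW0 : ∫ x, W x ∂(σ n) = 0) (c : ℝ) :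
    conformalEnergy (fun x => c + W x)
      = yamabeConst n * c ^ 2 * (σ n).real Set.univ + conformalEnergy W := by
  have hsplit (x : 𝔼 n) : (c + W x) ^ 2 = c ^ 2 + 2 * c * W x + W x ^ 2 := by ring
  have hlin : Integrable (fun x => c ^ 2 + 2 * c * W x) (σ n) :=
    (integrable_const _).add (hW.integrable.const_mul _)
  unfold conformalEnergy
  simp only [hsplit]
  rw [dirichletForm_add_self (isAdmissible_const c) hW, dirichletForm_const_left,
    dirichletForm_const_left, integral_add hlin hW.integrable_sq,
    integral_add (integrable_const _) (hW.integrable.const_mul _), integral_const_mul, hW0,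
    integral_const, smul_eq_mul]
  ring

lemma conformalEnergy_nonneg (hn : 3 ≤ n) (W : 𝔼 n → ℝ) : 0 ≤ conformalEnergy W :=
  add_nonneg (dirichletForm_self_nonneg W)
    (mul_nonneg (yamabeConst_pos hn).le (integral_nonneg fun _ => sq_nonneg _))

lemma integral_sq_le_div (hn : 3 ≤ n) (W : 𝔼 n → ℝ) :
    ∫ x, W x ^ 2 ∂(σ n) ≤ 1 / yamabeConst n * conformalEnergy W := by
  rw [one_div, ← div_eq_inv_mul, le_div_iff₀' (yamabeConst_pos hn), conformalEnergy]
  linarith [dirichletForm_self_nonneg W]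

lemma exists_critIntegral_le (hn : 3 ≤ n) : ∃ K : ℝ, 0 < K ∧ ∀ W : 𝔼 n → ℝ, IsAdmissible W →
    critIntegral W ≤ K * conformalEnergy W ^ (critExp n / 2) := by
  obtain ⟨S, hS, hSob⟩ := exists_isSobolevConst hn
  have hq := critExp_pos hn
  refine ⟨(1 / S) ^ (critExp n / 2), by positivity, fun W hW => ?_⟩
  have hle : critIntegral W ^ (2 / critExp n) ≤ 1 / S * conformalEnergy W := by
    rw [one_div, ← div_eq_inv_mul, le_div_iff₀' hS]
    exact hSob W hW
  have hI := critIntegral_nonneg W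
  calc critIntegral W = (critIntegral W ^ (2 / critExp n)) ^ (critExp n / 2) := by
        rw [← Real.rpow_mul hI, div_mul_div_cancel₀ hq.ne', div_self two_ne_zero, Real.rpow_one]
    _ ≤ (1 / S * conformalEnergy W) ^ (critExp n / 2) := by gcongr
    _ = _ := Real.mul_rpow (by positivity) (conformalEnergy_nonneg hn W)

/-- Centering makes the first moments quadratically small: only the remainder of the first-order
expansion of `|1 + W| ^ critExp n` contributes to them. -/
lemma exists_abs_integral_sphereCoord_mul_le (hn : 3 ≤ n) : ∃ K : ℝ, 0 ≤ K ∧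
    ∀ W : 𝔼 n → ℝ, IsAdmissible W → IsCentered (fun x => 1 + W x) → ∀ a,
      |∫ x, ω a x * W x ∂(σ n)| ≤ K * (∫ x, W x ^ 2 ∂(σ n) + critIntegral W) := by
  have hq := two_lt_critExp hn
  obtain ⟨C, hC, hbound⟩ :=
    exists_abs_one_add_rpow_le (by linarith : 1 < critExp n) one_pos
  set q := critExp n
  set K := max (q * (q - 1) / 2 + 1) C
  refine ⟨K / q, by positivity, fun W hW hcent a => ?_⟩
  have hω := isAdmissible_sphereCoord a
  have hV : IsAdmissible fun x => 1 + W x := (isAdmissible_const 1).add hW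
  have hrem (x : 𝔼 n) : ‖ω a x * (|1 + W x| ^ q - 1 - q * W x)‖
      ≤ K * W x ^ 2 + K * |W x| ^ q := by
    have hbernoulli := one_add_mul_le_abs_one_add_rpow (by linarith : 1 ≤ q) (W x)
    have hquad : (q * (q - 1) / 2 + 1) * W x ^ 2 ≤ K * W x ^ 2 := by gcongr; exact le_max_left _ _
    have hp : C * |W x| ^ q ≤ K * |W x| ^ q := by gcongr; exact le_max_right _ _
    rw [norm_mul, Real.norm_of_nonneg (by linarith : 0 ≤ |1 + W x| ^ q - 1 - q * W x)]
    refine (mul_le_of_le_one_left (by linarith) (abs_sphereCoord_le_one a x)).trans ?_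
    linarith [hbound (W x)]
  have hmoment : ∫ x, ω a x * (|1 + W x| ^ q - 1 - q * W x) ∂(σ n)
      = -(q * ∫ x, ω a x * W x ∂(σ n)) := by
    have hωV : Integrable (fun x => ω a x * |1 + W x| ^ q) (σ n) :=
      (hV.integrable_abs_rpow hn).bdd_mul (c := 1) hω.continuous.aestronglyMeasurable
        (.of_forall (abs_sphereCoord_le_one a))
    have hωV1 : Integrable (fun x => ω a x * |1 + W x| ^ q - ω a x) (σ n) := hωV.sub hω.integrable
    simp only [mul_sub, mul_one, mul_left_comm _ q]
    rw [integral_sub hωV1 ((hω.mul hW).integrable.const_mul q), integral_sub hωV hω.integrable,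
      hcent a, integral_sphereCoord hn, integral_const_mul]
    ring
  have hW2 := hW.integrable_sq.const_mul K
  have hWq := (hW.integrable_abs_rpow hn).const_mul K
  have hle := norm_integral_le_of_norm_le (hW2.add hWq) (.of_forall hrem)
  rw [hmoment, norm_neg, Real.norm_eq_abs, abs_mul, abs_of_pos (critExp_pos hn)] at hle
  simp only [Pi.add_apply] at hle
  rw [integral_add hW2 hWq, integral_const_mul, integral_const_mul, ← mul_add] at hle
  rwa [div_mul_eq_mul_div, le_div_iff₀' (critExp_pos hn)]

lemma exists_sum_integral_sphereCoord_mul_sq_le (hn : 3 ≤ n) : ∃ K : ℝ, 0 ≤ K ∧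
    ∀ W : 𝔼 n → ℝ, IsAdmissible W → IsCentered (fun x => 1 + W x) →
      ∑ a, (∫ x, ω a x * W x ∂(σ n)) ^ 2 ≤ K * (∫ x, W x ^ 2 ∂(σ n) + critIntegral W) ^ 2 := by
  obtain ⟨K, -, hK⟩ := exists_abs_integral_sphereCoord_mul_le hn
  refine ⟨(n + 1) * K ^ 2, by positivity, fun W hW hcent => ?_⟩
  calc _ ≤ ∑ _a : Option (Fin n), (K * (∫ x, W x ^ 2 ∂(σ n) + critIntegral W)) ^ 2 :=
        Finset.sum_le_sum fun a _ =>
          sq_le_sq' (abs_le.1 (hK W hW hcent a)).1 (abs_le.1 (hK W hW hcent a)).2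
    _ = _ := by simp [mul_pow, mul_assoc]

lemma exists_critIntegral_one_add_le (hn : 3 ≤ n) {η : ℝ} (hη : 0 < η) : ∃ C : ℝ, 0 ≤ C ∧
    ∀ W : 𝔼 n → ℝ, IsAdmissible W → ∫ x, W x ∂(σ n) = 0 →
      critIntegral (fun x => 1 + W x) ≤ (σ n).real Set.univ +
        ((critExp n * (critExp n - 1) / 2 + η) * ∫ x, W x ^ 2 ∂(σ n) + C * critIntegral W) := by
  have hq := two_lt_critExp hn
  obtain ⟨C, hC, hbound⟩ := exists_abs_one_add_rpow_le (by linarith : 1 < critExp n) hη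
  refine ⟨C, hC, fun W hW hW0 => ?_⟩
  have hV : IsAdmissible fun x => 1 + W x := (isAdmissible_const 1).add hW
  have hlin : Integrable (fun x => 1 + critExp n * W x) (σ n) :=
    (integrable_const 1).add (hW.integrable.const_mul _)
  have hquad := hW.integrable_sq.const_mul (critExp n * (critExp n - 1) / 2 + η)
  have hTaylor : Integrable (fun x => 1 + critExp n * W x
      + (critExp n * (critExp n - 1) / 2 + η) * W x ^ 2) (σ n) := hlin.add hquad
  have hrem := (hW.integrable_abs_rpow hn).const_mul C
  refine (integral_mono (hV.integrable_abs_rpow hn) (hTaylor.add hrem)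
    fun x => hbound (W x)).trans_eq ?_
  simp only [Pi.add_apply]
  rw [integral_add hTaylor hrem, integral_add hlin hquad,
    integral_add (integrable_const 1) (hW.integrable.const_mul _)]
  simp only [integral_const_mul, hW0, integral_const, smul_eq_mul, critIntegral]
  ring

/-- The coefficient `yamabeConst n + n` equals `yamabeConst n * (critExp n - 1)`, the second
variation of `sobolevConst n * critIntegral U ^ (2 / critExp n)` at `U = 1`. -/
lemma exists_sobolevConst_mul_le (hn : 3 ≤ n) {η : ℝ} (hη : 0 < η) : ∃ C : ℝ, 0 ≤ C ∧
    ∀ W : 𝔼 n → ℝ, IsAdmissible W → ∫ x, W x ∂(σ n) = 0 →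
      sobolevConst n * critIntegral (fun x => 1 + W x) ^ (2 / critExp n)
        ≤ yamabeConst n * (σ n).real Set.univ +
          (yamabeConst n + n + η) * ∫ x, W x ^ 2 ∂(σ n) + C * critIntegral W := by
  have hq := two_lt_critExp hn
  have hκ := yamabeConst_pos hn
  have hκq := critExp_sub_two_mul_yamabeConst hn
  have hA : 0 < (σ n).real Set.univ := sphereMeasure_real_univ_pos
  set q := critExp n
  set κ := yamabeConst n
  set A := (σ n).real Set.univ
  have hη' : 0 < q / (2 * κ) * η := by positivity
  obtain ⟨C, hC, hbound⟩ := exists_critIntegral_one_add_le hn hη'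
  refine ⟨2 * κ / q * C, by positivity, fun W hW hW0 => ?_⟩
  set y := (q * (q - 1) / 2 + q / (2 * κ) * η) * ∫ x, W x ^ 2 ∂(σ n) + C * critIntegral W
    with hy_def
  have hy : 0 ≤ y := by
    have hI := critIntegral_nonneg W
    have hq1 : 0 < q - 1 := by linarith
    positivity
  have hpow : critIntegral (fun x => 1 + W x) ^ (2 / q) ≤ A ^ (2 / q) * (1 + 2 / q * (y / A)) := by
    calc _ ≤ (A + y) ^ (2 / q) :=
          Real.rpow_le_rpow (critIntegral_nonneg _) (hbound W hW hW0) (by positivity)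
      _ = A ^ (2 / q) * (1 + y / A) ^ (2 / q) := by
          rw [← Real.mul_rpow hA.le (by positivity)]; congr 1; field_simp
      _ ≤ _ := by
          gcongr
          refine rpow_one_add_le_one_add_mul_self ?_ (by positivity) ?_
          · linarith [show 0 ≤ y / A by positivity]
          · rw [div_le_one (by linarith)]; exact hq.le
  have hAA : A ^ (1 - 2 / q) * A ^ (2 / q) = A := by rw [← Real.rpow_add hA]; simp
  calc _ ≤ sobolevConst n * (A ^ (2 / q) * (1 + 2 / q * (y / A))) :=
        mul_le_mul_of_nonneg_left hpow (sobolevConst_pos hn).le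
    _ = κ * (A ^ (1 - 2 / q) * A ^ (2 / q)) * (1 + 2 / q * (y / A)) := by
        rw [sobolevConst]; ring
    _ = κ * A + 2 * κ / q * y := by rw [hAA]; field_simp
    _ = _ := by rw [hy_def, show (n : ℝ) = (q - 2) * κ from hκq.symm]; field_simp; ring

lemma div_mul_conformalEnergy_le (hn : 3 ≤ n) (hW : IsAdmissible W)
    (hW0 : ∫ x, W x ∂(σ n) = 0) :
    n / (n + yamabeConst n) * conformalEnergy W ≤ 𝓔 W W := by
  have hκ := yamabeConst_pos hn
  have := mul_le_mul_of_nonneg_left (mul_integral_sq_le_dirichletForm hn hW hW0) hκ.le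
  rw [div_mul_eq_mul_div, div_le_iff₀ (by positivity), conformalEnergy]
  linarith

lemma exists_mul_conformalEnergy_le_sobolevDeficit_one_add (hn : 3 ≤ n) :
    ∃ ε δ : ℝ, 0 < ε ∧ 0 < δ ∧ ∀ W : 𝔼 n → ℝ, IsAdmissible W → ∫ x, W x ∂(σ n) = 0 →
      IsCentered (fun x => 1 + W x) → conformalEnergy W ≤ ε →
        δ * conformalEnergy W ≤ sobolevDeficit fun x => 1 + W x := by
  have hq := two_lt_critExp hn
  have hκ := yamabeConst_pos hn
  have hA : 0 < (σ n).real Set.univ := sphereMeasure_real_univ_pos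
  set κ := yamabeConst n
  obtain ⟨c, hc, hpoincare⟩ : ∃ c : ℝ, 0 < c ∧ ∀ W : 𝔼 n → ℝ, IsAdmissible W →
      ∫ x, W x ∂(σ n) = 0 → c * conformalEnergy W ≤ 𝓔 W W :=
    ⟨n / (n + κ), div_pos (by norm_cast; lia) (by positivity),
      fun W hW hW0 => div_mul_conformalEnergy_le hn hW hW0⟩
  obtain ⟨K, hK, hmoments⟩ := exists_sum_integral_sphereCoord_mul_sq_le hn
  obtain ⟨C, hC, hcrit⟩ := exists_sobolevConst_mul_le hn (by positivity : 0 < κ * (c / 8))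
  obtain ⟨L, _, hJ⟩ := exists_critIntegral_le hn
  obtain ⟨ε, hε, hsmall⟩ := exists_forall_mul_sq_add_rpow_le (by linarith : 1 < critExp n / 2)
    (by positivity : 0 < c / 8) (n * (n + 1) / (2 * (σ n).real Set.univ) * K) (1 / κ) L (C * L)
  refine ⟨ε, c / 4, hε, by positivity, fun W hW hW0 hcent hWε => ?_⟩
  have hB : 0 ≤ ∫ x, W x ^ 2 ∂(σ n) := integral_nonneg fun x => sq_nonneg _
  have hlinear : n * (n + 1) / (2 * (σ n).real Set.univ) *
      ∑ a, (∫ x, ω a x * W x ∂(σ n)) ^ 2 ≤ n * (n + 1) / (2 * (σ n).real Set.univ) * K *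
        (1 / κ * conformalEnergy W + L * conformalEnergy W ^ (critExp n / 2)) ^ 2 := by
    rw [mul_assoc _ K]
    gcongr
    have hsum := add_le_add (integral_sq_le_div hn W) (hJ W hW)
    have hsum0 := add_nonneg hB (critIntegral_nonneg W)
    exact (hmoments W hW hcent).trans (by gcongr)
  have hquad : κ * (c / 8) * ∫ x, W x ^ 2 ∂(σ n) ≤ c / 8 * conformalEnergy W := by
    rw [conformalEnergy, mul_comm κ, mul_assoc]
    gcongr
    exact le_add_of_nonneg_left (dirichletForm_self_nonneg W)
  have hrem := mul_le_mul_of_nonneg_left (hJ W hW) hC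
  have henergy : conformalEnergy W = 𝓔 W W + κ * ∫ x, W x ^ 2 ∂(σ n) := rfl
  rw [sobolevDeficit, conformalEnergy_const_add hW hW0]
  linarith [hpoincare W hW hW0, half_mul_dirichletForm_sub_le hn hW hW0, hcrit W hW hW0,
    hsmall _ (conformalEnergy_nonneg hn W) hWε]

lemma IsCentered.const_mul (hU : IsCentered U) (c : ℝ) : IsCentered fun x => c * U x := fun a => by
  simp only [abs_mul, Real.mul_rpow (abs_nonneg _) (abs_nonneg _),
    mul_left_comm (ω a _) (|c| ^ critExp n)]
  rw [integral_const_mul, hU a, mul_zero]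

lemma sobolevDeficit_const_mul (hn : 3 ≤ n) (c : ℝ) (hU : IsAdmissible U) :
    sobolevDeficit (fun x => c * U x) = c ^ 2 * sobolevDeficit U := by
  rw [sobolevDeficit, sobolevDeficit, conformalEnergy_const_mul c hU, critIntegral_const_mul,
    Real.mul_rpow (by positivity) (critIntegral_nonneg U), ← Real.rpow_mul (abs_nonneg c),
    mul_div_cancel₀ _ (critExp_pos hn).ne', Real.rpow_two, sq_abs]
  ring

lemma exists_mul_conformalEnergy_le_sobolevDeficit_const_add (hn : 3 ≤ n) :
    ∃ ε δ : ℝ, 0 < ε ∧ 0 < δ ∧ ∀ (c : ℝ) (W : 𝔼 n → ℝ), 0 < c ^ 2 → IsAdmissible W →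
      ∫ x, W x ∂(σ n) = 0 → IsCentered (fun x => c + W x) → conformalEnergy W ≤ ε * c ^ 2 →
        δ * conformalEnergy W ≤ sobolevDeficit fun x => c + W x := by
  obtain ⟨ε, δ, hε, hδ, h⟩ := exists_mul_conformalEnergy_le_sobolevDeficit_one_add hn
  refine ⟨ε, δ, hε, hδ, fun c W hc hW hW0 hcent hWε => ?_⟩
  have hc0 : c ≠ 0 := by rintro rfl; simp at hc
  have hscale : (fun x => 1 + c⁻¹ * W x) = fun x => c⁻¹ * (c + W x) := by
    ext x; field_simp
  have hle := h (fun x => c⁻¹ * W x) (hW.const_mul _) (by rw [integral_const_mul, hW0, mul_zero])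
    (by rw [hscale]; exact hcent.const_mul _)
    (by rwa [conformalEnergy_const_mul _ hW, inv_pow, ← div_eq_inv_mul, div_le_iff₀ hc])
  rw [hscale, sobolevDeficit_const_mul hn _ ((isAdmissible_const c).add hW),
    conformalEnergy_const_mul _ hW, mul_left_comm] at hle
  exact le_of_mul_le_mul_left hle (by positivity)

lemma dirichletForm_sub_const (hU : IsAdmissible U) (c : ℝ) :
    𝓔 (fun x => U x - c) (fun x => U x - c) = 𝓔 U U := by
  have hc := isAdmissible_const (n := n) c
  rw [dirichletForm_sub_left hU hc (hU.sub hc), dirichletForm_const_left,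
    dirichletForm_sub_right hU hc hU, dirichletForm_comm U fun _ => c, dirichletForm_const_left,
    sub_zero, sub_zero]

lemma conformalEnergy_sub_average_le (hn : 3 ≤ n) (hU : IsAdmissible U) :
    conformalEnergy (fun x => U x - ⨍ y, U y ∂(σ n)) ≤ (1 + yamabeConst n / n) * 𝓔 U U := by
  have hκ := yamabeConst_pos hn
  have h := mul_integral_sq_le_dirichletForm hn (hU.sub (isAdmissible_const _))
    (integral_sub_average (σ n) U)
  rw [dirichletForm_sub_const hU, ← le_div_iff₀' (by norm_cast; lia)] at h
  rw [conformalEnergy, dirichletForm_sub_const hU]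
  calc _ ≤ 𝓔 U U + yamabeConst n * (𝓔 U U / n) := by gcongr
    _ = _ := by ring

/-- By `exists_dirichletForm_le_of_conformalEnergy_sub_le` a near-optimal centered function is close
to its average, which is therefore bounded away from `0`. -/
lemma exists_mul_conformalEnergy_sub_le_of_critIntegral_eq_one (hn : 3 ≤ n) {S : ℝ} (hS : 0 < S)
    (hSob : IsSobolevConst n S) : ∃ ε δ : ℝ, 0 < ε ∧ 0 < δ ∧
      ∀ U : 𝔼 n → ℝ, IsAdmissible U → critIntegral U = 1 → IsCentered U →
        conformalEnergy U - S ≤ ε →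
          ∃ c : ℝ, δ * conformalEnergy (fun x => U x - c) ≤ sobolevDeficit U := by
  have hκ := yamabeConst_pos hn
  have hA : 0 < (σ n).real Set.univ := sphereMeasure_real_univ_pos
  obtain ⟨ε₀, δ, hε₀, hδ, hlocal⟩ := exists_mul_conformalEnergy_le_sobolevDeficit_const_add hn
  set κ := yamabeConst n
  set A := (σ n).real Set.univ
  obtain ⟨ε, hε, hflat⟩ := exists_dirichletForm_le_of_conformalEnergy_sub_le hn hS hSob
    (by positivity : 0 < min (S / 2) (ε₀ * (S / (2 * κ * A))) / (1 + κ / n))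
  refine ⟨ε, δ, hε, hδ, fun U hU hU1 hcent hUε => ⟨⨍ y, U y ∂(σ n), ?_⟩⟩
  set c := ⨍ y, U y ∂(σ n)
  set W : 𝔼 n → ℝ := fun x => U x - c
  have hW : IsAdmissible W := hU.sub (isAdmissible_const c)
  have hW0 : ∫ x, W x ∂(σ n) = 0 := integral_sub_average (σ n) U
  have hcW : (fun x => c + W x) = U := by ext x; exact add_sub_cancel c (U x)
  have hWle : conformalEnergy W ≤ min (S / 2) (ε₀ * (S / (2 * κ * A))) := by
    have h := hflat U hU hU1 hcent hUε
    rw [le_div_iff₀' (by positivity)] at h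
    exact (conformalEnergy_sub_average_le hn hU).trans h
  obtain ⟨hWS, hWε₀⟩ := le_min_iff.1 hWle
  have hc : S / (2 * κ * A) ≤ c ^ 2 := by
    have hUE : conformalEnergy U = κ * c ^ 2 * A + conformalEnergy W := by
      rw [← conformalEnergy_const_add hW hW0, hcW]
    have hSU : S ≤ conformalEnergy U := by simpa [hU1] using hSob U hU
    rw [div_le_iff₀ (by positivity)]
    linarith
  have h := hlocal c W (hc.trans_lt' (by positivity)) hW hW0 (by rwa [hcW])
    (hWε₀.trans (by gcongr))
  rwa [hcW] at h

end NearConstants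

/-! ### Conformal centering -/

/-- Up to a factor independent of `x`, the reciprocal of the conformal factor at
`exp s • (x - z)`, for `p = (s, z)`. -/
def centeringWeight (p : ℝ × 𝔼 n) (x : 𝔼 n) : ℝ :=
  Real.exp (-p.1) + Real.exp p.1 * ‖x - p.2‖ ^ 2

/-- A function of the dilation `exp s` and the translation `z`, `p = (s, z)`, whose critical points
are the conformal maps that move the centre of mass of the density `f` to the origin. -/
def centeringFunctional (f : 𝔼 n → ℝ) (p : ℝ × 𝔼 n) : ℝ :=
  ∫ x, f x * Real.log (centeringWeight p x)

lemma centeringWeight_pos (p : ℝ × 𝔼 n) (x : 𝔼 n) : 0 < centeringWeight p x := by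
  unfold centeringWeight; positivity

lemma continuous_log_centeringWeight :
    Continuous fun q : (ℝ × 𝔼 n) × 𝔼 n => Real.log (centeringWeight q.1 q.2) :=
  Continuous.log (by unfold centeringWeight; fun_prop) fun _ => (centeringWeight_pos _ _).ne'

lemma neg_fst_le_log_centeringWeight (p : ℝ × 𝔼 n) (x : 𝔼 n) :
    -p.1 ≤ Real.log (centeringWeight p x) := by
  rw [Real.le_log_iff_exp_le (centeringWeight_pos p x)]
  exact le_add_of_nonneg_right (by positivity)

lemma fst_add_two_mul_log_le_log_centeringWeight {p : ℝ × 𝔼 n} {x : 𝔼 n} {r : ℝ} (hr : 0 < r)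
    (hx : r ≤ ‖x - p.2‖) : p.1 + 2 * Real.log r ≤ Real.log (centeringWeight p x) := by
  rw [Real.le_log_iff_exp_le (centeringWeight_pos p x), two_mul, Real.exp_add, Real.exp_add,
    Real.exp_log hr, ← sq]
  calc Real.exp p.1 * r ^ 2 ≤ Real.exp p.1 * ‖x - p.2‖ ^ 2 := by gcongr
    _ ≤ centeringWeight p x := le_add_of_nonneg_left (Real.exp_pos _).le

section Coercivity

variable {f : 𝔼 n → ℝ}

lemma integrable_mul_log_centeringWeight (hf : Continuous f) (hc : HasCompactSupport f)
    (p : ℝ × 𝔼 n) : Integrable fun x => f x * Real.log (centeringWeight p x) :=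
  (hf.mul (continuous_log_centeringWeight.comp
    (Continuous.prodMk_right p))).integrable_of_hasCompactSupport hc.mul_right

lemma continuous_centeringFunctional (hf : Continuous f) (hc : HasCompactSupport f) :
    Continuous (centeringFunctional f) := by
  have hsupp : centeringFunctional f =
      fun p => ∫ x in tsupport f, f x * Real.log (centeringWeight p x) := by
    ext p
    rw [setIntegral_eq_integral_of_forall_compl_eq_zero fun x hx => by
      rw [image_eq_zero_of_notMem_tsupport hx, zero_mul]]
    rfl
  rw [hsupp]
  exact continuous_parametric_integral_of_continuous
    ((hf.comp continuous_snd).mul continuous_log_centeringWeight) hc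

lemma mul_integral_le_centeringFunctional (hf : Continuous f) (hc : HasCompactSupport f)
    (hf0 : ∀ x, 0 ≤ f x) {p : ℝ × 𝔼 n} {c : ℝ}
    (hp : ∀ x, f x ≠ 0 → c ≤ Real.log (centeringWeight p x)) :
    c * ∫ x, f x ≤ centeringFunctional f p := by
  rw [← integral_const_mul]
  refine integral_mono ((hf.integrable_of_hasCompactSupport hc).const_mul c)
    (integrable_mul_log_centeringWeight hf hc p) fun x => ?_
  rcases eq_or_ne (f x) 0 with hx | hx
  · simp [hx]
  · rw [mul_comm]
    exact mul_le_mul_of_nonneg_left (hp x hx) (hf0 x)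

lemma log_mul_integral_le_centeringFunctional (hf : Continuous f) (hc : HasCompactSupport f)
    (hf0 : ∀ x, 0 ≤ f x) {p : ℝ × 𝔼 n} {r : ℝ} (hr : 0 < r)
    (hp : ∀ x, f x ≠ 0 → r ≤ ‖x - p.2‖) :
    Real.log r * ∫ x, f x ≤ centeringFunctional f p :=
  mul_integral_le_centeringFunctional hf hc hf0 fun x hx => by
    linarith [neg_fst_le_log_centeringWeight p x,
      fst_add_two_mul_log_le_log_centeringWeight hr (hp x hx)]

lemma sub_integral_ball_le_centeringFunctional (hf : Continuous f) (hc : HasCompactSupport f)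
    (hf0 : ∀ x, 0 ≤ f x) (p : ℝ × 𝔼 n) {r : ℝ} (hr : 0 < r) :
    (p.1 + 2 * Real.log r) * (∫ x, f x) -
      2 * (p.1 + Real.log r) * ∫ x in Metric.ball p.2 r, f x ≤ centeringFunctional f p := by
  have hfi : Integrable f := hf.integrable_of_hasCompactSupport hc
  have hball : Integrable ((Metric.ball p.2 r).indicator f) := hfi.indicator measurableSet_ball
  rw [← integral_indicator measurableSet_ball, ← integral_const_mul, ← integral_const_mul,
    ← integral_sub (hfi.const_mul _) (hball.const_mul _)]
  refine integral_mono ((hfi.const_mul _).sub (hball.const_mul _))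
    (integrable_mul_log_centeringWeight hf hc p) fun x => ?_
  by_cases hx : x ∈ Metric.ball p.2 r
  · simp only [Set.indicator_of_mem hx]
    linarith [mul_le_mul_of_nonneg_left (neg_fst_le_log_centeringWeight p x) (hf0 x)]
  · simp only [Set.indicator_of_notMem hx]
    rw [Metric.mem_ball, dist_eq_norm, not_lt] at hx
    linarith [mul_le_mul_of_nonneg_left
      (fst_add_two_mul_log_le_log_centeringWeight hr hx) (hf0 x)]

lemma exists_forall_setIntegral_ball_le {E : Type*} [NormedAddCommGroup E] [MeasurableSpace E]
    [BorelSpace E] {μ : Measure E} [μ.IsAddLeftInvariant] [μ.OuterRegular] [NullSingletonClass μ]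
    {f : E → ℝ} (hf : Integrable f μ) {ε : ℝ} (hε : 0 < ε) :
    ∃ r > 0, ∀ z, ∫ x in Metric.ball z r, f x ∂μ ≤ ε := by
  have hsmall : ∀ᶠ s in comap μ (𝓝 0), ∫ x in s, f x ∂μ < ε :=
    (hf.hasFiniteIntegral.tendsto_setIntegral_nhds_zero tendsto_comap).eventually_lt_const hε
  obtain ⟨δ, hδ, hs⟩ := (ENNReal.nhds_zero_basis.comap μ).eventually_iff.1 hsmall
  obtain ⟨V, hV0, hV, hVδ⟩ := Set.exists_isOpen_lt_of_lt (μ := μ) {(0 : E)} δ (by simpa using hδ)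
  obtain ⟨r, hr, hrV⟩ := Metric.isOpen_iff.1 hV 0 (hV0 rfl)
  refine ⟨r, hr, fun z => (hs ?_).le⟩
  have hball : μ (Metric.ball z r) = μ (Metric.ball 0 r) := by
    simpa using measure_preimage_add μ (-z) (Metric.ball 0 r)
  exact hball.trans_lt ((measure_mono hrV).trans_lt hVδ)

lemma tendsto_centeringFunctional_cocompact [NeZero n] (hf : Continuous f)
    (hc : HasCompactSupport f) (hf0 : ∀ x, 0 ≤ f x) (hF : 0 < ∫ x, f x) :
    Tendsto (centeringFunctional f) (cocompact _) atTop := by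
  refine tendsto_atTop.2 fun J => ?_
  set F := ∫ x, f x
  obtain ⟨R, hR⟩ := hc.isBounded.exists_norm_le
  obtain ⟨r, hr, hball⟩ := exists_forall_setIntegral_ball_le (μ := volume)
    (hf.integrable_of_hasCompactSupport hc) (by positivity : 0 < F / 4)
  have hJF : J / F * F = J := div_mul_cancel₀ _ hF.ne'
  have hneg : ∀ p : ℝ × 𝔼 n, J / F ≤ -p.1 → J ≤ centeringFunctional f p := fun p hp =>
    hJF ▸ mul_integral_le_centeringFunctional hf hc hf0 fun x _ =>
      hp.trans (neg_fst_le_log_centeringWeight p x)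
  have hfar : ∀ p : ℝ × 𝔼 n, R + Real.exp (J / F) ≤ ‖p.2‖ → J ≤ centeringFunctional f p := by
    intro p hp
    rw [← hJF, ← Real.log_exp (J / F)]
    refine log_mul_integral_le_centeringFunctional hf hc hf0 (Real.exp_pos _) fun x hx => ?_
    linarith [hR x (subset_tsupport f hx), norm_sub_norm_le p.2 x, norm_sub_rev p.2 x]
  have hpos : ∀ p : ℝ × 𝔼 n, 2 * (J / F) - 3 * Real.log r ≤ p.1 → -Real.log r ≤ p.1 →
      J ≤ centeringFunctional f p := by
    intro p hp hpr
    refine le_trans ?_ (sub_integral_ball_le_centeringFunctional hf hc hf0 p hr)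
    linarith [mul_le_mul_of_nonneg_left (hball p.2) (by linarith : 0 ≤ 2 * (p.1 + Real.log r)),
      mul_le_mul_of_nonneg_right hp hF.le]
  rw [← Metric.cobounded_eq_cocompact]
  filter_upwards [tendsto_norm_cobounded_atTop.eventually_ge_atTop (J / F),
    tendsto_norm_cobounded_atTop.eventually_ge_atTop (R + Real.exp (J / F)),
    tendsto_norm_cobounded_atTop.eventually_ge_atTop (2 * (J / F) - 3 * Real.log r),
    tendsto_norm_cobounded_atTop.eventually_ge_atTop (-Real.log r)] with p hJ hR_far hdil hlog
  rcases max_choice ‖p.1‖ ‖p.2‖ with hp | hp <;> rw [Prod.norm_def, hp] at hJ hR_far hdil hlog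
  · rcases abs_choice p.1 with hs | hs <;> rw [Real.norm_eq_abs, hs] at hJ hdil hlog
    · exact hpos p hdil hlog
    · exact hneg p hJ
  · exact hfar p hR_far

end Coercivity

lemma eq_zero_of_forall_abs_le_one {P Q : ℝ}
    (h : ∀ s : ℝ, |s| ≤ 1 → 0 ≤ -(s * P) + s ^ 2 * Q) : P = 0 := by
  by_contra hP
  set d := |P| + |Q| + 1 with hd_def
  have hdpos : 0 < d := by rw [hd_def]; positivity
  have hs : |P / d| ≤ 1 := by
    rw [abs_div, abs_of_pos hdpos, div_le_one hdpos]
    linarith [abs_nonneg Q]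
  have hexpand : -(P / d * P) + (P / d) ^ 2 * Q = P ^ 2 / d ^ 2 * (Q - d) := by field_simp; ring
  have hQ : Q - d < 0 := by linarith [le_abs_self Q, abs_nonneg P]
  linarith [h _ hs, mul_neg_of_pos_of_neg (by positivity : 0 < P ^ 2 / d ^ 2) hQ]

lemma sphereCoord_none_exp_smul_sub (p : ℝ × 𝔼 n) (x : 𝔼 n) :
    ω none (Real.exp p.1 • (x - p.2)) =
      (Real.exp (-p.1) - Real.exp p.1 * ‖x - p.2‖ ^ 2) / centeringWeight p x := by
  simp only [sphereCoord, conformalFactor, centeringWeight, norm_smul, Real.norm_eq_abs,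
    Real.abs_exp, Real.exp_neg]
  field_simp
  ring

lemma sphereCoord_some_exp_smul_sub (p : ℝ × 𝔼 n) (x : 𝔼 n) (j : Fin n) :
    ω (some j) (Real.exp p.1 • (x - p.2)) = 2 * (x - p.2) j / centeringWeight p x := by
  simp only [sphereCoord, conformalFactor, centeringWeight, norm_smul, Real.norm_eq_abs,
    Real.abs_exp, Real.exp_neg, PiLp.smul_apply, smul_eq_mul]
  field_simp

lemma centeringWeight_dilate_sub_le (p : ℝ × 𝔼 n) (x : 𝔼 n) {s : ℝ} (hs : |s| ≤ 1) :
    centeringWeight (p.1 + s, p.2) x - centeringWeight p x ≤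
      (-(s * ω none (Real.exp p.1 • (x - p.2))) + s ^ 2) * centeringWeight p x := by
  have hexp := (abs_le.1 (Real.abs_exp_sub_one_sub_id_le hs)).2
  have hexp_neg := (abs_le.1 (Real.abs_exp_sub_one_sub_id_le (x := -s) (by rwa [abs_neg]))).2
  have hω : ω none (Real.exp p.1 • (x - p.2)) * centeringWeight p x =
      Real.exp (-p.1) - Real.exp p.1 * ‖x - p.2‖ ^ 2 := by
    rw [sphereCoord_none_exp_smul_sub, div_mul_cancel₀ _ (centeringWeight_pos p x).ne']
  rw [add_mul, neg_mul, mul_assoc, hω]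
  simp only [centeringWeight, neg_add, Real.exp_add]
  linarith [mul_le_mul_of_nonneg_left hexp
      (by positivity : 0 ≤ Real.exp p.1 * ‖x - p.2‖ ^ 2),
    mul_le_mul_of_nonneg_left hexp_neg (Real.exp_pos (-p.1)).le]

lemma centeringWeight_translate_sub (p : ℝ × 𝔼 n) (x : 𝔼 n) (j : Fin n) (s : ℝ) :
    centeringWeight (p.1, p.2 + s • EuclideanSpace.single j 1) x - centeringWeight p x =
      (-(s * (Real.exp p.1 * ω (some j) (Real.exp p.1 • (x - p.2)))) +
        s ^ 2 * (Real.exp p.1 / centeringWeight p x)) * centeringWeight p x := by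
  have hnorm : ‖x - (p.2 + s • EuclideanSpace.single j (1 : ℝ))‖ ^ 2 =
      ‖x - p.2‖ ^ 2 - 2 * s * (x - p.2) j + s ^ 2 := by
    rw [← sub_sub, norm_sub_sq_real, norm_smul, inner_smul_right, real_inner_comm,
      EuclideanSpace.inner_single_left]
    simp
    ring
  have hpos := (centeringWeight_pos p x).ne'
  rw [sphereCoord_some_exp_smul_sub]
  field_simp
  simp only [centeringWeight, hnorm]
  ring

section FirstVariation

variable {f : 𝔼 n → ℝ} {p : ℝ × 𝔼 n}

lemma integral_mul_eq_zero_of_centeringWeight_sub_le (hf : Continuous f)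
    (hc : HasCompactSupport f) (hf0 : ∀ x, 0 ≤ f x)
    (hmin : ∀ q, centeringFunctional f p ≤ centeringFunctional f q) {g k : 𝔼 n → ℝ}
    (hg : Continuous g) (hk : Continuous k) (q : ℝ → ℝ × 𝔼 n)
    (hq : ∀ s, |s| ≤ 1 → ∀ x, centeringWeight (q s) x - centeringWeight p x ≤
      (-(s * g x) + s ^ 2 * k x) * centeringWeight p x) :
    ∫ x, f x * g x = 0 := by
  refine eq_zero_of_forall_abs_le_one (Q := ∫ x, f x * k x) fun s hs => ?_
  have hlog := integrable_mul_log_centeringWeight hf hc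
  have hfg : Integrable fun x => -(s * (f x * g x)) :=
    (((hf.mul hg).integrable_of_hasCompactSupport hc.mul_right).const_mul s).neg
  have hfk : Integrable fun x => s ^ 2 * (f x * k x) :=
    ((hf.mul hk).integrable_of_hasCompactSupport hc.mul_right).const_mul _
  refine (sub_nonneg.2 (hmin (q s))).trans ?_
  rw [centeringFunctional, centeringFunctional, ← integral_sub (hlog _) (hlog _),
    ← integral_const_mul, ← integral_const_mul, ← integral_neg,
    ← integral_add hfg hfk]
  refine integral_mono ((hlog _).sub (hlog _)) (hfg.add hfk) fun x => ?_
  have hpos := centeringWeight_pos p x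
  have hq_pos := centeringWeight_pos (q s) x
  have hlog_sub : Real.log (centeringWeight (q s) x) - Real.log (centeringWeight p x) ≤
      -(s * g x) + s ^ 2 * k x := by
    rw [← Real.log_div hq_pos.ne' hpos.ne']
    refine (Real.log_le_sub_one_of_pos (div_pos hq_pos hpos)).trans ?_
    rw [← div_self hpos.ne', ← sub_div, div_le_iff₀ hpos]
    exact hq s hs x
  simp only
  linarith [mul_le_mul_of_nonneg_left hlog_sub (hf0 x)]

lemma integral_mul_sphereCoord_eq_zero (hf : Continuous f) (hc : HasCompactSupport f)
    (hf0 : ∀ x, 0 ≤ f x) (hmin : ∀ q, centeringFunctional f p ≤ centeringFunctional f q)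
    (a : Option (Fin n)) : ∫ x, f x * ω a (Real.exp p.1 • (x - p.2)) = 0 := by
  have hω : ∀ a, Continuous fun x => ω a (Real.exp p.1 • (x - p.2)) := fun a =>
    (contDiff_sphereCoord (k := 0) a).continuous.comp (by fun_prop)
  cases a with
  | none =>
    refine integral_mul_eq_zero_of_centeringWeight_sub_le hf hc hf0 hmin (hω none)
      (continuous_const (y := 1)) (fun s => (p.1 + s, p.2)) fun s hs x => ?_
    simpa using centeringWeight_dilate_sub_le p x hs
  | some j =>
    have hweight : Continuous (centeringWeight p) := by unfold centeringWeight; fun_prop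
    have hscaled : ∫ x, f x * (Real.exp p.1 * ω (some j) (Real.exp p.1 • (x - p.2))) = 0 :=
      integral_mul_eq_zero_of_centeringWeight_sub_le hf hc hf0 hmin ((hω (some j)).const_mul _)
        (continuous_const.div hweight fun x => (centeringWeight_pos p x).ne')
        (fun s => (p.1, p.2 + s • EuclideanSpace.single j 1))
        fun s _ x => (centeringWeight_translate_sub p x j s).le
    simp only [mul_left_comm (f _), integral_const_mul] at hscaled
    exact (mul_eq_zero_iff_left (Real.exp_pos _).ne').1 hscaled

end FirstVariation

theorem exists_forall_integral_mul_sphereCoord_eq_zero [NeZero n] {f : 𝔼 n → ℝ}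
    (hf : Continuous f) (hc : HasCompactSupport f) (hf0 : ∀ x, 0 ≤ f x) :
    ∃ (r : ℝ) (z : 𝔼 n), 0 < r ∧ ∀ a, ∫ x, f x * ω a (r • (x - z)) = 0 := by
  rcases (integral_nonneg (μ := volume) (show 0 ≤ f from hf0)).eq_or_lt with hF | hF
  · have hzero : f = 0 := by
      rwa [eq_comm, integral_eq_zero_iff_of_nonneg hf0 (hf.integrable_of_hasCompactSupport hc),
        hf.ae_eq_iff_eq volume continuous_zero] at hF
    exact ⟨1, 0, one_pos, fun a => by simp [hzero]⟩
  · obtain ⟨p, hp⟩ := (continuous_centeringFunctional hf hc).exists_forall_le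
      (tendsto_centeringFunctional_cocompact hf hc hf0 hF)
    exact ⟨Real.exp p.1, p.2, Real.exp_pos _, integral_mul_sphereCoord_eq_zero hf hc hf0 hp⟩

/-! ### Conformal rescaling -/

/-- The action of the dilation `r` and the translation `z` on functions that preserves both
`∫ |∇v|²` and `∫ |v| ^ critExp n`. -/
def conformalRescale (r : ℝ) (z : 𝔼 n) (v : 𝔼 n → ℝ) (x : 𝔼 n) : ℝ :=
  r ^ (((n : ℝ) - 2) / 2) * v (r • (x - z))

section

variable {r : ℝ} {v U : 𝔼 n → ℝ}

lemma pow_mul_integral_comp_smul_sub (hr : 0 < r) (z : 𝔼 n) (g : 𝔼 n → ℝ) :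
    r ^ n * ∫ x, g (r • (x - z)) = ∫ x, g x := by
  rw [integral_sub_right_eq_self (fun x => g (r • x)) z, Measure.integral_comp_smul,
    finrank_euclideanSpace_fin, abs_of_pos (by positivity), smul_eq_mul,
    mul_inv_cancel_left₀ (by positivity)]

lemma contDiff_conformalRescale {k : WithTop ℕ∞} (hv : ContDiff ℝ k v) (z : 𝔼 n) :
    ContDiff ℝ k (conformalRescale r z v) :=
  contDiff_const.mul (hv.comp (by fun_prop : ContDiff ℝ k fun x : 𝔼 n => r • (x - z)))

lemma hasCompactSupport_conformalRescale (hr : r ≠ 0) (hv : HasCompactSupport v) (z : 𝔼 n) :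
    HasCompactSupport (conformalRescale r z v) :=
  (hv.comp_homeomorph ((Homeomorph.subRight z).trans (Homeomorph.smulOfNeZero r hr))).mul_left

lemma conformalRescale_conformalRescale_inv (hr : 0 < r) (z : 𝔼 n) (v : 𝔼 n → ℝ) :
    conformalRescale r z (conformalRescale r⁻¹ (-(r • z)) v) = v := by
  ext x
  rw [conformalRescale, conformalRescale, ← mul_assoc, ← Real.mul_rpow hr.le (inv_pos.2 hr).le,
    mul_inv_cancel₀ hr.ne', Real.one_rpow, one_mul, sub_neg_eq_add, ← smul_add, sub_add_cancel,
    inv_smul_smul₀ hr.ne']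

lemma pderiv_conformalRescale (hr : 0 < r) (z : 𝔼 n) (hv : Differentiable ℝ v) (i : Fin n)
    (x : 𝔼 n) :
    pderiv i (conformalRescale r z v) x = r ^ ((n : ℝ) / 2) * pderiv i v (r • (x - z)) := by
  have hinner : HasFDerivAt (fun x : 𝔼 n => r • (x - z)) (r • ContinuousLinearMap.id ℝ (𝔼 n)) x :=
    ((hasFDerivAt_id x).sub_const z).const_smul r
  have hderiv := ((hv (r • (x - z))).hasFDerivAt.comp x hinner).const_mul (r ^ (((n : ℝ) - 2) / 2))
  have hexp : r ^ ((n : ℝ) / 2) = r ^ (((n : ℝ) - 2) / 2) * r := by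
    rw [← Real.rpow_add_one hr.ne']; congr 1; ring
  change fderiv ℝ (fun y => r ^ (((n : ℝ) - 2) / 2) * (v ∘ fun x => r • (x - z)) y) x _ = _
  rw [hderiv.fderiv, hexp]
  simp [pderiv, mul_assoc]

lemma gradEnergy_conformalRescale (hr : 0 < r) (z : 𝔼 n) (hv : Differentiable ℝ v) :
    gradEnergy (conformalRescale r z v) = gradEnergy v := by
  have hsq : (r ^ ((n : ℝ) / 2)) ^ 2 = r ^ n := by
    rw [← Real.rpow_natCast, ← Real.rpow_mul hr.le, ← Real.rpow_natCast]; congr 1; simp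
  simp only [gradEnergy, pderiv_conformalRescale hr z hv, mul_pow, hsq, ← Finset.mul_sum,
    integral_const_mul]
  exact pow_mul_integral_comp_smul_sub hr z fun y => ∑ i, pderiv i v y ^ 2

lemma abs_conformalRescale_rpow_critExp (hn : 3 ≤ n) (hr : 0 < r) (z x : 𝔼 n) (v : 𝔼 n → ℝ) :
    |conformalRescale r z v x| ^ critExp n = r ^ n * |v (r • (x - z))| ^ critExp n := by
  have hn2 := (sub_two_pos hn).ne'
  rw [conformalRescale, abs_mul, Real.mul_rpow (abs_nonneg _) (abs_nonneg _),
    abs_of_pos (Real.rpow_pos_of_pos hr _), ← Real.rpow_mul hr.le, ← Real.rpow_natCast r n]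
  congr 2
  rw [critExp]; field_simp

lemma gradEnergy_conformalRescale_standardBubble_mul (hn : 3 ≤ n) (hr : 0 < r) (z : 𝔼 n)
    (hU : IsAdmissible U) :
    gradEnergy (conformalRescale r z fun y => φ y * U y) = conformalEnergy U := by
  have hφU : ContDiff ℝ 1 fun y => φ y * U y := contDiff_standardBubble.mul hU.contDiff
  rw [gradEnergy_conformalRescale hr z (hφU.differentiable one_ne_zero),
    gradEnergy_standardBubble_mul hn hU]

lemma integral_comp_mul_abs_conformalRescale_standardBubble_mul (hn : 3 ≤ n) (hr : 0 < r)
    (z : 𝔼 n) (g U : 𝔼 n → ℝ) :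
    ∫ x, g (r • (x - z)) * |conformalRescale r z (fun y => φ y * U y) x| ^ critExp n =
      ∫ x, g x * |U x| ^ critExp n ∂(σ n) := by
  have habs (x : 𝔼 n) : |φ x * U x| ^ critExp n = ρ x ^ n * |U x| ^ critExp n := by
    rw [abs_mul, Real.mul_rpow (abs_nonneg _) (abs_nonneg _), abs_of_pos (standardBubble_pos x),
      standardBubble_rpow_critExp hn]
  calc _ = r ^ n * ∫ x, g (r • (x - z)) * |φ (r • (x - z)) * U (r • (x - z))| ^ critExp n := by
        simp only [abs_conformalRescale_rpow_critExp hn hr, mul_left_comm (g _) (r ^ n),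
          integral_const_mul]
    _ = ∫ x, g x * |φ x * U x| ^ critExp n :=
        pow_mul_integral_comp_smul_sub hr z fun y => g y * |φ y * U y| ^ critExp n
    _ = _ := by simp only [habs, mul_left_comm (g _), integral_sphereMeasure]

lemma integral_abs_conformalRescale_standardBubble_mul (hn : 3 ≤ n) (hr : 0 < r) (z : 𝔼 n)
    (U : 𝔼 n → ℝ) :
    ∫ x, |conformalRescale r z (fun y => φ y * U y) x| ^ critExp n = critIntegral U := by
  simpa [critIntegral] using
    integral_comp_mul_abs_conformalRescale_standardBubble_mul hn hr z (fun _ => 1) U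

end

theorem exists_eq_conformalRescale_isCentered (hn : 3 ≤ n) {u : 𝔼 n → ℝ} (hu : ContDiff ℝ 1 u)
    (hc : HasCompactSupport u) : ∃ (r : ℝ) (z : 𝔼 n) (U : 𝔼 n → ℝ), 0 < r ∧ IsAdmissible U ∧
      IsCentered U ∧ u = conformalRescale r z fun y => φ y * U y := by
  have : NeZero n := ⟨by lia⟩
  have hsupp : HasCompactSupport fun x => |u x| ^ critExp n :=
    hc.comp_left (g := fun t : ℝ => |t| ^ critExp n) (by simp [(critExp_pos hn).ne'])
  obtain ⟨r, z, hr, hrz⟩ := exists_forall_integral_mul_sphereCoord_eq_zero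
    (continuous_abs_rpow_critExp hn hu.continuous) hsupp fun x => by positivity
  set v := conformalRescale r⁻¹ (-(r • z)) u
  have hvU : (fun y => φ y * (v y * (φ y)⁻¹)) = v := by
    ext y
    rw [mul_left_comm, mul_inv_cancel₀ (standardBubble_pos y).ne', mul_one]
  have huU : u = conformalRescale r z fun y => φ y * (v y * (φ y)⁻¹) := by
    rw [hvU, conformalRescale_conformalRescale_inv hr]
  have hφ : ContDiff ℝ 1 fun y : 𝔼 n => (φ y)⁻¹ :=
    contDiff_standardBubble.inv fun y => (standardBubble_pos y).ne'
  refine ⟨r, z, _, hr, isAdmissible_of_hasCompactSupport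
    ((contDiff_conformalRescale hu _).mul hφ)
    (hasCompactSupport_conformalRescale (inv_ne_zero hr.ne') hc _).mul_right, fun a => ?_, huU⟩
  rw [← integral_comp_mul_abs_conformalRescale_standardBubble_mul hn hr z, ← huU, ← hrz a]
  simp only [mul_comm]

/-! ### The sharp Sobolev constant -/

lemma IsSobolevConst.mono {S T : ℝ} (hT : IsSobolevConst n T) (hST : S ≤ T) :
    IsSobolevConst n S := fun V hV =>
  (mul_le_mul_of_nonneg_right hST (Real.rpow_nonneg (critIntegral_nonneg V) _)).trans (hT V hV)

lemma isClosed_setOf_isSobolevConst : IsClosed {S | IsSobolevConst n S} := by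
  simp only [IsSobolevConst, Set.ofPred_forall]
  exact isClosed_iInter fun V => isClosed_iInter fun _ =>
    isClosed_le (continuous_id.mul_const _) continuous_const

lemma exists_mul_conformalEnergy_sub_le_sobolevDeficit (hn : 3 ≤ n) {S : ℝ} (hS : 0 < S)
    (hSob : IsSobolevConst n S) : ∃ ε δ : ℝ, 0 < ε ∧ 0 < δ ∧
      ∀ U : 𝔼 n → ℝ, IsAdmissible U → IsCentered U →
        conformalEnergy U ≤ (S + ε) * critIntegral U ^ (2 / critExp n) →
          ∃ c : ℝ, δ * conformalEnergy (fun x => U x - c) ≤ sobolevDeficit U := by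
  have hq := critExp_pos hn
  obtain ⟨ε, δ, hε, hδ, hunit⟩ :=
    exists_mul_conformalEnergy_sub_le_of_critIntegral_eq_one hn hS hSob
  refine ⟨ε, δ, hε, hδ, fun U hU hcent hUε => ?_⟩
  rcases (critIntegral_nonneg U).eq_or_lt with hI | hI
  · rw [← hI, Real.zero_rpow (by positivity), mul_zero] at hUε
    have hU0 : conformalEnergy U = 0 := hUε.antisymm (conformalEnergy_nonneg hn U)
    exact ⟨0, by simp [sobolevDeficit, hU0, ← hI, hq.ne']⟩
  set t := critIntegral U ^ (-(1 / critExp n))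
  have ht : 0 < t := Real.rpow_pos_of_pos hI _
  have htq : t ^ critExp n * critIntegral U = 1 := by
    rw [← Real.rpow_mul hI.le, neg_mul, one_div_mul_cancel hq.ne', Real.rpow_neg_one,
      inv_mul_cancel₀ hI.ne']
  have ht2 : t ^ 2 * critIntegral U ^ (2 / critExp n) = 1 := by
    rw [← Real.rpow_natCast t, ← Real.rpow_mul hI.le, ← Real.rpow_add hI]
    norm_num [div_eq_inv_mul]
  obtain ⟨c, hc⟩ := hunit (fun x => t * U x) (hU.const_mul t)
    (by rw [critIntegral_const_mul, abs_of_pos ht, htq]) (hcent.const_mul t) (by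
      rw [conformalEnergy_const_mul t hU]
      linear_combination t ^ 2 * hUε + (S + ε) * ht2)
  refine ⟨c / t, ?_⟩
  have hscale : (fun x => t * U x - c) = fun x => t * (U x - c / t) := by
    ext x; field_simp
  rw [hscale, conformalEnergy_const_mul t (hU.sub (isAdmissible_const _)),
    sobolevDeficit_const_mul hn t hU, mul_left_comm] at hc
  exact le_of_mul_le_mul_left hc (by positivity)

/-- A function violating the inequality with a slightly larger constant would be near-optimal, and
after centering it has nonnegative `sobolevDeficit`. -/
lemma IsSobolevConst.exists_gt (hn : 3 ≤ n) {S : ℝ} (hS : 0 < S) (hSob : IsSobolevConst n S)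
    (hlt : S < sobolevConst n) : ∃ T > S, IsSobolevConst n T := by
  obtain ⟨ε, δ, hε, hδ, hnear⟩ := exists_mul_conformalEnergy_sub_le_sobolevDeficit hn hS hSob
  refine ⟨min (S + ε) (sobolevConst n), by simp [hε, hlt],
    isSobolevConst_of_hasCompactSupport hn fun V hV hVc => ?_⟩
  have hVadm := isAdmissible_of_hasCompactSupport hV hVc
  obtain ⟨r, z, U, hr, hU, hcent, hVU⟩ := exists_eq_conformalRescale_isCentered hn
    (contDiff_standardBubble.mul hV) (hVc.mul_left (f := φ))
  have hcrit : critIntegral V = critIntegral U := by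
    rw [← integral_abs_standardBubble_mul_rpow hn,
      ← integral_abs_conformalRescale_standardBubble_mul hn hr z, ← hVU]
  have henergy : conformalEnergy V = conformalEnergy U := by
    rw [← gradEnergy_standardBubble_mul hn hVadm,
      ← gradEnergy_conformalRescale_standardBubble_mul hn hr z hU, ← hVU]
  have hJ : 0 ≤ critIntegral U ^ (2 / critExp n) := Real.rpow_nonneg (critIntegral_nonneg U) _
  rw [hcrit, henergy]
  by_contra! hlt
  obtain ⟨c, hc⟩ := hnear U hU hcent
    (hlt.le.trans (mul_le_mul_of_nonneg_right (min_le_left _ _) hJ))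
  have hdeficit : 0 ≤ conformalEnergy U - sobolevConst n * critIntegral U ^ (2 / critExp n) :=
    (mul_nonneg hδ.le (conformalEnergy_nonneg hn _)).trans hc
  linarith [mul_le_mul_of_nonneg_right (min_le_right (S + ε) (sobolevConst n)) hJ]

theorem isSobolevConst_sobolevConst (hn : 3 ≤ n) : IsSobolevConst n (sobolevConst n) := by
  obtain ⟨S, hS, hSob⟩ := exists_isSobolevConst hn
  rcases le_or_gt (sobolevConst n) S with hle | hlt
  · exact hSob.mono hle
  refine (isClosed_setOf_isSobolevConst.inter isClosed_Icc).Icc_subset_of_forall_exists_gt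
    (a := S) (b := sobolevConst n) hSob ?_ (Set.right_mem_Icc.2 hlt.le)
  rintro T ⟨hT, hST, hTlt⟩ y hy
  obtain ⟨T', hTT', hT'⟩ := IsSobolevConst.exists_gt hn (hS.trans_le hST) hT hTlt
  exact ⟨min T' y, hT'.mono (min_le_left _ _), lt_min hTT' hy, min_le_right _ _⟩

/-! ### Stability -/

theorem exists_forall_isCentered_mul_conformalEnergy_sub_le (hn : 3 ≤ n) : ∃ C > (0 : ℝ),
    ∀ U : 𝔼 n → ℝ, IsAdmissible U → IsCentered U →
      ∃ c : ℝ, C * conformalEnergy (fun x => U x - c) ≤ sobolevDeficit U := by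
  have hS := sobolevConst_pos hn
  obtain ⟨ε, δ, hε, hδ, hnear⟩ :=
    exists_mul_conformalEnergy_sub_le_sobolevDeficit hn hS (isSobolevConst_sobolevConst hn)
  set S := sobolevConst n with hSdef
  refine ⟨min δ (ε / (S + ε)), by positivity, fun U hU hcent => ?_⟩
  rcases le_or_gt (conformalEnergy U) ((S + ε) * critIntegral U ^ (2 / critExp n)) with hUε | hUε
  · obtain ⟨c, hc⟩ := hnear U hU hcent hUε
    exact ⟨c, (mul_le_mul_of_nonneg_right (min_le_left _ _)
      (conformalEnergy_nonneg hn _)).trans hc⟩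
  · refine ⟨0, ?_⟩
    simp only [sub_zero]
    calc min δ (ε / (S + ε)) * conformalEnergy U
        ≤ ε / (S + ε) * conformalEnergy U :=
          mul_le_mul_of_nonneg_right (min_le_right _ _) (conformalEnergy_nonneg hn U)
      _ = conformalEnergy U - S / (S + ε) * conformalEnergy U := by field_simp; ring
      _ ≤ conformalEnergy U - S / (S + ε) * ((S + ε) * critIntegral U ^ (2 / critExp n)) := by
          gcongr
      _ = sobolevDeficit U := by rw [sobolevDeficit, ← hSdef]; field_simp

/-- The bubble `c (1 + r² |x - z|²) ^ (-(n-2)/2)`. -/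
def bubble (c r : ℝ) (z x : 𝔼 n) : ℝ := c * (1 + r ^ 2 * ‖x - z‖ ^ 2) ^ (-(((n : ℝ) - 2) / 2))

lemma conformalRescale_standardBubble_mul_const {r : ℝ} (hr : 0 < r) (z : 𝔼 n) (c : ℝ) :
    conformalRescale r z (fun y => φ y * c) =
      bubble (c * (2 * r) ^ (((n : ℝ) - 2) / 2)) r z := by
  ext x
  rw [conformalRescale, standardBubble, conformalFactor, bubble, norm_smul, Real.norm_eq_abs,
    abs_of_pos hr, mul_pow, Real.div_rpow two_pos.le (by positivity),
    Real.rpow_neg (by positivity), Real.mul_rpow two_pos.le hr.le]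
  ring

lemma differentiable_bubble (c r : ℝ) (z : 𝔼 n) : Differentiable ℝ (bubble c r z) := fun x => by
  have hbase : DifferentiableAt ℝ (fun y : 𝔼 n => 1 + r ^ 2 * ‖y - z‖ ^ 2) x :=
    (((differentiableAt_id.sub_const z).norm_sq ℝ).const_mul _).const_add 1
  exact (hbase.rpow_const (Or.inl (by positivity))).const_mul c

lemma gradEnergy_sub_bubble {u : 𝔼 n → ℝ} (hu : Differentiable ℝ u) (c r : ℝ) (z : 𝔼 n) :
    gradEnergy (fun x => u x - bubble c r z x) =
      ∫ x, ∑ i, (pderiv i u x - pderiv i (bubble c r z) x) ^ 2 := by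
  simp only [gradEnergy, pderiv_sub _ (hu _) (differentiable_bubble c r z _)]

theorem exists_mul_gradEnergy_sub_bubble_le (hn : 3 ≤ n) : ∃ C > (0 : ℝ), ∀ u : 𝔼 n → ℝ,
    ContDiff ℝ 1 u → HasCompactSupport u → ∃ (c r : ℝ) (z : 𝔼 n), 0 < r ∧
      C * gradEnergy (fun x => u x - bubble c r z x) ≤
        gradEnergy u - sobolevConst n * (∫ x, |u x| ^ critExp n) ^ (2 / critExp n) := by
  obtain ⟨C, hC, hstable⟩ := exists_forall_isCentered_mul_conformalEnergy_sub_le hn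
  refine ⟨C, hC, fun u hu hc => ?_⟩
  obtain ⟨r, z, U, hr, hU, hcent, rfl⟩ := exists_eq_conformalRescale_isCentered hn hu hc
  obtain ⟨c, hle⟩ := hstable U hU hcent
  refine ⟨c * (2 * r) ^ (((n : ℝ) - 2) / 2), r, z, hr, ?_⟩
  rw [← conformalRescale_standardBubble_mul_const hr z c]
  have hsub : (fun x => conformalRescale r z (fun y => φ y * U y) x -
      conformalRescale r z (fun y => φ y * c) x) =
      conformalRescale r z fun y => φ y * (U y - c) := by
    ext x; simp only [conformalRescale]; ring
  rwa [hsub, gradEnergy_conformalRescale_standardBubble_mul hn hr z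
      (hU.sub (isAdmissible_const c)), gradEnergy_conformalRescale_standardBubble_mul hn hr z hU,
    integral_abs_conformalRescale_standardBubble_mul hn hr z]

/-! ### The volume of the sphere -/

lemma integral_Ioi_rpow_mul_exp_neg_one_add_norm_sq_mul {E : Type*} [NormedAddCommGroup E]
    {s : ℝ} (hs : 0 < s) (x : E) :
    ∫ t in Set.Ioi (0 : ℝ), t ^ (s - 1) * Real.exp (-((1 + ‖x‖ ^ 2) * t)) =
      (1 + ‖x‖ ^ 2) ^ (-s) * Real.Gamma s := by
  rw [Real.integral_rpow_mul_exp_neg_mul_Ioi hs (by positivity), one_div,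
    Real.inv_rpow (by positivity), Real.rpow_neg (by positivity)]

section

variable {E : Type*} [NormedAddCommGroup E] [InnerProductSpace ℝ E] [FiniteDimensional ℝ E]
  [MeasurableSpace E] [BorelSpace E] {s : ℝ}

lemma integrable_rpow_mul_exp_neg_one_add_norm_sq_mul (hs : (Module.finrank ℝ E : ℝ) < 2 * s) :
    Integrable (fun p : E × ℝ => p.2 ^ (s - 1) * Real.exp (-((1 + ‖p.1‖ ^ 2) * p.2)))
      (volume.prod (volume.restrict (Set.Ioi 0))) := by
  have hs0 : 0 < s := by linarith [(Module.finrank ℝ E).cast_nonneg (α := ℝ)]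
  rw [integrable_prod_iff (Measurable.aestronglyMeasurable (by fun_prop))]
  refine ⟨Eventually.of_forall fun x => not_imp_comm.1 integral_undef ?_, ?_⟩
  · rw [integral_Ioi_rpow_mul_exp_neg_one_add_norm_sq_mul hs0]
    have := Real.Gamma_pos_of_pos hs0
    positivity
  · have hbracket := (integrable_rpow_neg_one_add_norm_sq (μ := volume) hs).mul_const (Real.Gamma s)
    refine hbracket.congr (Eventually.of_forall fun x => ?_)
    rw [show -(2 * s) / 2 = -s by ring]
    refine (integral_Ioi_rpow_mul_exp_neg_one_add_norm_sq_mul hs0 x).symm.trans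
      (setIntegral_congr_fun measurableSet_Ioi fun t ht => ?_)
    exact (Real.norm_of_nonneg (mul_nonneg (Real.rpow_nonneg (Set.mem_Ioi.1 ht).le _)
      (Real.exp_nonneg _))).symm

lemma integral_rpow_mul_exp_neg_one_add_norm_sq_mul {t : ℝ} (ht : 0 < t) :
    ∫ x : E, t ^ (s - 1) * Real.exp (-((1 + ‖x‖ ^ 2) * t)) =
      π ^ (Module.finrank ℝ E / 2 : ℝ) *
        (t ^ (s - Module.finrank ℝ E / 2 - 1) * Real.exp (-(1 * t))) := by
  have hsplit : ∀ x : E, t ^ (s - 1) * Real.exp (-((1 + ‖x‖ ^ 2) * t)) =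
      t ^ (s - 1) * Real.exp (-(1 * t)) * Real.exp (-t * ‖x‖ ^ 2) := fun x => by
    rw [mul_assoc, ← Real.exp_add]; ring_nf
  simp only [hsplit]
  rw [integral_const_mul, GaussianFourier.integral_rexp_neg_mul_sq_norm ht,
    Real.div_rpow Real.pi_pos.le ht.le, sub_right_comm, Real.rpow_sub ht (s - 1)]
  ring

/-- Write `(1 + ‖x‖²) ^ (-s)` as a Laplace transform and integrate the Gaussian in `x` first. -/
theorem integral_one_add_norm_sq_rpow_neg (hs : (Module.finrank ℝ E : ℝ) < 2 * s) :
    ∫ x : E, (1 + ‖x‖ ^ 2) ^ (-s) =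
      π ^ (Module.finrank ℝ E / 2 : ℝ) * Real.Gamma (s - Module.finrank ℝ E / 2) /
        Real.Gamma s := by
  have hs0 : 0 < s := by linarith [(Module.finrank ℝ E).cast_nonneg (α := ℝ)]
  rw [eq_div_iff (Real.Gamma_pos_of_pos hs0).ne', ← integral_mul_const]
  simp only [← integral_Ioi_rpow_mul_exp_neg_one_add_norm_sq_mul hs0]
  rw [integral_integral_swap (integrable_rpow_mul_exp_neg_one_add_norm_sq_mul hs),
    setIntegral_congr_fun measurableSet_Ioi fun t ht =>
      integral_rpow_mul_exp_neg_one_add_norm_sq_mul (Set.mem_Ioi.1 ht),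
    integral_const_mul, Real.integral_rpow_mul_exp_neg_mul_Ioi (by linarith) one_pos,
    one_div_one, Real.one_rpow, one_mul]

end

theorem sphereMeasure_real_univ (hn : 1 ≤ n) : (σ n).real Set.univ =
    2 * π ^ (((n : ℝ) + 1) / 2) / Real.Gamma (((n : ℝ) + 1) / 2) := by
  have hn0 : (0 : ℝ) < n := by exact_mod_cast hn
  have hvol : (σ n).real Set.univ = 2 ^ n * ∫ x : 𝔼 n, (1 + ‖x‖ ^ 2) ^ (-(n : ℝ)) := by
    have hone := integral_sphereMeasure (n := n) fun _ => 1
    rw [integral_const, smul_eq_mul, mul_one] at hone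
    rw [hone, ← integral_const_mul]
    refine integral_congr_ae (Eventually.of_forall fun x => ?_)
    simp only [conformalFactor, mul_one]
    rw [div_pow, Real.rpow_neg (by positivity), Real.rpow_natCast, div_eq_mul_inv]
  have hdup := Real.Gamma_mul_Gamma_add_half ((n : ℝ) / 2)
  rw [← add_div, mul_div_cancel₀ _ two_ne_zero, Real.rpow_sub two_pos, Real.rpow_one,
    Real.rpow_natCast] at hdup
  have hπ : π ^ (((n : ℝ) + 1) / 2) = π ^ ((n : ℝ) / 2) * √π := by
    rw [Real.sqrt_eq_rpow, ← Real.rpow_add Real.pi_pos, add_div]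
  have hΓn := (Real.Gamma_pos_of_pos hn0).ne'
  have hΓ := (Real.Gamma_pos_of_pos (show 0 < ((n : ℝ) + 1) / 2 by positivity)).ne'
  rw [hvol, integral_one_add_norm_sq_rpow_neg (by simp; linarith), finrank_euclideanSpace_fin,
    sub_half, hπ]
  field_simp
  field_simp at hdup
  linear_combination hdup

lemma two_div_critExp (hn : 3 ≤ n) : 2 / critExp n = ((n : ℝ) - 2) / n := by
  have hn' : (3 : ℝ) ≤ n := by exact_mod_cast hn
  have hn2 : (n : ℝ) - 2 ≠ 0 := by linarith
  rw [critExp]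
  field_simp

theorem sobolevConst_eq (hn : 3 ≤ n) : sobolevConst n = (n : ℝ) * ((n : ℝ) - 2) / 4 *
    (2 * π ^ (((n : ℝ) + 1) / 2) / Real.Gamma (((n : ℝ) + 1) / 2)) ^ ((2 : ℝ) / n) := by
  have hn0 : (n : ℝ) ≠ 0 := by positivity
  rw [sobolevConst, yamabeConst, sphereMeasure_real_univ (by omega), two_div_critExp hn]
  congr 2
  field_simp
  ring

end

end BianchiEgnell

theorem bianchi_egnell_stability_general (n : ℕ) (hn : 3 ≤ n) :
    ∃ C > (0 : ℝ), ∀ u : EuclideanSpace ℝ (Fin n) → ℝ,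
      ContDiff ℝ 1 u → HasCompactSupport u →
      (∫ x, ∑ i, (fderiv ℝ u x (EuclideanSpace.single i 1)) ^ 2)
          - (((n : ℝ) * ((n : ℝ) - 2) / 4)
              * (2 * π ^ (((n : ℝ) + 1) / 2) / Real.Gamma (((n : ℝ) + 1) / 2))
                  ^ ((2 : ℝ) / n))
            * (∫ x, |u x| ^ ((2 * n : ℝ) / ((n : ℝ) - 2)))
                ^ (((n : ℝ) - 2) / n)
        ≥ C * sInf { r : ℝ |
            ∃ (c lam : ℝ) (x₀ : EuclideanSpace ℝ (Fin n)), 0 < lam ∧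
              r = ∫ x, ∑ i,
                (fderiv ℝ u x (EuclideanSpace.single i 1)
                  - fderiv ℝ
                      (fun y => c * (1 + lam ^ 2 * ‖y - x₀‖ ^ 2)
                          ^ (-(((n : ℝ) - 2) / 2))) x
                      (EuclideanSpace.single i 1)) ^ 2 } := by
  obtain ⟨C, hC, hstable⟩ := BianchiEgnell.exists_mul_gradEnergy_sub_bubble_le hn
  refine ⟨C, hC, fun u hu hc => ?_⟩
  obtain ⟨c, lam, x₀, hlam, hle⟩ := hstable u hu hc
  rw [BianchiEgnell.sobolevConst_eq hn, BianchiEgnell.two_div_critExp hn,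
    BianchiEgnell.gradEnergy_sub_bubble (hu.differentiable one_ne_zero)] at hle
  refine le_trans (mul_le_mul_of_nonneg_left (csInf_le ⟨0, ?_⟩ ⟨c, lam, x₀, hlam, rfl⟩) hC.le) hle
  rintro _ ⟨c, lam, x₀, -, rfl⟩
  positivity

/-- Quantitative stability (Bianchi–Egnell) for the sharp first-order Sobolev
inequality on `ℝⁿ`: there is `C > 0` such that for all smooth compactly supported
`u`, the Sobolev deficit controls `C` times the infimum of the squared
gradient-distance to the manifold of bubbles
`v(x) = c(1+λ²|x-x₀|²)^{-(n-2)/2}`. -/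
theorem bianchi_egnell_stability
    (n : ℕ) (hn : 3 ≤ n) :
    ∃ C > (0 : ℝ), ∀ u : EuclideanSpace ℝ (Fin n) → ℝ,
      ContDiff ℝ (⊤ : ℕ∞) u → HasCompactSupport u →
      (∫ x, ∑ i, (fderiv ℝ u x (EuclideanSpace.single i 1)) ^ 2)
          - (((n : ℝ) * ((n : ℝ) - 2) / 4)
              * (2 * π ^ (((n : ℝ) + 1) / 2) / Real.Gamma (((n : ℝ) + 1) / 2))
                  ^ ((2 : ℝ) / n))
            * (∫ x, |u x| ^ ((2 * n : ℝ) / ((n : ℝ) - 2)))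
                ^ (((n : ℝ) - 2) / n)
        ≥ C * sInf { r : ℝ |
            ∃ (c lam : ℝ) (x₀ : EuclideanSpace ℝ (Fin n)), 0 < lam ∧
              r = ∫ x, ∑ i,
                (fderiv ℝ u x (EuclideanSpace.single i 1)
                  - fderiv ℝ
                      (fun y => c * (1 + lam ^ 2 * ‖y - x₀‖ ^ 2)
                          ^ (-(((n : ℝ) - 2) / 2))) x
                      (EuclideanSpace.single i 1)) ^ 2 } := by
  obtain ⟨C, hC, hstable⟩ := bianchi_egnell_stability_general n hn
  exact ⟨C, hC, fun u hu => hstable u (hu.of_le (by exact_mod_cast le_top))⟩
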